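/- arXiv:2102.00480 — 2 statements merged into one kernel-verified Lean document; each statement's English description precedes it below -/
import Mathlib

section
/- In the unitary case, Y_n(F) ⊆ j ⋆ GL_n(E'), and X^j consists of exactly two G^j(E)-orbits. -/
open Matrix

namespace GaloisPair

variable {E' : Type} [Field E']

/-- `g ∈ G^j(E) = {g ∈ GL_n(E') : τ(g)ᵀ j g = j}`. -/
def Gj {n : ℕ} (τ : E' → E') (j g : Matrix (Fin n) (Fin n) E') : Prop :=
  IsUnit g ∧ (g.map τ)ᵀ * j * g = j

/-- `x ∈ X^j = {x ∈ G^j(E) : x·σ(x) = 1}`. -/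
def Xj {n : ℕ} (σ τ : E' → E') (j x : Matrix (Fin n) (Fin n) E') : Prop :=
  Gj τ j x ∧ x * x.map σ = 1

/-- `x'` lies in the `G^j(E)`-orbit of `x` for twisted conjugation `g·x = g x σ(g)⁻¹`. -/
def orbGj {n : ℕ} (σ τ : E' → E') (j x x' : Matrix (Fin n) (Fin n) E') : Prop :=
  ∃ g, Gj τ j g ∧ x' = g * x * (g.map σ)⁻¹

/-- `y ∈ Y_n(F)`: invertible, entries fixed by `σ` (i.e. in `F'`), and `τ(y)ᵀ = ε • y`. -/
def inYnF {n : ℕ} (σ τ : E' → E') (ε : E') (y : Matrix (Fin n) (Fin n) E') : Prop :=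
  IsUnit y ∧ (∀ a b, σ (y a b) = y a b) ∧ (y.map τ)ᵀ = ε • y

end GaloisPair

open GaloisPair

/-!
Over a field in which nondegenerate binary hermitian forms represent `1`, an invertible hermitian
matrix is determined up to congruence by its determinant modulo norms. The norm groups of the
quadratic extensions of a finite extension `F` of `ℚ_p` have index `2`, so there are exactly two
classes over `F'`. The discriminants lie in `Fˣ`, and every element of `Fˣ` is a norm from `E'`
to `E`: it is a product of norms from two different quadratic extensions of `F` inside `E'`. So
the two classes become equal over `E'`. By Hilbert 90, every `x ∈ X^j` is of the form `g σ(g)⁻¹`,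
and sending it to the hermitian matrix `τ(g)ᵀ j g` over `F'` identifies the orbits in `X^j` with
the congruence classes over `F'`. The case `ε = -1` reduces to `ε = 1` on scaling by an element of
`F'` that `τ` negates.
-/

/-! ### Norm groups of quadratic extensions -/

section NormGroup

variable {K : Type*} [Field K]

/-- The norm `K[√a]ˣ → Kˣ`, where `K[√a]` is the algebra `K[X] / (X² - a)`. -/
abbrev normUnits (a : K) : (QuadraticAlgebra K a 0)ˣ →* Kˣ :=
  Units.map QuadraticAlgebra.norm

/-- The inclusion `Kˣ → K[√a]ˣ`. -/
abbrev scalarUnits (a : K) : Kˣ →* (QuadraticAlgebra K a 0)ˣ :=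
  Units.map (algebraMap K (QuadraticAlgebra K a 0) : K →* QuadraticAlgebra K a 0)

/-- The group of norms from `K[√a]ˣ` to `Kˣ`, i.e. of nonzero values of `x² - a y²`. -/
def normGroup (a : K) : Subgroup Kˣ :=
  (normUnits a).range

theorem val_normUnits {a : K} (z : (QuadraticAlgebra K a 0)ˣ) :
    (normUnits a z : K) = z.val.re ^ 2 - a * z.val.im ^ 2 := by
  simp only [Units.coe_map, QuadraticAlgebra.norm_def]
  ring

theorem mem_normGroup {a : K} {c : Kˣ} :
    c ∈ normGroup a ↔ ∃ x y : K, (c : K) = x ^ 2 - a * y ^ 2 := by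
  constructor
  · rintro ⟨z, rfl⟩
    exact ⟨_, _, val_normUnits z⟩
  · rintro ⟨x, y, hc⟩
    have hz : QuadraticAlgebra.norm (⟨x, y⟩ : QuadraticAlgebra K a 0) = c := by
      rw [hc, QuadraticAlgebra.norm_def]
      ring
    exact ⟨(QuadraticAlgebra.isUnit_iff_norm_isUnit.2 (hz ▸ c.isUnit)).unit, Units.ext hz⟩

theorem mem_normGroup_of_isSquare {a : K} {c : Kˣ} (hc : IsSquare c) : c ∈ normGroup a := by
  obtain ⟨r, rfl⟩ := hc
  exact mem_normGroup.2 ⟨r, 0, by push_cast; ring⟩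

theorem isSquare_units_iff {c : Kˣ} : IsSquare c ↔ IsSquare (c : K) := by
  refine ⟨fun h ↦ h.map (Units.coeHom K), fun ⟨r, hr⟩ ↦ ?_⟩
  have hr0 : r ≠ 0 := fun h ↦ c.ne_zero (by rw [hr, h, mul_zero])
  exact ⟨Units.mk0 r hr0, Units.ext hr⟩

theorem isSquare_normUnits_iff {a : K} [Fact (∀ r : K, r ^ 2 ≠ a + 0 * r)]
    (z : (QuadraticAlgebra K a 0)ˣ) :
    IsSquare (normUnits a z) ↔ ∃ c w, scalarUnits a c * (w * w) = z := by
  constructor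
  · rintro ⟨c, hc⟩
    have hzz : (z : QuadraticAlgebra K a 0) * star z.val = algebraMap K _ (c * c) := by
      rw [← QuadraticAlgebra.algebraMap_norm_eq_mul_star]
      exact congrArg _ (congrArg Units.val hc)
    by_cases hw : algebraMap K (QuadraticAlgebra K a 0) c + z = 0
    · refine ⟨-c, 1, Units.ext ?_⟩
      simp [eq_neg_of_add_eq_zero_right hw]
    -- With `w = c + z` one has `z w̄ = c w`, hence `z N(w) = c w²`.
    let w : (QuadraticAlgebra K a 0)ˣ := Units.mk0 _ hw
    refine ⟨c / normUnits a w, w, ?_⟩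
    have hstar : star (algebraMap K (QuadraticAlgebra K a 0) c) = algebraMap K _ c := by
      ext <;> simp
    have hzw : (z : QuadraticAlgebra K a 0) * star w.val = algebraMap K _ c * w := by
      simp only [w, Units.val_mk0, star_add, mul_add, hzz, hstar, map_mul]
      ring
    rw [map_div, div_mul_eq_mul_div, div_eq_iff_eq_mul]
    ext1
    have hww : (w : QuadraticAlgebra K a 0) * star w.val = scalarUnits a (normUnits a w) :=
      (QuadraticAlgebra.algebraMap_norm_eq_mul_star _).symm
    rw [Units.val_mul, Units.val_mul, Units.val_mul, ← hww]
    change algebraMap K _ (c : K) * _ = _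
    linear_combination - (w : QuadraticAlgebra K a 0) * hzw
  · rintro ⟨c, w, rfl⟩
    have hc : normUnits a (scalarUnits a c) = c * c := Units.ext (by simp [sq])
    exact ⟨c * normUnits a w, by rw [map_mul, map_mul, hc]; exact mul_mul_mul_comm _ _ _ _⟩

theorem isSquare_scalarUnits_iff [NeZero (2 : K)] {a : Kˣ} (b : Kˣ) :
    IsSquare (scalarUnits (a : K) b) ↔ IsSquare (b * a) ∨ IsSquare b := by
  simp only [isSquare_units_iff (K := K)]
  constructor
  · rintro ⟨z, hz⟩
    have hz' : algebraMap K (QuadraticAlgebra K (a : K) 0) b = z * z := congrArg Units.val hz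
    have hre : (b : K) = z.val.re * z.val.re + a * z.val.im * z.val.im := by
      simpa using congrArg QuadraticAlgebra.re hz'
    have him : 2 * (z.val.re * z.val.im) = 0 := by
      have := congrArg QuadraticAlgebra.im hz'
      simp only [QuadraticAlgebra.algebraMap_im, QuadraticAlgebra.im_mul, zero_mul] at this
      linear_combination -this
    rcases mul_eq_zero.1 ((mul_eq_zero.1 him).resolve_left two_ne_zero) with h | h
    · exact .inl ⟨a * z.val.im, by rw [Units.val_mul, hre, h]; ring⟩
    · exact .inr ⟨z.val.re, by rw [hre, h]; ring⟩
  · have ha : IsSquare (scalarUnits (a : K) a) := by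
      let ω : QuadraticAlgebra K (a : K) 0 := ⟨0, 1⟩
      have hω : ω * ω = algebraMap K _ (a : K) := by ext <;> simp [ω]
      have hu : IsUnit ω :=
        isUnit_of_mul_isUnit_left (y := ω) (by rw [hω]; exact (scalarUnits (a : K) a).isUnit)
      exact ⟨hu.unit, Units.ext hω.symm⟩
    rintro (h | h)
    · have := ((isSquare_units_iff.2 h).map (scalarUnits (a : K))).mul ha.inv
      rwa [map_mul, mul_inv_cancel_right] at this
    · exact (isSquare_units_iff.2 h).map _

open Subgroup in
/-- Counting square classes: `Kˣ² ⊆ N Lˣ` and `Lˣ² ⊆ Kˣ Lˣ²` for `L = K[√a]`, where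
`N⁻¹(Kˣ²) = Kˣ Lˣ²` and `Kˣ ∩ Lˣ² = Kˣ² ∪ a Kˣ²`. -/
theorem index_normGroup_mul [NeZero (2 : K)] {a : K} (ha : ¬ IsSquare a) :
    (normGroup a).index * (2 * (square (QuadraticAlgebra K a 0)ˣ).index) =
      (square Kˣ).index ^ 2 := by
  have hfact : Fact (∀ r : K, r ^ 2 ≠ a + 0 * r) :=
    ⟨fun r hr ↦ ha ⟨r, by linear_combination -hr⟩⟩
  lift a to Kˣ using (ne_of_apply_ne IsSquare (by simpa using ha)).isUnit
  set S := square Kˣ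
  set T := square (QuadraticAlgebra K (a : K) 0)ˣ
  have hcomap : S.comap (normUnits (a : K)) = (scalarUnits (a : K)).range ⊔ T := by
    ext z
    rw [mem_comap, mem_square, isSquare_normUnits_iff, mem_sup]
    simp only [MonoidHom.mem_range, T, mem_square, IsSquare]
    aesop
  have hS : ((scalarUnits (a : K)).range ⊔ T).index * (normGroup (a : K)).index = S.index := by
    rw [← hcomap, index_comap]
    exact relIndex_mul_index fun _ ↦ mem_normGroup_of_isSquare
  have hT : (T.comap (scalarUnits (a : K))).index *
      ((scalarUnits (a : K)).range ⊔ T).index = T.index := by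
    rw [index_comap, ← relIndex_sup_right]
    exact relIndex_mul_index le_sup_right
  have hST : 2 * (T.comap (scalarUnits (a : K))).index = S.index := by
    have : S.relIndex (T.comap (scalarUnits (a : K))) = 2 := by
      rw [relIndex_eq_two_iff_exists_notMem_and]
      exact ⟨a, (isSquare_scalarUnits_iff a).2 (.inl ⟨a, rfl⟩), (ha <| isSquare_units_iff.1 ·),
        fun b ↦ (isSquare_scalarUnits_iff b).1⟩
    rw [← this]
    exact relIndex_mul_index fun b hb ↦ (isSquare_scalarUnits_iff b).2 (.inr hb)
  rw [sq, ← hT]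
  nth_rw 1 [← hST]
  rw [← hS]
  ring

theorem mem_normGroup_comm [NeZero (2 : K)] {a c : Kˣ} (h : c ∈ normGroup (a : K)) :
    a ∈ normGroup (c : K) := by
  obtain ⟨x, y, hc⟩ := mem_normGroup.1 h
  rw [mem_normGroup]
  by_cases hy : y = 0
  · have hx : x ≠ 0 := by
      rintro rfl
      exact c.ne_zero (by rw [hc, hy]; ring)
    have h2 : (2 : K) ≠ 0 := two_ne_zero
    refine ⟨(a + 1) / 2, (a - 1) / (2 * x), ?_⟩
    rw [hc, hy]
    field_simp
    ring
  · refine ⟨x / y, 1 / y, ?_⟩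
    rw [hc]
    field_simp
    ring

variable (K) in
/-- The norm index property of local class field theory for the quadratic extensions of `K`. -/
def QuadraticNormIndexTwo : Prop :=
  ∀ a : K, ¬ IsSquare a → (normGroup a).index = 2

namespace QuadraticNormIndexTwo

variable (hK : QuadraticNormIndexTwo K)
include hK

theorem mul_mem_of_notMem {a : K} (ha : ¬ IsSquare a) {c d : Kˣ} (hc : c ∉ normGroup a)
    (hd : d ∉ normGroup a) : c * d ∈ normGroup a := by
  rw [Subgroup.mul_mem_iff_of_index_two (hK a ha)]
  tauto

theorem exists_notMem {a : K} (ha : ¬ IsSquare a) : ∃ c, c ∉ normGroup a := by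
  by_contra! h
  have := hK a ha
  simp [(Subgroup.eq_top_iff' _).2 h] at this

theorem normGroup_ne [NeZero (2 : K)] {a b : Kˣ} (hab : ¬ IsSquare (a * b : K)) :
    normGroup (a : K) ≠ normGroup (b : K) := by
  intro heq
  have symm_iff (c d : Kˣ) : c ∈ normGroup (d : K) ↔ d ∈ normGroup (c : K) :=
    ⟨mem_normGroup_comm, mem_normGroup_comm⟩
  obtain ⟨e, he⟩ := hK.exists_notMem hab
  rw [← Units.val_mul, symm_iff] at he
  by_cases hs : IsSquare (e : K)
  · exact he ((symm_iff _ _).1 (mem_normGroup_of_isSquare (isSquare_units_iff.2 hs)))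
  · rw [Subgroup.mul_mem_iff_of_index_two (hK _ hs), symm_iff, heq, symm_iff e] at he
    exact he Iff.rfl

theorem exists_mul_eq [NeZero (2 : K)] {a b : Kˣ} (ha : ¬ IsSquare (a : K))
    (hb : ¬ IsSquare (b : K)) (hab : ¬ IsSquare (a * b : K)) (c : Kˣ) :
    ∃ u ∈ normGroup (a : K), ∃ v ∈ normGroup (b : K), u * v = c := by
  by_cases hca : c ∈ normGroup (a : K)
  · exact ⟨c, hca, 1, one_mem _, mul_one c⟩
  by_cases hcb : c ∈ normGroup (b : K)
  · exact ⟨1, one_mem _, c, hcb, one_mul c⟩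
  have hne := hK.normGroup_ne hab
  rw [Ne, Subgroup.ext_iff, not_forall] at hne
  obtain ⟨e, he⟩ := hne
  by_cases hea : e ∈ normGroup (a : K)
  · have heb : e⁻¹ ∉ normGroup (b : K) := by rw [inv_mem_iff]; tauto
    exact ⟨e, hea, e⁻¹ * c, hK.mul_mem_of_notMem hb heb hcb, mul_inv_cancel_left e c⟩
  · have heb : e ∈ normGroup (b : K) := by tauto
    exact ⟨c * e⁻¹, hK.mul_mem_of_notMem ha hca (by rwa [inv_mem_iff]), e, heb,
      inv_mul_cancel_right c e⟩

/-- A norm group closed under addition would contain `-1`, hence all `((c+1)/2)² - ((c-1)/2)²`. -/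
theorem exists_add_notMem [NeZero (2 : K)] (hneg : IsSumSq (-1 : K)) {a : K} (ha : ¬ IsSquare a) :
    ∃ u ∈ normGroup a, ∃ v ∈ normGroup a, ∃ w : Kˣ, (w : K) = u + v ∧ w ∉ normGroup a := by
  by_contra! hadd
  have mem_of_isSumSq {s : K} (hs : IsSumSq s) : ∀ u : Kˣ, (u : K) = s → u ∈ normGroup a := by
    induction hs with
    | zero => exact fun u hu ↦ absurd hu u.ne_zero
    | @sq_add r s _ ih =>
      intro u hu
      by_cases hr : r = 0
      · exact ih u (by rw [hu, hr]; ring)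
      have hrr : Units.mk0 r hr * Units.mk0 r hr ∈ normGroup a :=
        mem_normGroup_of_isSquare ⟨_, rfl⟩
      by_cases hs : s = 0
      · convert hrr
        ext1
        simpa [hs] using hu
      · exact hadd _ hrr _ (ih (Units.mk0 s hs) rfl) u (by simpa using hu)
  obtain ⟨c, hc⟩ := hK.exists_notMem ha
  refine hc (mem_of_isSumSq ?_ c rfl)
  have h2 : (2 : K) ≠ 0 := two_ne_zero
  have hc' : (c : K) = (c + 1) / 2 * ((c + 1) / 2) + -1 * ((c - 1) / 2 * ((c - 1) / 2)) := by
    field_simp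
    ring
  rw [hc']
  exact (IsSumSq.mul_self _).add (hneg.mul (.mul_self _))

/-- The binary hermitian form `⟨u, v⟩` over `K(√a)` represents every `w`. -/
theorem exists_mul_add_mul_eq [NeZero (2 : K)] (hneg : IsSumSq (-1 : K)) {a : K}
    (ha : ¬ IsSquare a) (u v w : Kˣ) :
    ∃ x₁ y₁ x₂ y₂ : K, (u : K) * (x₁ ^ 2 - a * y₁ ^ 2) + v * (x₂ ^ 2 - a * y₂ ^ 2) = w := by
  have hu0 := u.ne_zero
  have hv0 := v.ne_zero
  by_cases hu : w * u⁻¹ ∈ normGroup a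
  · obtain ⟨x, y, h⟩ := mem_normGroup.1 hu
    exact ⟨x, y, 0, 0, by rw [← h]; push_cast; field_simp; ring⟩
  by_cases hv : w * v⁻¹ ∈ normGroup a
  · obtain ⟨x, y, h⟩ := mem_normGroup.1 hv
    exact ⟨0, 0, x, y, by rw [← h]; push_cast; field_simp; ring⟩
  obtain ⟨m, hm, n, hn, s, hs, hs'⟩ := hK.exists_add_notMem hneg ha
  have hs0 : (m : K) + n ≠ 0 := hs ▸ s.ne_zero
  have hus : w * u⁻¹ * s⁻¹ ∈ normGroup a := hK.mul_mem_of_notMem ha hu (by rwa [inv_mem_iff])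
  have hvs : w * v⁻¹ * s⁻¹ ∈ normGroup a := hK.mul_mem_of_notMem ha hv (by rwa [inv_mem_iff])
  obtain ⟨x₁, y₁, h₁⟩ := mem_normGroup.1 ((normGroup a).mul_mem hus hm)
  obtain ⟨x₂, y₂, h₂⟩ := mem_normGroup.1 ((normGroup a).mul_mem hvs hn)
  refine ⟨x₁, y₁, x₂, y₂, ?_⟩
  rw [← h₁, ← h₂]
  push_cast
  rw [hs]
  field_simp

end QuadraticNormIndexTwo

end NormGroup

/-! ### Counting square classes of units -/

section IndexSquareUnits

open Subgroup

theorem index_range_eq_card_ker_mul_relIndex {A : Type*} [CommGroup A] {f : A →* A}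
    {U : Subgroup A} (hU : U.index ≠ 0) (hfU : U.map f ≤ U) (hker : Disjoint U f.ker) :
    f.range.index = Nat.card f.ker * (U.map f).relIndex U := by
  have hsup : Nat.card f.ker * (U ⊔ f.ker).index = U.index := by
    rw [← relIndex_mul_index (le_sup_left : U ≤ U ⊔ f.ker), relIndex_sup_left,
      ← inf_relIndex_right, hker.eq_bot, relIndex_bot_left]
  have hmap : (U ⊔ f.ker).index * f.range.index = (U.map f).relIndex U * U.index := by
    rw [relIndex_mul_index hfU, index_map]
  have hpos : 0 < (U ⊔ f.ker).index :=
    Nat.pos_of_ne_zero fun h ↦ hU (by rw [← hsup, h, mul_zero])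
  refine Nat.eq_of_mul_eq_mul_left hpos ?_
  rw [hmap, ← hsup]
  ring

theorem square_eq_range_powMonoidHom (A : Type*) [CommGroup A] :
    square A = (powMonoidHom 2 : A →* A).range := by
  ext a
  simp [isSquare_iff_exists_sq, eq_comm]

variable {R : Type*} [CommRing R]

/-- The units congruent to `1` modulo `a`. -/
def unitsCongrOne (a : R) : Subgroup Rˣ :=
  (Units.map (Ideal.Quotient.mk (Ideal.span {a}) : R →* R ⧸ Ideal.span {a})).ker

theorem mem_unitsCongrOne {a : R} {u : Rˣ} : u ∈ unitsCongrOne a ↔ a ∣ (u : R) - 1 := by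
  rw [unitsCongrOne, MonoidHom.mem_ker, Units.ext_iff, ← Ideal.mem_span_singleton,
    ← Ideal.Quotient.eq_zero_iff_mem, map_sub, sub_eq_zero]
  simp

theorem index_unitsCongrOne_ne_zero [Ring.HasFiniteQuotients R] {a : R} (ha : a ≠ 0) :
    (unitsCongrOne a).index ≠ 0 := by
  have : Finite (R ⧸ Ideal.span {a}) := Ring.HasFiniteQuotients.finiteQuotient (by simpa using ha)
  rw [unitsCongrOne, index_ker]
  exact Nat.card_pos.ne'

theorem isUnit_one_add_mul [IsLocalRing R] {a : R} (ha : ¬ IsUnit a) (x : R) :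
    IsUnit (1 + a * x) := by
  have : IsUnit (1 + a * x) ∨ IsUnit (-(a * x)) :=
    IsLocalRing.isUnit_or_isUnit_of_isUnit_add (by simp)
  exact this.resolve_right fun h ↦ ha (isUnit_of_mul_isUnit_left (IsUnit.neg_iff _ |>.1 h))

theorem relIndex_unitsCongrOne [IsDomain R] [IsLocalRing R] {a : R} (ha0 : a ≠ 0)
    (ha : ¬ IsUnit a) (b : R) :
    (unitsCongrOne (a * b)).relIndex (unitsCongrOne a) = Nat.card (R ⧸ Ideal.span {b}) := by
  let e (x : R) : unitsCongrOne a :=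
    ⟨(isUnit_one_add_mul ha x).unit, mem_unitsCongrOne.2 ⟨x, by simp⟩⟩
  have he (x : R) : ((e x : Rˣ) : R) = 1 + a * x := rfl
  have hbij : Function.Bijective e := by
    refine ⟨fun x y hxy ↦ ?_, fun u ↦ ?_⟩
    · have := congrArg (fun u : unitsCongrOne a ↦ ((u : Rˣ) : R)) hxy
      simpa [he, ha0] using this
    · obtain ⟨x, hx⟩ := mem_unitsCongrOne.1 u.2
      refine ⟨x, Subtype.ext (Units.ext ?_)⟩
      rw [he, ← hx]
      ring
  refine (Nat.card_congr (Quotient.congr (Equiv.ofBijective e hbij) fun x y ↦ ?_)).symm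
  have hdiff : ((((e x)⁻¹ * e y : unitsCongrOne a) : Rˣ) : R) - 1 =
      ((e x)⁻¹ : Rˣ) * (a * (y - x)) := by
    rw [show a * (y - x) = ((e y : Rˣ) : R) - (e x : Rˣ) by rw [he, he]; ring, mul_sub]
    simp
  rw [Equiv.ofBijective_apply, Equiv.ofBijective_apply, QuotientGroup.leftRel_apply,
    mem_subgroupOf, mem_unitsCongrOne, hdiff, Units.dvd_mul_left, mul_dvd_mul_iff_left ha0,
    ← Ideal.mem_span_singleton, Submodule.quotientRel_def, ← neg_mem_iff, neg_sub]

theorem mem_ker_powMonoidHom_two_units [IsDomain R] {u : Rˣ} :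
    u ∈ (powMonoidHom 2 : Rˣ →* Rˣ).ker ↔ u = 1 ∨ u = -1 := by
  rw [MonoidHom.mem_ker, powMonoidHom_apply, sq, Units.ext_iff, Units.ext_iff, Units.ext_iff]
  exact mul_self_eq_one_iff

theorem card_ker_powMonoidHom_two_units [IsDomain R] [NeZero (2 : R)] :
    Nat.card (powMonoidHom 2 : Rˣ →* Rˣ).ker = 2 := by
  have hker : ((powMonoidHom 2 : Rˣ →* Rˣ).ker : Set Rˣ) = {1, -1} :=
    Set.ext fun _ ↦ mem_ker_powMonoidHom_two_units
  have hne : (1 : Rˣ) ≠ -1 := fun h ↦ two_ne_zero (α := R) <| by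
    have := congrArg Units.val h
    rw [Units.val_neg, Units.val_one] at this
    linear_combination this
  rw [← SetLike.coe_sort_coe, hker, Nat.card_coe_set_eq, Set.ncard_pair hne]

/-- The substitution `u = 1 + 2πy` turns `u² = 1 + 4πz` into `πy² + y = z`. -/
theorem map_powMonoidHom_two_unitsCongrOne [IsLocalRing R] {π : R} (hπ : ¬ IsUnit π)
    (hroot : ∀ z, ∃ y, π * y ^ 2 + y = z) :
    (unitsCongrOne (2 * π)).map (powMonoidHom 2) = unitsCongrOne (2 * π * 2) := by
  ext u
  rw [mem_unitsCongrOne]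
  constructor
  · rintro ⟨v, hv, rfl⟩
    obtain ⟨y, hy⟩ := mem_unitsCongrOne.1 hv
    refine ⟨π * y ^ 2 + y, ?_⟩
    rw [powMonoidHom_apply, Units.val_pow_eq_pow_val, ← sub_add_cancel (v : R) 1, hy]
    ring
  · rintro ⟨z, hz⟩
    obtain ⟨y, rfl⟩ := hroot z
    have h2π : ¬ IsUnit (2 * π) := fun h ↦ hπ (isUnit_of_mul_isUnit_right h)
    refine ⟨(isUnit_one_add_mul h2π y).unit, mem_unitsCongrOne.2 ⟨y, by simp⟩, Units.ext ?_⟩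
    rw [powMonoidHom_apply, Units.val_pow_eq_pow_val, IsUnit.unit_spec]
    linear_combination -hz

theorem disjoint_unitsCongrOne_ker_powMonoidHom_two [IsDomain R] [NeZero (2 : R)] {π : R}
    (hπ : ¬ IsUnit π) :
    Disjoint (unitsCongrOne (2 * π)) (powMonoidHom 2 : Rˣ →* Rˣ).ker := by
  rw [Subgroup.disjoint_def]
  intro u hu hker
  refine (mem_ker_powMonoidHom_two_units.1 hker).resolve_right fun h ↦ hπ ?_
  obtain ⟨x, hx⟩ := mem_unitsCongrOne.1 hu
  rw [h, Units.val_neg, Units.val_one] at hx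
  refine .of_mul_eq_one (-x) (mul_left_cancel₀ (two_ne_zero (α := R)) ?_)
  linear_combination hx

theorem index_square_units [IsDomain R] [IsLocalRing R] [Ring.HasFiniteQuotients R]
    [NeZero (2 : R)] {π : R} (hπ0 : π ≠ 0) (hπ : ¬ IsUnit π)
    (hroot : ∀ z, ∃ y, π * y ^ 2 + y = z) :
    (square Rˣ).index = 2 * Nat.card (R ⧸ Ideal.span {(2 : R)}) := by
  have h2π0 : 2 * π ≠ 0 := mul_ne_zero two_ne_zero hπ0
  have h2π : ¬ IsUnit (2 * π) := fun h ↦ hπ (isUnit_of_mul_isUnit_right h)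
  have hmap := map_powMonoidHom_two_unitsCongrOne hπ hroot
  have hle : (unitsCongrOne (2 * π)).map (powMonoidHom 2) ≤ unitsCongrOne (2 * π) :=
    hmap.trans_le fun u hu ↦
      mem_unitsCongrOne.2 ((dvd_mul_right _ _).trans (mem_unitsCongrOne.1 hu))
  calc (square Rˣ).index = (powMonoidHom 2 : Rˣ →* Rˣ).range.index := by
        rw [square_eq_range_powMonoidHom]
    _ = Nat.card (powMonoidHom 2 : Rˣ →* Rˣ).ker *
          ((unitsCongrOne (2 * π)).map (powMonoidHom 2)).relIndex (unitsCongrOne (2 * π)) :=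
        index_range_eq_card_ker_mul_relIndex (index_unitsCongrOne_ne_zero h2π0) hle
          (disjoint_unitsCongrOne_ker_powMonoidHom_two hπ)
    _ = 2 * Nat.card (R ⧸ Ideal.span {(2 : R)}) := by
        rw [hmap, relIndex_unitsCongrOne h2π0 h2π, card_ker_powMonoidHom_two_units]

end IndexSquareUnits

section FractionField

open Subgroup

variable {R K : Type*} [CommRing R] [Field K] [Algebra R K] [IsFractionRing R K]

theorem isSquare_algebraMap_iff [IsIntegrallyClosed R] {x : R} :
    IsSquare (algebraMap R K x) ↔ IsSquare x := by
  refine ⟨fun ⟨y, hy⟩ ↦ ?_, fun h ↦ h.map _⟩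
  have hint : IsIntegral R (y ^ 2) := by
    rw [sq, ← hy]
    exact isIntegral_algebraMap
  obtain ⟨w, rfl⟩ := IsIntegrallyClosed.exists_algebraMap_eq_of_isIntegral_pow two_pos hint
  exact ⟨w, IsFractionRing.injective R K (by rw [hy, map_mul])⟩

theorem comap_square_units [IsIntegrallyClosed R] :
    (square Kˣ).comap (Units.map (algebraMap R K : R →* K)) = square Rˣ := by
  ext u
  rw [mem_comap, mem_square, mem_square, isSquare_units_iff, Units.coe_map]
  refine isSquare_algebraMap_iff.trans ⟨fun ⟨r, hr⟩ ↦ ?_, fun h ↦ h.map (Units.coeHom R)⟩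
  have hr' : IsUnit r := isUnit_of_mul_isUnit_left (hr ▸ u.isUnit)
  exact ⟨hr'.unit, Units.ext hr⟩

variable [IsDomain R] [IsDiscreteValuationRing R]

theorem index_range_units_sup_square :
    ((Units.map (algebraMap R K : R →* K)).range ⊔ square Kˣ).index = 2 := by
  obtain ⟨ϖ, hϖ⟩ := IsDiscreteValuationRing.exists_irreducible R
  have hϖ0 : algebraMap R K ϖ ≠ 0 := by simpa using hϖ.ne_zero
  rw [index_eq_two_iff_exists_notMem_and]
  refine ⟨Units.mk0 _ hϖ0, fun hmem ↦ ?_, fun b ↦ ?_⟩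
  · obtain ⟨_, ⟨u, rfl⟩, y, hy, huy⟩ := mem_sup.1 hmem
    have hy' : (y : K) = algebraMap R K (↑u⁻¹ * ϖ) := by
      rw [map_mul, ← Units.val_mk0 hϖ0, ← huy, Units.val_mul, Units.coe_map,
        MonoidHom.coe_coe, ← mul_assoc, ← map_mul, Units.inv_mul, map_one, one_mul]
    rw [mem_square, isSquare_units_iff, hy', isSquare_algebraMap_iff] at hy
    exact ((irreducible_units_mul u⁻¹).2 hϖ).not_isSquare hy
  · obtain ⟨n, u, hb⟩ :=
      IsDiscreteValuationRing.exists_units_eq_smul_zpow_of_irreducible (K := K) hϖ b.ne_zero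
    have hb' : b = Units.map (algebraMap R K : R →* K) u * Units.mk0 _ hϖ0 ^ n := by
      ext1
      rw [hb, Units.smul_def, Algebra.smul_def]
      simp
    rcases Int.even_or_odd n with hn | hn
    · exact .inr (hb' ▸ mul_mem_sup ⟨u, rfl⟩ (hn.isSquare_zpow _))
    · refine .inl ?_
      rw [hb', mul_assoc, ← _root_.zpow_add_one]
      exact mul_mem_sup ⟨u, rfl⟩ (hn.add_one.isSquare_zpow _)

variable (R K) in
theorem index_square_units_fractionRing : (square Kˣ).index = 2 * (square Rˣ).index := by
  rw [← comap_square_units (R := R) (K := K), index_comap, ← relIndex_sup_right, mul_comm,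
    ← index_range_units_sup_square (R := R) (K := K), sup_comm]
  exact (relIndex_mul_index le_sup_left).symm

end FractionField

theorem card_quotient_map {R S : Type*} [CommRing R] [CommRing S] [Algebra R S]
    [Module.Finite R S] [Module.Free R S] (I : Ideal R) :
    Nat.card (S ⧸ I.map (algebraMap R S)) = Nat.card (R ⧸ I) ^ Module.finrank R S := by
  cases subsingleton_or_nontrivial R
  · have := Module.subsingleton R S
    simp
  let e : (S ⧸ I.map (algebraMap R S)) ≃ (Fin (Module.finrank R S) → R ⧸ I) :=
    (Ideal.qoutMapEquivTensorQout S).toEquiv.trans <|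
      (TensorProduct.comm R S (R ⧸ I)).toEquiv.trans
        ((Module.finBasis R S).baseChange (R ⧸ I)).equivFun.toEquiv
  rw [Nat.card_congr e, Nat.card_fun, Nat.card_fin]

/-! ### Extensions of the `p`-adic numbers -/

/-- If `ω² + ω = z` has no solution in `F`, its solution `ω` in a quadratic extension and the
conjugate `-1 - ω` have the same norm, which is less than `1` because `ω (-1 - ω) = -z`;
so the norm of their sum `-1` is less than `1`. -/
theorem exists_sq_add_self_eq {K F : Type*} [NontriviallyNormedField K] [CompleteSpace K]
    [IsUltrametricDist K] [Field F] [Algebra K F] [Algebra.IsAlgebraic K F] {z : F}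
    (hz : spectralNorm K F z < 1) : ∃ t, t ^ 2 + t = z := by
  by_contra! hroot
  have : Fact (∀ r : F, r ^ 2 ≠ z + -1 * r) := ⟨fun r hr ↦ hroot r (by rw [hr]; ring)⟩
  have : Algebra.IsAlgebraic K (QuadraticAlgebra F z (-1)) := .trans K F _
  let N := spectralMulAlgNorm K (QuadraticAlgebra F z (-1))
  let ω : QuadraticAlgebra F z (-1) := ⟨0, 1⟩
  let conj : QuadraticAlgebra F z (-1) ≃ₐ[K] QuadraticAlgebra F z (-1) :=
    .ofRingEquiv (f := starRingAut) fun r ↦ by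
      rw [IsScalarTower.algebraMap_apply K F]
      ext <;> simp
  have hconj : N (star ω) = N ω := (spectralNorm_eq_of_equiv conj ω).symm
  have hmul : ω * star ω = algebraMap F _ (-z) := by ext <;> simp [ω]
  have hadd : ω + star ω = -1 := by
    ext <;> simp [ω, QuadraticAlgebra.re_one, QuadraticAlgebra.im_one]
  have hNz : N (algebraMap F _ (-z)) < 1 := by
    rw [spectralMulAlgNorm_def, ← spectralNorm.eq_of_tower,
      spectralNorm_neg (Algebra.IsAlgebraic.isAlgebraic z)]
    exact hz
  have hNω : N ω < 1 := by
    rw [← hmul, map_mul, hconj] at hNz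
    nlinarith [apply_nonneg N ω]
  have hmax : N (ω + star ω) ≤ max (N ω) (N (star ω)) := isNonarchimedean_spectralNorm _ _
  rw [hadd, map_neg_eq_map, map_one, hconj, max_self] at hmax
  exact hmax.not_gt hNω

section Padic

variable {p : ℕ} [Fact p.Prime]

instance hasFiniteQuotients_padicInt : Ring.HasFiniteQuotients ℤ_[p] where
  finiteQuotient {I} hI := by
    obtain ⟨n, rfl⟩ := PadicInt.ideal_eq_span_pow_p hI
    rw [← PadicInt.ker_toZModPow]
    have : NeZero (p ^ n) := ⟨pow_ne_zero _ (Fact.out : p.Prime).ne_zero⟩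
    exact .of_injective _ (RingHom.kerLift_injective (PadicInt.toZModPow (p := p) n))

variable {F : Type*} [Field F] [Algebra ℚ_[p] F]

variable (p) in
theorem spectralNorm_natCast_p_lt_one : spectralNorm ℚ_[p] F p < 1 := by
  rw [← map_natCast (algebraMap ℚ_[p] F), spectralNorm_extends]
  exact Padic.norm_p_lt_one

/-- `t² + t = -p` means that `-(2t + 1)² = (4p - 1)` is a sum of `1`s. -/
theorem isSumSq_neg_one (p : ℕ) [Fact p.Prime] (F : Type*) [Field F] [Algebra ℚ_[p] F]
    [Algebra.IsAlgebraic ℚ_[p] F] : IsSumSq (-1 : F) := by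
  have hp : spectralNorm ℚ_[p] F (-p) < 1 := by
    rw [spectralNorm_neg (Algebra.IsAlgebraic.isAlgebraic _)]
    exact spectralNorm_natCast_p_lt_one p
  obtain ⟨t, ht⟩ := exists_sq_add_self_eq hp
  have hsq : (2 * t + 1) * (2 * t + 1) = -((4 * p - 1 : ℕ) : F) := by
    rw [Nat.cast_sub (by linarith [(Fact.out : p.Prime).pos])]
    push_cast
    linear_combination 4 * ht
  have hchar : CharZero F := charZero_of_injective_algebraMap (algebraMap ℚ_[p] F).injective
  have h0 : 2 * t + 1 ≠ 0 := fun h0 ↦ by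
    rw [h0, mul_zero, zero_eq_neg, Nat.cast_eq_zero] at hsq
    have := (Fact.out : p.Prime).pos
    lia
  have hinv : (-1 : F) = ((4 * p - 1 : ℕ) : F) * ((2 * t + 1)⁻¹ * (2 * t + 1)⁻¹) := by
    field_simp
    linear_combination -hsq
  rw [hinv]
  exact (IsSumSq.natCast _).mul (.mul_self _)

theorem faithfulSMul_padicInt (p : ℕ) [Fact p.Prime] (F : Type*) [Field F] [Algebra ℚ_[p] F]
    [Algebra ℤ_[p] F] [IsScalarTower ℤ_[p] ℚ_[p] F] : FaithfulSMul ℤ_[p] F := by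
  rw [faithfulSMul_iff_algebraMap_injective, IsScalarTower.algebraMap_eq ℤ_[p] ℚ_[p] F]
  exact (algebraMap ℚ_[p] F).injective.comp (IsFractionRing.injective ℤ_[p] ℚ_[p])

section IntegralClosure

variable [Algebra ℤ_[p] F] [IsScalarTower ℤ_[p] ℚ_[p] F]

theorem not_isUnit_natCast_p : ¬ IsUnit (p : integralClosure ℤ_[p] F) := by
  have := faithfulSMul_padicInt p F
  rw [← map_natCast (algebraMap ℤ_[p] _), isUnit_map_iff]
  exact PadicInt.p_nonunit

section Algebraic

variable [Algebra.IsAlgebraic ℚ_[p] F]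

theorem isIntegral_padicInt_iff {x : F} : IsIntegral ℤ_[p] x ↔ spectralNorm ℚ_[p] F x ≤ 1 := by
  have hx : IsIntegral ℚ_[p] x := Algebra.IsIntegral.isIntegral x
  rw [spectralNorm, spectralValue_le_one_iff (minpoly.monic hx)]
  refine ⟨fun h n ↦ ?_, fun h ↦ ?_⟩
  · rw [minpoly.isIntegrallyClosed_eq_field_fractions' ℚ_[p] h, Polynomial.coeff_map]
    exact PadicInt.norm_le_one _
  · have hlifts : minpoly ℚ_[p] x ∈ Polynomial.lifts (algebraMap ℤ_[p] ℚ_[p]) :=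
      (Polynomial.lifts_iff_coeff_lifts _).2 fun n ↦ ⟨⟨_, h n⟩, rfl⟩
    obtain ⟨q, hq, -, hmonic⟩ :=
      Polynomial.lifts_and_natDegree_eq_and_monic hlifts (minpoly.monic hx)
    refine ⟨q, hmonic, ?_⟩
    rw [← Polynomial.aeval_def, ← Polynomial.aeval_map_algebraMap ℚ_[p], hq, minpoly.aeval]

theorem isIntegral_padicInt_or_inv (x : F) : IsIntegral ℤ_[p] x ∨ IsIntegral ℤ_[p] x⁻¹ := by
  rw [isIntegral_padicInt_iff, isIntegral_padicInt_iff, ← spectralMulAlgNorm_def,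
    ← spectralMulAlgNorm_def, map_inv₀]
  exact (le_total _ 1).imp_right fun h ↦ inv_le_one_of_one_le₀ h

variable (p F) in
theorem valuationRing_integralClosure : ValuationRing (integralClosure ℤ_[p] F) := by
  have := faithfulSMul_padicInt p F
  have : IsFractionRing (integralClosure ℤ_[p] F) F :=
    have : Algebra.IsAlgebraic ℤ_[p] F :=
      (IsFractionRing.comap_isAlgebraic_iff (A := ℤ_[p]) (K := ℚ_[p])).2 inferInstance
    integralClosure.isFractionRing_of_algebraic fun _ ↦ (FaithfulSMul.algebraMap_eq_zero_iff _ _).1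
  rw [ValuationRing.iff_isInteger_or_isInteger _ F]
  exact fun x ↦ (isIntegral_padicInt_or_inv (p := p) x).imp (fun h ↦ ⟨⟨x, h⟩, rfl⟩)
    (fun h ↦ ⟨⟨x⁻¹, h⟩, rfl⟩)

/-- A root of `t² + t = pz` is either divisible by `p`, or else `-1 - t` is. -/
theorem exists_p_mul_sq_add_self_eq (z : integralClosure ℤ_[p] F) :
    ∃ y : integralClosure ℤ_[p] F, p * y ^ 2 + y = z := by
  have hO := valuationRing_integralClosure p F
  have hz : spectralNorm ℚ_[p] F (p * z) < 1 := by
    rw [← spectralMulAlgNorm_def, map_mul]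
    exact mul_lt_one_of_nonneg_of_lt_one_left (apply_nonneg _ _)
      (spectralNorm_natCast_p_lt_one p) (isIntegral_padicInt_iff.1 z.2)
  obtain ⟨t, ht⟩ := exists_sq_add_self_eq hz
  have hinv (ht0 : t ≠ 0) : t = p * z * t⁻¹ - 1 := by
    field_simp
    linear_combination ht
  have hint : IsIntegral ℤ_[p] t := by
    refine (isIntegral_padicInt_or_inv t).elim id fun h ↦ ?_
    by_cases ht0 : t = 0
    · exact ht0 ▸ isIntegral_zero
    · rw [hinv ht0]
      exact (((p : integralClosure ℤ_[p] F) * z).2.mul h).sub isIntegral_one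
  lift t to integralClosure ℤ_[p] F using hint
  have ht' : t * (t + 1) = p * z := Subtype.ext (by push_cast; linear_combination ht)
  have hchar : CharZero F := charZero_of_injective_algebraMap (algebraMap ℚ_[p] F).injective
  have hp : (p : integralClosure ℤ_[p] F) ≠ 0 := Nat.cast_ne_zero.2 (Fact.out : p.Prime).ne_zero
  have hdvd : (p : integralClosure ℤ_[p] F) ∣ t * (t + 1) := ⟨z, ht'⟩
  rcases IsLocalRing.isUnit_or_isUnit_of_add_one (show t + 1 + -t = 1 by ring) with h | h
  · obtain ⟨y, rfl⟩ := h.dvd_mul_right.1 hdvd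
    exact ⟨y, mul_left_cancel₀ hp (by linear_combination ht')⟩
  · obtain ⟨y, hy⟩ := ((IsUnit.neg_iff t).1 h).dvd_mul_left.1 hdvd
    refine ⟨-y, mul_left_cancel₀ hp ?_⟩
    rw [← ht', hy, eq_sub_of_add_eq hy]
    ring

end Algebraic

variable [FiniteDimensional ℚ_[p] F]

variable (p F) in
theorem isDiscreteValuationRing_integralClosure :
    IsDiscreteValuationRing (integralClosure ℤ_[p] F) := by
  have := faithfulSMul_padicInt p F
  have hval := valuationRing_integralClosure p F
  have : IsNoetherianRing (integralClosure ℤ_[p] F) :=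
    IsIntegralClosure.isNoetherianRing ℤ_[p] ℚ_[p] F _
  have hfield : ¬ IsField (integralClosure ℤ_[p] F) := by
    rw [← Algebra.IsIntegral.isField_iff_isField (FaithfulSMul.algebraMap_injective ℤ_[p] _)]
    exact IsDiscreteValuationRing.not_isField _
  exact ((IsDiscreteValuationRing.TFAE _ hfield).out 0 1).2 hval

theorem index_square_units_integralClosure :
    (Subgroup.square (integralClosure ℤ_[p] F)ˣ).index =
      2 * Nat.card (ℤ_[p] ⧸ Ideal.span {(2 : ℤ_[p])}) ^ Module.finrank ℚ_[p] F := by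
  have := faithfulSMul_padicInt p F
  have := valuationRing_integralClosure p F
  have : Module.Finite ℤ_[p] (integralClosure ℤ_[p] F) :=
    IsIntegralClosure.finite ℤ_[p] ℚ_[p] F _
  have : Module.Free ℤ_[p] (integralClosure ℤ_[p] F) :=
    IsIntegralClosure.module_free ℤ_[p] ℚ_[p] F _
  have : Ring.HasFiniteQuotients (integralClosure ℤ_[p] F) := .of_module_finite ℤ_[p] _
  have hchar : CharZero F := charZero_of_injective_algebraMap (algebraMap ℚ_[p] F).injective
  have hp : (p : integralClosure ℤ_[p] F) ≠ 0 := Nat.cast_ne_zero.2 (Fact.out : p.Prime).ne_zero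
  rw [index_square_units hp not_isUnit_natCast_p exists_p_mul_sq_add_self_eq,
    ← IsIntegralClosure.rank ℤ_[p] ℚ_[p] F (integralClosure ℤ_[p] F), ← card_quotient_map,
    Ideal.map_span, Set.image_singleton, map_ofNat]

end IntegralClosure

theorem index_square_units_padic (p : ℕ) [Fact p.Prime] (F : Type*) [Field F] [Algebra ℚ_[p] F]
    [FiniteDimensional ℚ_[p] F] :
    (Subgroup.square Fˣ).index =
      4 * Nat.card (ℤ_[p] ⧸ Ideal.span {(2 : ℤ_[p])}) ^ Module.finrank ℚ_[p] F := by
  let _ : Algebra ℤ_[p] F := Algebra.compHom F (algebraMap ℤ_[p] ℚ_[p])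
  have : IsScalarTower ℤ_[p] ℚ_[p] F := .of_algebraMap_eq fun _ ↦ rfl
  have := isDiscreteValuationRing_integralClosure p F
  have : IsFractionRing (integralClosure ℤ_[p] F) F :=
    integralClosure.isFractionRing_of_finite_extension ℚ_[p] F
  rw [index_square_units_fractionRing (integralClosure ℤ_[p] F) F,
    index_square_units_integralClosure]
  ring

/-- With `d = [F : ℚ_p]` and `q = |ℤ_p / 2|`, the square class counts `4 q ^ d` of `F` and
`4 q ^ (2 d)` of a quadratic extension determine the norm index. -/
theorem quadraticNormIndexTwo_padic (p : ℕ) [Fact p.Prime] (F : Type*) [Field F]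
    [Algebra ℚ_[p] F] [FiniteDimensional ℚ_[p] F] : QuadraticNormIndexTwo F := by
  intro a ha
  have hchar : CharZero F := charZero_of_injective_algebraMap (algebraMap ℚ_[p] F).injective
  have : Fact (∀ r : F, r ^ 2 ≠ a + 0 * r) := ⟨fun r hr ↦ ha ⟨r, by linear_combination -hr⟩⟩
  have : FiniteDimensional ℚ_[p] (QuadraticAlgebra F a 0) :=
    Module.Finite.trans F _
  have hindex := index_normGroup_mul ha
  have hrank : Module.finrank ℚ_[p] (QuadraticAlgebra F a 0) = 2 * Module.finrank ℚ_[p] F := by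
    rw [← Module.finrank_mul_finrank ℚ_[p] F, QuadraticAlgebra.finrank_eq_two, mul_comm]
  have : Finite (ℤ_[p] ⧸ Ideal.span {(2 : ℤ_[p])}) :=
    Ring.HasFiniteQuotients.finiteQuotient (by simp)
  rw [index_square_units_padic p, index_square_units_padic p F, hrank] at hindex
  set q := Nat.card (ℤ_[p] ⧸ Ideal.span {(2 : ℤ_[p])})
  have hq0 : 0 < q := Nat.card_pos
  have hq : 0 < 8 * q ^ (2 * Module.finrank ℚ_[p] F) := by positivity
  refine Nat.eq_of_mul_eq_mul_right hq ?_
  rw [pow_mul'] at hindex ⊢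
  linarith

end Padic

/-! ### Congruence of hermitian matrices -/

section Hermitian

variable {L : Type*} [Field L] [StarRing L]
variable {m n : Type*} [Fintype m] [DecidableEq m] [Fintype n] [DecidableEq n]

/-- Congruence `B = gᴴ A g` of the sesquilinear forms with Gram matrices `A` and `B`. -/
def StarCongruent (A B : Matrix n n L) : Prop :=
  ∃ g : Matrix n n L, IsUnit g ∧ B = gᴴ * A * g

omit [DecidableEq n] in
theorem conjTranspose_mul_mul_mul (A g h : Matrix n n L) :
    (g * h)ᴴ * A * (g * h) = hᴴ * (gᴴ * A * g) * h := by
  simp only [conjTranspose_mul, Matrix.mul_assoc]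

theorem conjTranspose_inv_mul_mul {A g : Matrix n n L} (hg : IsUnit g) :
    (g⁻¹)ᴴ * (gᴴ * A * g) * g⁻¹ = A := by
  rw [← conjTranspose_mul_mul_mul, mul_nonsing_inv _ ((isUnit_iff_isUnit_det _).1 hg)]
  simp

omit [StarRing L] in
theorem exists_isUnit_col_eq {v : n → L} (hv : v ≠ 0) (k : n) :
    ∃ g : Matrix n n L, IsUnit g ∧ g.col k = v := by
  obtain ⟨i, hi⟩ := Function.ne_iff.1 hv
  refine ⟨(updateCol 1 i v).submatrix id (Equiv.swap k i), ?_, by ext; simp⟩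
  rw [isUnit_iff_isUnit_det, det_permute', ← cramer_apply, cramer_one]
  exact ((Equiv.Perm.sign _).isUnit.map (Int.castRingHom L)).mul (IsUnit.mk0 _ hi)

namespace StarCongruent

variable {A B C : Matrix n n L}

theorem trans (hAB : StarCongruent A B) (hBC : StarCongruent B C) : StarCongruent A C := by
  obtain ⟨g, hg, rfl⟩ := hAB
  obtain ⟨h, hh, rfl⟩ := hBC
  exact ⟨g * h, hg.mul hh, (conjTranspose_mul_mul_mul A g h).symm⟩

theorem symm (hAB : StarCongruent A B) : StarCongruent B A := by
  obtain ⟨g, hg, rfl⟩ := hAB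
  exact ⟨g⁻¹, isUnit_nonsing_inv_iff.2 hg, (conjTranspose_inv_mul_mul hg).symm⟩

theorem isHermitian (hAB : StarCongruent A B) (hA : A.IsHermitian) : B.IsHermitian := by
  obtain ⟨g, -, rfl⟩ := hAB
  exact isHermitian_conjTranspose_mul_mul g hA

theorem isUnit (hAB : StarCongruent A B) (hA : IsUnit A) : IsUnit B := by
  obtain ⟨g, hg, rfl⟩ := hAB
  exact (((isUnit_conjTranspose g).2 hg).mul hA).mul hg

theorem exists_det_eq (hAB : StarCongruent A B) :
    ∃ z, z ≠ 0 ∧ B.det = A.det * (star z * z) := by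
  obtain ⟨g, hg, rfl⟩ := hAB
  exact ⟨g.det, ((isUnit_iff_isUnit_det g).1 hg).ne_zero, by
    rw [det_mul, det_mul, det_conjTranspose]; ring⟩

theorem submatrix (hAB : StarCongruent A B) (e : m ≃ n) :
    StarCongruent (A.submatrix e e) (B.submatrix e e) := by
  obtain ⟨g, hg, rfl⟩ := hAB
  refine ⟨g.submatrix e e, (isUnit_submatrix_equiv e e).2 hg, ?_⟩
  simp only [conjTranspose_submatrix, submatrix_mul_equiv]

theorem fromBlocks_zero (S : Matrix m m L) (hAB : StarCongruent A B) :
    StarCongruent (fromBlocks A 0 0 S) (fromBlocks B 0 0 S) := by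
  obtain ⟨g, hg, rfl⟩ := hAB
  refine ⟨fromBlocks g 0 0 1, ?_, ?_⟩
  · rwa [isUnit_iff_isUnit_det, det_fromBlocks_zero₂₁, det_one, mul_one, ← isUnit_iff_isUnit_det]
  · simp [fromBlocks_conjTranspose, fromBlocks_multiply]

end StarCongruent

/-- Completing the square. -/
theorem starCongruent_fromBlocks (P : Matrix m m L) (Q : Matrix m n L) {S : Matrix n n L}
    (hS : S.IsHermitian) (hS' : IsUnit S) :
    StarCongruent (fromBlocks P Q Qᴴ S) (fromBlocks (P - Q * S⁻¹ * Qᴴ) 0 0 S) := by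
  have hdet := (isUnit_iff_isUnit_det S).1 hS'
  have hS₁ : S⁻¹ * S = 1 := nonsing_inv_mul S hdet
  have hS₂ : S * (S⁻¹ * Qᴴ) = Qᴴ := mul_nonsing_inv_cancel_left S _ hdet
  refine ⟨fromBlocks 1 0 (-(S⁻¹ * Qᴴ)) 1, by simp [isUnit_iff_isUnit_det], ?_⟩
  simp [fromBlocks_conjTranspose, fromBlocks_multiply, conjTranspose_nonsing_inv, hS.eq,
    Matrix.mul_assoc, sub_eq_add_neg, hS₁, hS₂]

theorem exists_starCongruent_fromBlocks {A : Matrix (m ⊕ Fin 1) (m ⊕ Fin 1) L}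
    (hA : A.IsHermitian) {v : m ⊕ Fin 1 → L} (hv : star v ⬝ᵥ A *ᵥ v ≠ 0) :
    ∃ A' : Matrix m m L, A'.IsHermitian ∧
      StarCongruent A (fromBlocks A' 0 0 !![star v ⬝ᵥ A *ᵥ v]) := by
  have hv0 : v ≠ 0 := by
    rintro rfl
    simp at hv
  obtain ⟨g, hg, hgv⟩ := exists_isUnit_col_eq hv0 (Sum.inr 0)
  have hAB : StarCongruent A (gᴴ * A * g) := ⟨g, hg, rfl⟩
  have hB := hAB.isHermitian hA
  generalize hBdef : gᴴ * A * g = B at hAB hB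
  have hS : B.toBlocks₂₂ = !![star v ⬝ᵥ A *ᵥ v] := by
    ext i k
    fin_cases i
    fin_cases k
    exact hBdef ▸ hgv ▸ mul_mul_apply _ _ _ _ _
  rw [← fromBlocks_toBlocks B, hS] at hB hAB
  obtain ⟨-, hQ, -, hSherm⟩ := isHermitian_fromBlocks_iff.1 hB
  have hSunit : IsUnit !![star v ⬝ᵥ A *ᵥ v] := by
    simpa [isUnit_iff_isUnit_det, det_fin_one_of] using hv
  rw [← hQ] at hAB
  have hAC := hAB.trans (starCongruent_fromBlocks _ _ hSherm hSunit)
  exact ⟨_, (isHermitian_fromBlocks_iff.1 (hAC.isHermitian hA)).1, hAC⟩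

variable (L) in
/-- Every nondegenerate binary hermitian form over `L` represents `1`. -/
def BinaryFormsRepresentOne : Prop :=
  ∀ a b : L, IsSelfAdjoint a → IsSelfAdjoint b → a ≠ 0 → b ≠ 0 →
    ∃ x y, star x * a * x + star y * b * y = 1

omit [DecidableEq n] in
theorem exists_star_dotProduct_mulVec_ne_zero [NeZero (2 : L)] {A : Matrix n n L}
    (hA : A.IsHermitian) (hA0 : A ≠ 0) : ∃ v, star v ⬝ᵥ A *ᵥ v ≠ 0 := by
  classical
  by_contra! hiso
  have hdiag (i : n) : A i i = 0 := by simpa using hiso (Pi.single i 1)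
  refine hA0 (Matrix.ext fun i k ↦ of_not_not fun hik ↦ two_ne_zero (α := L) ?_)
  have hki : A k i = star (A i k) := (hA.apply k i).symm
  have hform : (star (A i k))⁻¹ * star (A i k) + A i k * (A i k)⁻¹ = 0 := by
    have := hiso (Pi.single i 1 + Pi.single k (A i k)⁻¹)
    simpa [mulVec_add, hdiag, hki] using this
  rwa [inv_mul_cancel₀ (star_ne_zero.2 hik), mul_inv_cancel₀ hik, one_add_one_eq_two] at hform

omit [DecidableEq n] in
theorem isSelfAdjoint_star_dotProduct_mulVec {A : Matrix n n L} (hA : A.IsHermitian) (v : n → L) :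
    IsSelfAdjoint (star v ⬝ᵥ A *ᵥ v) := by
  rw [isSelfAdjoint_iff, ← star_dotProduct, star_mulVec, hA.eq, ← dotProduct_mulVec]

omit [DecidableEq m] in
theorem star_dotProduct_fromBlocks_mulVec (A : Matrix m m L) (t x y : L) (w : m → L) :
    star (Sum.elim (x • w) ![y]) ⬝ᵥ fromBlocks A 0 0 !![t] *ᵥ Sum.elim (x • w) ![y] =
      star x * (star w ⬝ᵥ A *ᵥ w) * x + star y * t * y := by
  have hy : star ![y] ⬝ᵥ !![t] *ᵥ ![y] = star y * t * y := by
    simp [dotProduct, mulVec, mul_assoc]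
  simp only [Function.star_sumElim, fromBlocks_mulVec, sumElim_dotProduct_sumElim,
    Sum.elim_comp_inl, Sum.elim_comp_inr, zero_mulVec, smul_zero, add_zero, zero_add, star_smul,
    mulVec_smul, smul_dotProduct, dotProduct_smul, hy, smul_eq_mul]
  ring

theorem exists_starCongruent_fromBlocks_one [NeZero (2 : L)] (hL : BinaryFormsRepresentOne L)
    [Nonempty m] {A : Matrix (m ⊕ Fin 1) (m ⊕ Fin 1) L} (hA : A.IsHermitian) (hAu : IsUnit A) :
    ∃ A' : Matrix m m L, A'.IsHermitian ∧ IsUnit A' ∧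
      StarCongruent A (fromBlocks A' 0 0 !![1]) := by
  obtain ⟨v, hv⟩ := exists_star_dotProduct_mulVec_ne_zero hA hAu.ne_zero
  obtain ⟨B, hB, hAB⟩ := exists_starCongruent_fromBlocks hA hv
  have hBu : IsUnit B := (isUnit_fromBlocks_zero₂₁.1 (hAB.isUnit hAu)).1
  obtain ⟨w, hw⟩ := exists_star_dotProduct_mulVec_ne_zero hB hBu.ne_zero
  obtain ⟨x, y, hxy⟩ := hL _ _ (isSelfAdjoint_star_dotProduct_mulVec hB w)
    (isSelfAdjoint_star_dotProduct_mulVec hA v) hw hv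
  rw [← star_dotProduct_fromBlocks_mulVec] at hxy
  obtain ⟨A', hA', hBA'⟩ :=
    exists_starCongruent_fromBlocks (hAB.isHermitian hA) (hxy.trans_ne one_ne_zero)
  rw [hxy] at hBA'
  have hAA' := hAB.trans hBA'
  exact ⟨A', hA', (isUnit_fromBlocks_zero₂₁.1 (hAA'.isUnit hAu)).1, hAA'⟩

theorem starCongruent_of_det_eq [NeZero (2 : L)] (hL : BinaryFormsRepresentOne L) {n : ℕ}
    {A B : Matrix (Fin n) (Fin n) L} (hA : A.IsHermitian) (hB : B.IsHermitian) (hAu : IsUnit A)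
    (hBu : IsUnit B) {z : L} (hz : B.det = A.det * (star z * z)) : StarCongruent A B := by
  induction n generalizing z with
  | zero => exact ⟨1, isUnit_one, Subsingleton.elim _ _⟩
  | succ n ih =>
    obtain rfl | hn := n.eq_zero_or_pos
    · have hz0 : z ≠ 0 := by
        rintro rfl
        exact ((isUnit_iff_isUnit_det B).1 hBu).ne_zero (by rw [hz]; simp)
      refine ⟨!![z], by simpa [isUnit_iff_isUnit_det], ?_⟩
      ext i k
      fin_cases i
      fin_cases k
      simpa [mul_apply, mul_comm, mul_left_comm] using hz
    have : Nonempty (Fin n) := ⟨⟨0, hn⟩⟩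
    let e : Fin n ⊕ Fin 1 ≃ Fin (n + 1) := finSumFinEquiv
    obtain ⟨A', hA', hAu', hAA'⟩ := exists_starCongruent_fromBlocks_one hL (hA.submatrix e)
      ((isUnit_submatrix_equiv e e).2 hAu)
    obtain ⟨B', hB', hBu', hBB'⟩ := exists_starCongruent_fromBlocks_one hL (hB.submatrix e)
      ((isUnit_submatrix_equiv e e).2 hBu)
    obtain ⟨u, hu, hAdet⟩ := hAA'.exists_det_eq
    obtain ⟨v, -, hBdet⟩ := hBB'.exists_det_eq
    simp only [det_fromBlocks_zero₂₁, det_fin_one_of, mul_one, det_submatrix_equiv_self]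
      at hAdet hBdet
    have hA'B' : StarCongruent A' B' := ih hA' hB' hAu' hBu' (z := z * v / u) <| by
      have := star_ne_zero.2 hu
      rw [hAdet, hBdet, hz, star_div₀, star_mul']
      field_simp
    simpa using ((hAA'.trans (hA'B'.fromBlocks_zero _)).trans hBB'.symm).submatrix e.symm

end Hermitian

/-! ### Norms from the fixed field of an involution -/

/-- The star ring structure given by an involution of a field. -/
@[reducible]
def starRingOfInvolutive {L : Type*} [Field L] (τ : L →+* L) (hτ : Function.Involutive τ) :
    StarRing L where
  star := τ
  star_involutive := hτ
  star_mul x y := by rw [map_mul, mul_comm]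
  star_add := map_add τ

section Involution

variable {L : Type*} [Field L] [StarRing L]

theorem exists_star_eq_neg {x : L} (hx : star x ≠ x) : ∃ δ : L, δ ≠ 0 ∧ star δ = -δ :=
  ⟨x - star x, sub_ne_zero.2 hx.symm, by rw [star_sub, star_star, neg_sub]⟩

theorem sq_sub_sq_mul_sq_eq_star_mul_self {x y δ : L} (hx : star x = x) (hy : star y = y)
    (hδ : star δ = -δ) : x ^ 2 - δ ^ 2 * y ^ 2 = star (x + y * δ) * (x + y * δ) := by
  rw [star_add, star_mul', hx, hy, hδ]
  ring

theorem sq_ne_sq_of_map_eq_neg {K : Type*} [Field K] [NeZero (2 : K)] (φ : K →+* K) {r δ : K}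
    (hδ0 : δ ≠ 0) (hδ : φ δ = -δ) (hr : φ r = r) : r ^ 2 ≠ δ ^ 2 := by
  have h2 : (2 : K) ≠ 0 := two_ne_zero
  intro h
  have hδr : φ δ = δ := by
    obtain h | h := sq_eq_sq_iff_eq_or_eq_neg.1 h.symm <;> simp [h, hr]
  exact mul_ne_zero h2 hδ0 (by linear_combination hδ - hδr)

theorem exists_sq_sub_mul_sq_eq_star_mul_self [NeZero (2 : L)] {x : L} (hx : star x ≠ x) :
    ∃ a : selfAdjoint L, ¬ IsSquare a ∧ ∀ c : selfAdjoint L,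
      (∃ x y, c = x ^ 2 - a * y ^ 2) ↔ ∃ z : L, c = star z * z := by
  have h2 : (2 : L) ≠ 0 := two_ne_zero
  obtain ⟨δ, hδ0, hδ⟩ := exists_star_eq_neg hx
  refine ⟨⟨δ ^ 2, by simp [selfAdjoint.mem_iff, hδ]⟩, ?_, fun c ↦ ⟨?_, ?_⟩⟩
  · rintro ⟨r, hr⟩
    exact sq_ne_sq_of_map_eq_neg (starRingEnd L) hδ0 hδ r.2
      ((sq _).trans (congrArg Subtype.val hr).symm)
  · rintro ⟨x, y, h⟩
    exact ⟨x + y * δ, by rw [h, ← sq_sub_sq_mul_sq_eq_star_mul_self x.2 y.2 hδ]; rfl⟩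
  · rintro ⟨z, hz⟩
    refine ⟨⟨(z + star z) / 2, ?_⟩, ⟨(z - star z) / (2 * δ), ?_⟩, Subtype.ext ?_⟩
    · simp [selfAdjoint.mem_iff, star_div₀, add_comm]
    · rw [selfAdjoint.mem_iff, star_div₀, star_sub, star_star, star_mul', hδ, star_ofNat,
        ← neg_div_neg_eq, neg_sub, mul_neg, neg_neg]
    · change _ = ((z + star z) / 2) ^ 2 - δ ^ 2 * ((z - star z) / (2 * δ)) ^ 2
      rw [hz]
      field_simp
      ring

theorem exists_mem_normGroup_iff [NeZero (2 : L)] {x : L} (hx : star x ≠ x) :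
    ∃ a : selfAdjoint L, ¬ IsSquare a ∧ ∀ c : (selfAdjoint L)ˣ,
      c ∈ normGroup a ↔ ∃ z : L, ((c : selfAdjoint L) : L) = star z * z := by
  obtain ⟨a, ha, h⟩ := exists_sq_sub_mul_sq_eq_star_mul_self hx
  exact ⟨a, ha, fun c ↦ mem_normGroup.trans (h c)⟩

instance [NeZero (2 : L)] : NeZero (2 : selfAdjoint L) :=
  ⟨fun h ↦ two_ne_zero (α := L) (congrArg Subtype.val h)⟩

variable [NeZero (2 : L)] (hL : QuadraticNormIndexTwo (selfAdjoint L)) {x : L} (hx : star x ≠ x)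
include hL hx

theorem exists_isSelfAdjoint_eq_star_mul_self_or :
    ∃ c : L, IsSelfAdjoint c ∧ c ≠ 0 ∧ (∀ z, c ≠ star z * z) ∧
      ∀ d, IsSelfAdjoint d → d ≠ 0 → ∃ z, d = star z * z ∨ d = c * (star z * z) := by
  obtain ⟨a, ha, hmem⟩ := exists_mem_normGroup_iff hx
  obtain ⟨c, hc⟩ := hL.exists_notMem ha
  have hc0 : ((c : selfAdjoint L) : L) ≠ 0 := fun h ↦ c.ne_zero (Subtype.ext h)
  refine ⟨(c : selfAdjoint L), (c : selfAdjoint L).2, hc0, ?_, fun d hd hd0 ↦ ?_⟩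
  · rwa [hmem, not_exists] at hc
  lift d to selfAdjoint L using hd
  lift d to (selfAdjoint L)ˣ using (ne_of_apply_ne Subtype.val hd0).isUnit
  by_cases hdN : d ∈ normGroup a
  · obtain ⟨z, hz⟩ := (hmem d).1 hdN
    exact ⟨z, .inl hz⟩
  · have hcd := hL.mul_mem_of_notMem ha (by rwa [inv_mem_iff] : c⁻¹ ∉ _) hdN
    obtain ⟨z, hz⟩ := (hmem _).1 hcd
    refine ⟨z, .inr ?_⟩
    rw [← hz, ← selfAdjoint.val_mul, ← Units.val_mul, mul_inv_cancel_left]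

theorem binaryFormsRepresentOne (hneg : IsSumSq (-1 : selfAdjoint L)) :
    BinaryFormsRepresentOne L := by
  intro u v hu hv hu0 hv0
  obtain ⟨a, ha, hnorm⟩ := exists_sq_sub_mul_sq_eq_star_mul_self hx
  obtain ⟨x₁, y₁, x₂, y₂, h⟩ := hL.exists_mul_add_mul_eq hneg ha
    (Units.mk0 ⟨u, hu⟩ fun h ↦ hu0 (congrArg Subtype.val h))
    (Units.mk0 ⟨v, hv⟩ fun h ↦ hv0 (congrArg Subtype.val h)) 1
  obtain ⟨z₁, h₁⟩ := (hnorm _).1 ⟨x₁, y₁, rfl⟩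
  obtain ⟨z₂, h₂⟩ := (hnorm _).1 ⟨x₂, y₂, rfl⟩
  refine ⟨z₁, z₂, ?_⟩
  rw [mul_right_comm, mul_comm _ u, mul_right_comm (star z₂), mul_comm _ v, ← h₁, ← h₂]
  exact congrArg Subtype.val h

omit hL hx [NeZero (2 : L)] in
theorem exists_isHermitian_det_eq {n : ℕ} (hn : 1 ≤ n) {d : L} (hd : IsSelfAdjoint d) :
    ∃ A : Matrix (Fin n) (Fin n) L, A.IsHermitian ∧ A.det = d := by
  refine ⟨diagonal (Pi.mulSingle ⟨0, hn⟩ d), isHermitian_diagonal_iff.2 fun i ↦ ?_, ?_⟩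
  · rw [Pi.mulSingle_apply]
    split_ifs
    exacts [hd, .one L]
  · rw [det_diagonal, Finset.prod_pi_mulSingle']
    simp

theorem exists_isHermitian_forall_starCongruent_or (hneg : IsSumSq (-1 : selfAdjoint L)) {n : ℕ}
    (hn : 1 ≤ n) {A : Matrix (Fin n) (Fin n) L} (hA : A.IsHermitian) (hAu : IsUnit A) :
    ∃ B : Matrix (Fin n) (Fin n) L, B.IsHermitian ∧ IsUnit B ∧ ¬ StarCongruent A B ∧
      ∀ C, C.IsHermitian → IsUnit C → StarCongruent A C ∨ StarCongruent B C := by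
  have hforms := binaryFormsRepresentOne hL hx hneg
  have hAdet := ((isUnit_iff_isUnit_det A).1 hAu).ne_zero
  have hdet {C : Matrix (Fin n) (Fin n) L} (hC : C.IsHermitian) : IsSelfAdjoint C.det := by
    rw [isSelfAdjoint_iff, ← det_conjTranspose, hC.eq]
  obtain ⟨c, hc, hc0, hcN, hcor⟩ := exists_isSelfAdjoint_eq_star_mul_self_or hL hx
  obtain ⟨B, hB, hBdet⟩ := exists_isHermitian_det_eq hn (hc.mul (hdet hA))
  have hBu : IsUnit B := by
    rw [isUnit_iff_isUnit_det, hBdet]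
    exact .mk0 _ (mul_ne_zero hc0 hAdet)
  refine ⟨B, hB, hBu, fun hAB ↦ ?_, fun C hC hCu ↦ ?_⟩
  · obtain ⟨z, -, hz⟩ := hAB.exists_det_eq
    rw [hBdet, mul_comm] at hz
    exact hcN z (mul_left_cancel₀ hAdet hz)
  · have hCdet := ((isUnit_iff_isUnit_det C).1 hCu).ne_zero
    obtain ⟨z, hz | hz⟩ := hcor _ ((hdet hC).div (hdet hA)) (div_ne_zero hCdet hAdet)
    · exact .inl <| starCongruent_of_det_eq hforms hA hC hAu hCu (z := z) <| by
        rw [← hz, mul_div_cancel₀ _ hAdet]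
    · exact .inr <| starCongruent_of_det_eq hforms hB hC hBu hCu (z := z) <| by
        rw [hBdet, mul_right_comm, ← hz, div_mul_cancel₀ _ hAdet]

end Involution

section PadicInvolution

variable (p : ℕ) [Fact p.Prime] (L : Type*) [Field L] [StarRing L] [Algebra ℚ_[p] L]
  (hstar : ∀ c : ℚ_[p], IsSelfAdjoint (algebraMap ℚ_[p] L c))

/-- The fixed field of an involution trivial on `ℚ_[p]`, as a `ℚ_[p]`-algebra. -/
@[reducible]
noncomputable def selfAdjointPadicAlgebra : Algebra ℚ_[p] (selfAdjoint L) :=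
  RingHom.toAlgebra
    { toFun c := ⟨algebraMap ℚ_[p] L c, hstar c⟩
      map_one' := Subtype.ext (map_one _)
      map_zero' := Subtype.ext (map_zero _)
      map_mul' _ _ := Subtype.ext (map_mul _ _ _)
      map_add' _ _ := Subtype.ext (map_add _ _ _) }

variable [FiniteDimensional ℚ_[p] L]

theorem finiteDimensional_selfAdjoint :
    let := selfAdjointPadicAlgebra p L hstar
    FiniteDimensional ℚ_[p] (selfAdjoint L) := by
  let := selfAdjointPadicAlgebra p L hstar
  let f : selfAdjoint L →ₗ[ℚ_[p]] L :=
    { toFun := Subtype.val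
      map_add' _ _ := rfl
      map_smul' c x := by rw [Algebra.smul_def, Algebra.smul_def]; rfl }
  exact FiniteDimensional.of_injective f Subtype.val_injective

include hstar

theorem quadraticNormIndexTwo_selfAdjoint : QuadraticNormIndexTwo (selfAdjoint L) := by
  let := selfAdjointPadicAlgebra p L hstar
  have := finiteDimensional_selfAdjoint p L hstar
  exact quadraticNormIndexTwo_padic p _

theorem isSumSq_neg_one_selfAdjoint : IsSumSq (-1 : selfAdjoint L) := by
  let := selfAdjointPadicAlgebra p L hstar
  have := finiteDimensional_selfAdjoint p L hstar
  exact isSumSq_neg_one p _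

end PadicInvolution

/-! ### Norms in biquadratic extensions -/

theorem neZero_two_of_algebra (M L : Type*) [Field M] [Field L] [Algebra M L] [NeZero (2 : L)] :
    NeZero (2 : M) :=
  ⟨fun h ↦ two_ne_zero (α := L) <| by rw [← map_ofNat (algebraMap M L) 2, h, map_zero]⟩

theorem not_isSquare_of_algebraMap_eq_sq {M L : Type*} [Field M] [StarRing M] [Field L]
    [Algebra M L] [NeZero (2 : L)] (φ : L →+* L)
    (hφ : ∀ x : selfAdjoint M, φ (algebraMap M L x) = algebraMap M L x) {δ : L} (hδ0 : δ ≠ 0)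
    (hδ : φ δ = -δ) {a : selfAdjoint M} (ha : algebraMap M L a = δ ^ 2) : ¬ IsSquare a := by
  rintro ⟨r, rfl⟩
  exact sq_ne_sq_of_map_eq_neg φ hδ0 hδ (hφ r) (by rw [← ha, ← map_pow, sq]; rfl)

/-- `σ` and `star` are the two involutions of a biquadratic extension: they commute, `M` is the
fixed field of `σ`, and `star` restricts to a nontrivial involution of `M`. In the notation of the
unitary case, `L = E'`, `M = F'` and `star = τ`. -/
structure IsBiquadratic (M : Type*) {L : Type*} [Field M] [StarRing M] [Field L] [StarRing L]
    [Algebra M L] (σ : L →+* L) : Prop where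
  involutive : Function.Involutive σ
  map_star (x : L) : σ (star x) = star (σ x)
  map_eq_self_iff {x : L} : σ x = x ↔ ∃ y, algebraMap M L y = x
  exists_map_ne : ∃ x, σ x ≠ x
  exists_star_ne : ∃ x : M, star x ≠ x

namespace IsBiquadratic

variable {M L : Type*} [Field M] [StarRing M] [Field L] [StarRing L] [Algebra M L] {σ : L →+* L}
  (hσ : IsBiquadratic M σ)
include hσ

theorem map_algebraMap (x : M) : σ (algebraMap M L x) = algebraMap M L x :=
  hσ.map_eq_self_iff.2 ⟨x, rfl⟩

variable [StarModule M L]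

theorem exists_map_eq_self_and_star_eq_neg : ∃ δ : L, δ ≠ 0 ∧ σ δ = δ ∧ star δ = -δ := by
  obtain ⟨x, hx⟩ := hσ.exists_star_ne
  obtain ⟨δ, hδ0, hδ⟩ := exists_star_eq_neg hx
  exact ⟨algebraMap M L δ, by simpa using hδ0, hσ.map_algebraMap δ,
    by rw [← algebraMap_star_comm, hδ, map_neg]⟩

theorem exists_map_eq_neg_and_star_eq_neg : ∃ κ : L, κ ≠ 0 ∧ σ κ = -κ ∧ star κ = -κ := by
  obtain ⟨x, hx⟩ := hσ.exists_map_ne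
  have hxσ : σ (x - σ x) = -(x - σ x) := by rw [map_sub, hσ.involutive, neg_sub]
  by_cases hstar : star (x - σ x) = x - σ x
  · obtain ⟨δ, hδ0, hσδ, hδ⟩ := hσ.exists_map_eq_self_and_star_eq_neg
    exact ⟨(x - σ x) * δ, mul_ne_zero (sub_ne_zero.2 hx.symm) hδ0,
      by rw [map_mul, hxσ, hσδ, neg_mul], by rw [star_mul', hstar, hδ, mul_neg]⟩
  · exact ⟨(x - σ x) - star (x - σ x), sub_ne_zero.2 (Ne.symm hstar),
      by rw [map_sub, hσ.map_star, hxσ, star_neg, neg_sub_neg, neg_sub],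
      by rw [star_sub, star_star, neg_sub]⟩

theorem exists_algebraMap_eq_sq {κ : L} (hκ0 : κ ≠ 0) (hκ : star κ = -κ)
    (hσκ : σ (κ ^ 2) = κ ^ 2) :
    ∃ k : (selfAdjoint M)ˣ, algebraMap M L (k : selfAdjoint M) = κ ^ 2 := by
  obtain ⟨k, hk⟩ := hσ.map_eq_self_iff.1 hσκ
  have hkstar : IsSelfAdjoint k := (algebraMap M L).injective <| by
    rw [algebraMap_star_comm, hk, star_pow, hκ, neg_sq]
  refine ⟨.mk0 ⟨k, hkstar⟩ fun h ↦ pow_ne_zero 2 hκ0 ?_, hk⟩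
  rw [← hk, show k = 0 from congrArg Subtype.val h, map_zero]

theorem exists_algebraMap_eq_star_mul_self [NeZero (2 : L)]
    (hM : QuadraticNormIndexTwo (selfAdjoint M)) {c : M} (hc : IsSelfAdjoint c) (hc0 : c ≠ 0) :
    ∃ z : L, algebraMap M L c = star z * z := by
  have := neZero_two_of_algebra M L
  obtain ⟨δ, hδ0, hσδ, hδ⟩ := hσ.exists_map_eq_self_and_star_eq_neg
  obtain ⟨κ, hκ0, hσκ, hκ⟩ := hσ.exists_map_eq_neg_and_star_eq_neg
  obtain ⟨a, ha⟩ := hσ.exists_algebraMap_eq_sq hδ0 hδ (by rw [map_pow, hσδ])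
  obtain ⟨b, hb⟩ := hσ.exists_algebraMap_eq_sq hκ0 hκ (by rw [map_pow, hσκ, neg_sq])
  have hstar (x : selfAdjoint M) : star (algebraMap M L x) = algebraMap M L x := by
    rw [← algebraMap_star_comm, x.2.star_eq]
  have hab : algebraMap M L (a * b : selfAdjoint M) = (δ * κ) ^ 2 := by
    rw [mul_pow, ← ha, ← hb]
    exact map_mul _ _ _
  obtain ⟨u, hu, v, hv, huv⟩ := hM.exists_mul_eq
    (not_isSquare_of_algebraMap_eq_sq (starRingEnd L) hstar hδ0 hδ ha)
    (not_isSquare_of_algebraMap_eq_sq (starRingEnd L) hstar hκ0 hκ hb)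
    (not_isSquare_of_algebraMap_eq_sq σ (fun x ↦ hσ.map_algebraMap x) (mul_ne_zero hδ0 hκ0)
      (by rw [map_mul, hσδ, hσκ, mul_neg]) hab)
    (.mk0 ⟨c, hc⟩ fun h ↦ hc0 (congrArg Subtype.val h))
  obtain ⟨x₁, y₁, h₁⟩ := mem_normGroup.1 hu
  obtain ⟨x₂, y₂, h₂⟩ := mem_normGroup.1 hv
  have hc' : algebraMap M L c =
      (algebraMap M L x₁ ^ 2 - δ ^ 2 * algebraMap M L y₁ ^ 2) *
        (algebraMap M L x₂ ^ 2 - κ ^ 2 * algebraMap M L y₂ ^ 2) := by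
    have huv' := congrArg (fun w : (selfAdjoint M)ˣ ↦ algebraMap M L (w : selfAdjoint M)) huv
    rw [← ha, ← hb]
    simp only [← map_pow, ← map_mul, ← map_sub]
    rw [Units.val_mul, h₁, h₂] at huv'
    exact huv'.symm
  refine ⟨(algebraMap M L x₁ + algebraMap M L y₁ * δ) *
    (algebraMap M L x₂ + algebraMap M L y₂ * κ), ?_⟩
  rw [hc', sq_sub_sq_mul_sq_eq_star_mul_self (hstar x₁) (hstar y₁) hδ,
    sq_sub_sq_mul_sq_eq_star_mul_self (hstar x₂) (hstar y₂) hκ, star_mul', mul_mul_mul_comm]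

end IsBiquadratic

/-! ### Twisted conjugacy classes -/

section Coboundary

variable {L n : Type*} [Field L] [Fintype n] [DecidableEq n]

/-- The coboundary `g σ(g)⁻¹`, i.e. the twisted conjugate of `1` by `g`. -/
noncomputable def coboundary (σ : L → L) (g : Matrix n n L) : Matrix n n L :=
  g * (g.map σ)⁻¹

variable {σ : L →+* L} {g h : Matrix n n L}

theorem coboundary_mul : coboundary σ (g * h) = g * coboundary σ h * (g.map σ)⁻¹ := by
  simp only [coboundary, Matrix.map_mul, Matrix.mul_inv_rev, Matrix.mul_assoc]

theorem isUnit_matrix_map_iff {M : Type*} [Field M] {φ : M →+* L} {A : Matrix n n M} :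
    IsUnit (A.map φ) ↔ IsUnit A := by
  rw [isUnit_iff_isUnit_det, isUnit_iff_isUnit_det, ← RingHom.mapMatrix_apply, ← RingHom.map_det,
    isUnit_map_iff]

theorem coboundary_mul_of_map_eq (hh : IsUnit h) (hσ : h.map σ = h) :
    coboundary σ (g * h) = coboundary σ g := by
  have := (isUnit_iff_isUnit_det h).1 hh
  rw [coboundary, Matrix.map_mul, hσ, Matrix.mul_inv_rev, Matrix.mul_assoc,
    mul_nonsing_inv_cancel_left _ _ this, coboundary]

theorem map_nonsing_inv (hg : IsUnit g) : g⁻¹.map σ = (g.map σ)⁻¹ := by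
  refine (inv_eq_right_inv ?_).symm
  rw [← Matrix.map_mul, mul_nonsing_inv _ ((isUnit_iff_isUnit_det g).1 hg)]
  exact map_one σ.mapMatrix

theorem map_inv_mul_eq_of_coboundary_eq (hg : IsUnit g) (hh : IsUnit h)
    (heq : coboundary σ g = coboundary σ h) : (g⁻¹ * h).map σ = g⁻¹ * h := by
  have hhσ := (isUnit_iff_isUnit_det _).1 (isUnit_matrix_map_iff (φ := σ).2 hh)
  calc (g⁻¹ * h).map σ
      = g⁻¹ * coboundary σ g * h.map σ := by
        rw [coboundary, nonsing_inv_mul_cancel_left _ _ ((isUnit_iff_isUnit_det g).1 hg),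
          Matrix.map_mul, map_nonsing_inv hg]
    _ = g⁻¹ * h := by
        rw [heq, coboundary, Matrix.mul_assoc, nonsing_inv_mul_cancel_right _ _ hhσ]

theorem coboundary_mul_map (hσ : Function.Involutive σ) (hg : IsUnit g) :
    coboundary σ g * (coboundary σ g).map σ = 1 := by
  have hgσ : IsUnit (g.map σ) := isUnit_matrix_map_iff.2 hg
  have hσσ : (g.map σ).map σ = g := by
    ext
    exact hσ _
  rw [coboundary, Matrix.map_mul, map_nonsing_inv hgσ, hσσ,
    ← Matrix.mul_assoc, nonsing_inv_mul_cancel_right _ _ ((isUnit_iff_isUnit_det _).1 hgσ),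
    mul_nonsing_inv _ ((isUnit_iff_isUnit_det g).1 hg)]

open Polynomial in
theorem exists_natCast_smul_add_det_ne_zero [CharZero L] {A B : Matrix n n L} {s : L}
    (hs : (s • A + B).det ≠ 0) : ∃ t : ℕ, ((t : L) • A + B).det ≠ 0 := by
  let P : L[X] := det ((X : L[X]) • A.map C + B.map C)
  have hP (t : L) : P.eval t = (t • A + B).det := by
    rw [← coe_evalRingHom, RingHom.map_det]
    congr 1
    ext i k
    simpa using mul_comm (A i k) t
  by_contra! hroots
  refine hs ?_
  rw [← hP, eq_zero_of_infinite_isRoot P (Set.infinite_of_injective_forall_mem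
    (f := fun t : ℕ ↦ (t : L)) Nat.cast_injective fun t ↦ ?_), eval_zero]
  exact (hP t).trans (hroots t)

/-- Hilbert 90: since `x σ(x) = 1`, every `g = t (1 + x) + κ (1 - x)` with `σ t = t` satisfies
`x σ(g) = g`. -/
theorem exists_eq_coboundary [CharZero L] {κ : L} (hκ0 : κ ≠ 0) (hκ : σ κ = -κ) {x : Matrix n n L}
    (hx : x * x.map σ = 1) : ∃ g, IsUnit g ∧ x = coboundary σ g := by
  have hdet : (κ • (1 + x) + κ • (1 - x)).det ≠ 0 := by
    rw [← smul_add, add_add_sub_cancel, ← two_smul L, smul_smul, det_smul, det_one, mul_one]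
    exact pow_ne_zero _ (mul_ne_zero hκ0 two_ne_zero)
  obtain ⟨t, ht⟩ := exists_natCast_smul_add_det_ne_zero hdet
  set g := (t : L) • (1 + x) + κ • (1 - x) with hg_def
  have hg : IsUnit g := (isUnit_iff_isUnit_det _).2 (.mk0 _ ht)
  have hgσ : g.map σ = (t : L) • (1 + x.map σ) - κ • (1 - x.map σ) := by
    ext i k
    have h1 : σ ((1 : Matrix n n L) i k) = (1 : Matrix n n L) i k := by
      rw [one_apply, apply_ite σ, map_one, map_zero]
    simp [hg_def, hκ, h1, sub_eq_add_neg, add_comm]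
  have hxg : x * g.map σ = g := by
    rw [hgσ, Matrix.mul_sub, mul_smul_comm, mul_smul_comm, Matrix.mul_add, Matrix.mul_sub, hx,
      Matrix.mul_one, hg_def, ← neg_sub 1 x, smul_neg, sub_neg_eq_add, add_comm x]
  refine ⟨g, hg, ?_⟩
  nth_rw 1 [coboundary, ← hxg]
  rw [mul_nonsing_inv_cancel_right _ _ ((isUnit_iff_isUnit_det _).1 (isUnit_matrix_map_iff.2 hg))]

end Coboundary

section Orbits

variable {L : Type} [Field L] [StarRing L] {σ : L →+* L} {n : ℕ}
  {j g h x y : Matrix (Fin n) (Fin n) L}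

theorem map_conjTranspose_mul_mul {M : Type*} [Field M] [StarRing M] [Algebra M L] [StarModule M L]
    (A U : Matrix (Fin n) (Fin n) M) :
    (Uᴴ * A * U).map (algebraMap M L) =
      (U.map (algebraMap M L))ᴴ * A.map (algebraMap M L) * U.map (algebraMap M L) := by
  rw [Matrix.map_mul, Matrix.map_mul, conjTranspose_map _ fun x ↦ algebraMap_star_comm x]

theorem gj_star_iff : Gj star j g ↔ IsUnit g ∧ gᴴ * j * g = j :=
  Iff.rfl

theorem gj_smul_iff {η : L} (hη : η ≠ 0) : Gj star (η • j) g ↔ Gj star j g := by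
  rw [gj_star_iff, gj_star_iff, mul_smul_comm, smul_mul_assoc, smul_right_inj hη]

theorem xj_smul_iff {η : L} (hη : η ≠ 0) : Xj σ star (η • j) x ↔ Xj σ star j x := by
  rw [Xj, Xj, gj_smul_iff hη]

theorem orbGj_smul_iff {η : L} (hη : η ≠ 0) :
    orbGj σ star (η • j) x y ↔ orbGj σ star j x y := by
  simp only [orbGj, gj_smul_iff hη]

theorem gj_mul_inv_iff (hg : IsUnit g) (hh : IsUnit h) :
    Gj star j (g * h⁻¹) ↔ gᴴ * j * g = hᴴ * j * h := by
  rw [gj_star_iff, and_iff_right (hg.mul (isUnit_nonsing_inv_iff.2 hh))]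
  constructor <;> intro heq
  · rw [← nonsing_inv_mul_cancel_right _ g ((isUnit_iff_isUnit_det h).1 hh),
      conjTranspose_mul_mul_mul, heq]
  · rw [conjTranspose_mul_mul_mul, heq, conjTranspose_inv_mul_mul hh]

end Orbits

namespace IsBiquadratic

section Cocycles

variable {M : Type*} {L : Type} [Field M] [StarRing M] [Field L] [StarRing L] [Algebra M L]
  {σ : L →+* L} (hσ : IsBiquadratic M σ) {n : ℕ} {j g h x y : Matrix (Fin n) (Fin n) L}
  {A B : Matrix (Fin n) (Fin n) M}
include hσ

theorem map_matrix_eq_self_iff :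
    x.map σ = x ↔ ∃ A : Matrix (Fin n) (Fin n) M, A.map (algebraMap M L) = x := by
  constructor
  · intro hx
    choose A hA using fun i k ↦ hσ.map_eq_self_iff.1 (congrFun₂ hx i k)
    exact ⟨of A, Matrix.ext hA⟩
  · rintro ⟨A, rfl⟩
    ext
    exact hσ.map_algebraMap _

theorem map_conjTranspose : gᴴ.map σ = (g.map σ)ᴴ := by
  ext
  exact hσ.map_star _

theorem gj_coboundary_iff (hj : j.map σ = j) (hg : IsUnit g) :
    Gj star j (coboundary σ g) ↔ (gᴴ * j * g).map σ = gᴴ * j * g := by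
  rw [coboundary, gj_mul_inv_iff hg (isUnit_matrix_map_iff.2 hg), Matrix.map_mul, Matrix.map_mul,
    hσ.map_conjTranspose, hj, eq_comm]

theorem xj_coboundary_iff (hj : j.map σ = j) (hg : IsUnit g) :
    Xj σ star j (coboundary σ g) ↔ (gᴴ * j * g).map σ = gᴴ * j * g := by
  rw [Xj, coboundary_mul_map hσ.involutive hg, hσ.gj_coboundary_iff hj hg, and_iff_left rfl]

theorem xj_iff [StarModule M L] [CharZero L] (hj : j.map σ = j) :
    Xj σ star j x ↔ ∃ g, IsUnit g ∧ x = coboundary σ g ∧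
      ∃ A : Matrix (Fin n) (Fin n) M, A.map (algebraMap M L) = gᴴ * j * g := by
  constructor
  · intro hx
    obtain ⟨κ, hκ0, hκ, -⟩ := hσ.exists_map_eq_neg_and_star_eq_neg
    obtain ⟨g, hg, rfl⟩ := exists_eq_coboundary hκ0 hκ hx.2
    exact ⟨g, hg, rfl, hσ.map_matrix_eq_self_iff.1 <| (hσ.xj_coboundary_iff hj hg).1 hx⟩
  · rintro ⟨g, hg, rfl, hA⟩
    exact (hσ.xj_coboundary_iff hj hg).2 (hσ.map_matrix_eq_self_iff.2 hA)

theorem orbGj_coboundary_iff [StarModule M L] (hg : IsUnit g) (hh : IsUnit h)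
    (hA : A.map (algebraMap M L) = gᴴ * j * g) (hB : B.map (algebraMap M L) = hᴴ * j * h) :
    orbGj σ star j (coboundary σ g) (coboundary σ h) ↔ StarCongruent A B := by
  constructor
  · rintro ⟨k, ⟨hk, hkj⟩, heq⟩
    rw [← coboundary_mul] at heq
    obtain ⟨U, hU⟩ := hσ.map_matrix_eq_self_iff.1 <|
      map_inv_mul_eq_of_coboundary_eq (hk.mul hg) hh heq.symm
    have hkg : IsUnit (k * g) := hk.mul hg
    have hUunit : IsUnit (U.map (algebraMap M L)) :=
      hU ▸ (isUnit_nonsing_inv_iff.2 hkg).mul hh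
    refine ⟨U, isUnit_matrix_map_iff.1 hUunit, map_injective (algebraMap M L).injective ?_⟩
    change B.map _ = (Uᴴ * A * U).map _
    rw [map_conjTranspose_mul_mul, hA, hB, hU]
    nth_rw 2 [← (gj_star_iff.1 ⟨hk, hkj⟩).2]
    rw [← conjTranspose_mul_mul_mul, ← conjTranspose_mul_mul_mul, ← Matrix.mul_assoc k,
      mul_nonsing_inv_cancel_left _ _ ((isUnit_iff_isUnit_det _).1 hkg)]
  · rintro ⟨U, hU, rfl⟩
    set V := U.map (algebraMap M L)
    have hV : V.map σ = V := hσ.map_matrix_eq_self_iff.2 ⟨U, rfl⟩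
    have hVunit : IsUnit V := isUnit_matrix_map_iff.2 hU
    have hgV : IsUnit (g * V) := hg.mul hVunit
    refine ⟨h * (g * V)⁻¹, (gj_mul_inv_iff hh hgV).2 ?_, ?_⟩
    · rw [← hB, conjTranspose_mul_mul_mul, ← hA, map_conjTranspose_mul_mul]
    · rw [← coboundary_mul, ← coboundary_mul_of_map_eq (g := h * (g * V)⁻¹ * g) hVunit hV,
        Matrix.mul_assoc _ g V,
        nonsing_inv_mul_cancel_right _ _ ((isUnit_iff_isUnit_det _).1 hgV)]

end Cocycles

section HermitianForms

variable {M : Type*} {L : Type} [Field M] [StarRing M] [Field L] [StarRing L] [Algebra M L]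
  [StarModule M L] [CharZero L] {σ : L →+* L} (hσ : IsBiquadratic M σ) {n : ℕ}
include hσ

omit [CharZero L] hσ in
theorem isHermitian_map_algebraMap_iff {A : Matrix (Fin n) (Fin n) M} :
    (A.map (algebraMap M L)).IsHermitian ↔ A.IsHermitian := by
  rw [Matrix.IsHermitian, ← conjTranspose_map _ fun x ↦ algebraMap_star_comm x,
    (map_injective (algebraMap M L).injective).eq_iff, Matrix.IsHermitian]

theorem starCongruent_map (hM : QuadraticNormIndexTwo (selfAdjoint M))
    (hL : BinaryFormsRepresentOne L) {A B : Matrix (Fin n) (Fin n) M} (hA : A.IsHermitian)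
    (hAu : IsUnit A) (hB : B.IsHermitian) (hBu : IsUnit B) :
    StarCongruent (A.map (algebraMap M L)) (B.map (algebraMap M L)) := by
  have hAdet := ((isUnit_iff_isUnit_det A).1 hAu).ne_zero
  have hBdet := ((isUnit_iff_isUnit_det B).1 hBu).ne_zero
  obtain ⟨z, hz⟩ := hσ.exists_algebraMap_eq_star_mul_self hM (c := B.det / A.det)
    (by rw [isSelfAdjoint_iff, star_div₀, ← det_conjTranspose, ← det_conjTranspose, hA.eq, hB.eq])
    (div_ne_zero hBdet hAdet)
  refine starCongruent_of_det_eq hL (isHermitian_map_algebraMap_iff.2 hA)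
    (isHermitian_map_algebraMap_iff.2 hB) (isUnit_matrix_map_iff.2 hAu)
    (isUnit_matrix_map_iff.2 hBu) (z := z) ?_
  rw [← hz, ← RingHom.mapMatrix_apply, ← RingHom.mapMatrix_apply, ← RingHom.map_det,
    ← RingHom.map_det, ← map_mul, mul_div_cancel₀ _ hAdet]

omit [CharZero L] in
theorem exists_isHermitian_map_eq_smul {ε η : L} (hη0 : η ≠ 0) (hση : σ η = η)
    (hη : star η * ε = η) {y : Matrix (Fin n) (Fin n) L} (hy : inYnF σ star ε y) :
    ∃ A : Matrix (Fin n) (Fin n) M, A.IsHermitian ∧ IsUnit A ∧ A.map (algebraMap M L) = η • y := by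
  obtain ⟨hyu, hyσ, hyε⟩ := hy
  change yᴴ = ε • y at hyε
  have hσy : (η • y).map σ = η • y := by
    ext i k
    simp [hση, hyσ]
  obtain ⟨A, hA⟩ := hσ.map_matrix_eq_self_iff.1 hσy
  refine ⟨A, ?_, ?_, hA⟩
  · rw [← isHermitian_map_algebraMap_iff (L := L), hA, Matrix.IsHermitian, conjTranspose_smul, hyε,
      smul_smul, hη]
  · rw [← isUnit_matrix_map_iff (φ := algebraMap M L), hA]
    exact hyu.smul (Units.mk0 η hη0)

theorem exists_isHermitian_scaling {ε : L} (hε : ε = 1 ∨ ε = -1) :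
    ∃ η : L, η ≠ 0 ∧ σ η = η ∧ star η * ε = η := by
  obtain rfl | rfl := hε
  · exact ⟨1, one_ne_zero, map_one σ, by simp⟩
  · obtain ⟨δ, hδ0, hσδ, hδ⟩ := hσ.exists_map_eq_self_and_star_eq_neg
    exact ⟨δ, hδ0, hσδ, by simp [hδ]⟩

theorem starCongruent_of_inYnF (hM : QuadraticNormIndexTwo (selfAdjoint M))
    (hL : BinaryFormsRepresentOne L) {ε : L} (hε : ε = 1 ∨ ε = -1)
    {j y : Matrix (Fin n) (Fin n) L} (hj : inYnF σ star ε j) (hy : inYnF σ star ε y) :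
    StarCongruent j y := by
  obtain ⟨η, hη0, hση, hη⟩ := hσ.exists_isHermitian_scaling hε
  obtain ⟨A, hA, hAu, hAj⟩ := hσ.exists_isHermitian_map_eq_smul hη0 hση hη hj
  obtain ⟨B, hB, hBu, hBy⟩ := hσ.exists_isHermitian_map_eq_smul hη0 hση hη hy
  obtain ⟨g, hg, hAB⟩ := hσ.starCongruent_map hM hL hA hAu hB hBu
  refine ⟨g, hg, smul_right_injective _ hη0 ?_⟩
  change η • y = η • _
  rw [← hBy, hAB, hAj, mul_smul_comm, smul_mul_assoc]

theorem exists_two_orbits_map (hM : QuadraticNormIndexTwo (selfAdjoint M))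
    (hneg : IsSumSq (-1 : selfAdjoint M)) (hL : BinaryFormsRepresentOne L) (hn : 1 ≤ n)
    {A : Matrix (Fin n) (Fin n) M} (hA : A.IsHermitian) (hAu : IsUnit A) :
    ∃ x₁ x₂, Xj σ star (A.map (algebraMap M L)) x₁ ∧ Xj σ star (A.map (algebraMap M L)) x₂ ∧
      ¬ orbGj σ star (A.map (algebraMap M L)) x₁ x₂ ∧
      ∀ x, Xj σ star (A.map (algebraMap M L)) x →
        orbGj σ star (A.map (algebraMap M L)) x₁ x ∨
        orbGj σ star (A.map (algebraMap M L)) x₂ x := by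
  set j := A.map (algebraMap M L)
  have hjσ : j.map σ = j := hσ.map_matrix_eq_self_iff.2 ⟨A, rfl⟩
  have hA1 : j = 1ᴴ * j * 1 := by simp
  have := neZero_two_of_algebra M L
  obtain ⟨x, hx⟩ := hσ.exists_star_ne
  obtain ⟨B, hB, hBu, hAB, hor⟩ :=
    exists_isHermitian_forall_starCongruent_or hM hx hneg hn hA hAu
  obtain ⟨g, hg, hBg⟩ := hσ.starCongruent_map hM hL hA hAu hB hBu
  refine ⟨coboundary σ 1, coboundary σ g, (hσ.xj_iff hjσ).2 ⟨1, isUnit_one, rfl, A, hA1⟩,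
    (hσ.xj_iff hjσ).2 ⟨g, hg, rfl, B, hBg⟩, ?_, fun x hx ↦ ?_⟩
  · rwa [hσ.orbGj_coboundary_iff isUnit_one hg hA1 hBg]
  · obtain ⟨h, hh, rfl, C, hC⟩ := (hσ.xj_iff hjσ).1 hx
    have hjC : StarCongruent j (C.map (algebraMap M L)) := ⟨h, hh, hC⟩
    rw [hσ.orbGj_coboundary_iff isUnit_one hh hA1 hC, hσ.orbGj_coboundary_iff hg hh hBg hC]
    exact hor C
      (isHermitian_map_algebraMap_iff.1 (hjC.isHermitian (isHermitian_map_algebraMap_iff.2 hA)))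
      (isUnit_matrix_map_iff.1 (hjC.isUnit (isUnit_matrix_map_iff.2 hAu)))

theorem exists_two_orbits (hM : QuadraticNormIndexTwo (selfAdjoint M))
    (hneg : IsSumSq (-1 : selfAdjoint M)) (hL : BinaryFormsRepresentOne L) (hn : 1 ≤ n) {ε : L}
    (hε : ε = 1 ∨ ε = -1) {j : Matrix (Fin n) (Fin n) L} (hj : inYnF σ star ε j) :
    ∃ x₁ x₂, Xj σ star j x₁ ∧ Xj σ star j x₂ ∧ ¬ orbGj σ star j x₁ x₂ ∧
      ∀ x, Xj σ star j x → orbGj σ star j x₁ x ∨ orbGj σ star j x₂ x := by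
  obtain ⟨η, hη0, hση, hη⟩ := hσ.exists_isHermitian_scaling hε
  obtain ⟨A, hA, hAu, hAj⟩ := hσ.exists_isHermitian_map_eq_smul hη0 hση hη hj
  have := hσ.exists_two_orbits_map hM hneg hL hn hA hAu
  simpa only [hAj, xj_smul_iff hη0, orbGj_smul_iff hη0] using this

end HermitianForms

end IsBiquadratic

/-! ### Biquadratic extensions from commuting automorphisms -/

section Automorphisms

variable {K L : Type*} [Field K] [Field L] [Algebra K L] {σ τ : L ≃ₐ[K] L}

theorem involutive_of_mul_self_eq_one (hσ : σ * σ = 1) : Function.Involutive σ :=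
  DFunLike.congr_fun hσ

theorem mem_fixedField_zpowers_iff {x : L} :
    x ∈ IntermediateField.fixedField (Subgroup.zpowers σ) ↔ σ x = x := by
  refine ⟨fun hx ↦ hx ⟨σ, Subgroup.mem_zpowers σ⟩, fun hx ↦ ?_⟩
  rintro ⟨f, hf⟩
  have hle : Subgroup.zpowers σ ≤ MulAction.stabilizer (L ≃ₐ[K] L) x := by
    rwa [Subgroup.zpowers_le, MulAction.mem_stabilizer_iff]
  exact hle hf

theorem eq_one_or_eq_of_mem_zpowers {G : Type*} [Group G] {a b : G} (ha : a * a = 1)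
    (hb : b ∈ Subgroup.zpowers a) : b = 1 ∨ b = a := by
  obtain ⟨k, rfl⟩ := hb
  obtain ⟨m, rfl | rfl⟩ := Int.even_or_odd' k
  · simp [_root_.zpow_mul, sq, ha]
  · simp [_root_.zpow_add, _root_.zpow_mul, sq, ha]

theorem exists_map_eq_self_and_map_ne [FiniteDimensional K L] (hσ : σ * σ = 1) (hτ : τ ≠ 1)
    (hστ : σ ≠ τ) : ∃ x, σ x = x ∧ τ x ≠ x := by
  by_contra! hfix
  have hτσ : τ ∈ Subgroup.zpowers σ := by
    rw [← IntermediateField.fixingSubgroup_fixedField (Subgroup.zpowers σ),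
      IntermediateField.mem_fixingSubgroup_iff]
    exact fun x hx ↦ hfix x (mem_fixedField_zpowers_iff.1 hx)
  exact (eq_one_or_eq_of_mem_zpowers hσ hτσ).elim hτ hστ.symm

/-- The restriction of `star` to the fixed field of an automorphism that commutes with it. -/
@[reducible]
def fixedFieldStarRing [StarRing L] (hcomm : ∀ x, σ (star x) = star (σ x)) :
    StarRing (IntermediateField.fixedField (Subgroup.zpowers σ)) where
  star x := ⟨star x, mem_fixedField_zpowers_iff.2 <| by
    rw [hcomm, mem_fixedField_zpowers_iff.1 x.2]⟩
  star_involutive _ := Subtype.ext (star_star _)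
  star_mul _ _ := Subtype.ext (star_mul _ _)
  star_add _ _ := Subtype.ext (star_add _ _)

theorem starModule_fixedField [StarRing L] (hcomm : ∀ x, σ (star x) = star (σ x)) :
    let := fixedFieldStarRing hcomm
    StarModule (IntermediateField.fixedField (Subgroup.zpowers σ)) L :=
  let := fixedFieldStarRing hcomm
  ⟨fun _ _ ↦ star_mul' _ _⟩

theorem isBiquadratic_fixedField [StarRing L] (hcomm : ∀ x, σ (star x) = star (σ x))
    (hσ2 : σ * σ = 1) (hσ1 : σ ≠ 1) (hστ : ∃ x, σ x = x ∧ star x ≠ x) :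
    let := fixedFieldStarRing hcomm
    IsBiquadratic (IntermediateField.fixedField (Subgroup.zpowers σ)) (σ : L →+* L) := by
  intro
  obtain ⟨y, hσy, hy⟩ := hστ
  exact
    { involutive := involutive_of_mul_self_eq_one hσ2
      map_star := hcomm
      map_eq_self_iff := fun {x} ↦ mem_fixedField_zpowers_iff.symm.trans (by simp)
      exists_map_ne := DFunLike.exists_ne hσ1
      exists_star_ne :=
        ⟨⟨y, mem_fixedField_zpowers_iff.2 hσy⟩, fun h ↦ hy (congrArg Subtype.val h)⟩ }

end Automorphisms

/-- In the unitary case (`E'` biquadratic over the base, `σ, τ` the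
commuting Galois involutions with respective fixed fields `F'` and `E`), one has
`Y_n(F) ⊆ j ⋆ GL_n(E')`, and `X^j` consists of exactly two `G^j(E)`-orbits. -/
theorem stmt_6 (p : ℕ) [Fact p.Prime]
    (E' : Type) [Field E'] [Algebra ℚ_[p] E'] [FiniteDimensional ℚ_[p] E']
    (σ τ : E' ≃ₐ[ℚ_[p]] E')
    (hσ2 : σ * σ = 1) (hτ2 : τ * τ = 1) (hcomm : σ * τ = τ * σ)
    (hσ1 : σ ≠ 1) (hτ1 : τ ≠ 1) (hστ : σ ≠ τ)
    (ε : E') (hε : ε = 1 ∨ ε = -1)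
    (n : ℕ) (hn : 1 ≤ n)
    (j : Matrix (Fin n) (Fin n) E')
    (hj : inYnF ⇑σ ⇑τ ε j) :
    -- Y_n(F) ⊆ j ⋆ GL_n(E')
    (∀ y, inYnF ⇑σ ⇑τ ε y → ∃ g, IsUnit g ∧ y = (g.map ⇑τ)ᵀ * j * g) ∧
    -- X^j consists of exactly two G^j(E)-orbits
    (∃ x₁ x₂, Xj ⇑σ ⇑τ j x₁ ∧ Xj ⇑σ ⇑τ j x₂ ∧ ¬ orbGj ⇑σ ⇑τ j x₁ x₂ ∧
      ∀ x, Xj ⇑σ ⇑τ j x → orbGj ⇑σ ⇑τ j x₁ x ∨ orbGj ⇑σ ⇑τ j x₂ x) := by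
  let := starRingOfInvolutive (τ : E' →+* E') (involutive_of_mul_self_eq_one hτ2)
  have hστ' (x : E') : σ (star x) = star (σ x) := DFunLike.congr_fun hcomm x
  let F' := IntermediateField.fixedField (Subgroup.zpowers σ)
  let : StarRing F' := fixedFieldStarRing hστ'
  have : StarModule F' E' := starModule_fixedField hστ'
  have : CharZero E' := charZero_of_injective_algebraMap (algebraMap ℚ_[p] E').injective
  have hσ : IsBiquadratic F' (σ : E' →+* E') :=
    isBiquadratic_fixedField hστ' hσ2 hσ1 (exists_map_eq_self_and_map_ne hσ2 hτ1 hστ)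
  have hE : ∀ c, IsSelfAdjoint (algebraMap ℚ_[p] E' c) := τ.commutes
  have hF' (c) : IsSelfAdjoint (algebraMap ℚ_[p] F' c) := Subtype.ext (hE c)
  have hnorm := quadraticNormIndexTwo_selfAdjoint p F' hF'
  obtain ⟨x, hx⟩ := DFunLike.exists_ne hτ1
  have hforms : BinaryFormsRepresentOne E' :=
    binaryFormsRepresentOne (quadraticNormIndexTwo_selfAdjoint p E' hE) hx
      (isSumSq_neg_one_selfAdjoint p E' hE)
  exact ⟨fun y hy ↦ hσ.starCongruent_of_inYnF hnorm hforms hε hj hy,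
    hσ.exists_two_orbits hnorm (isSumSq_neg_one_selfAdjoint p F' hF') hforms hn hε hj⟩
end

section
/- In the orthogonal case, X^j \ SX^j is a single SG^j(E)-orbit if and only if either n = 1, or n = 2 and det j ∈ -ı²·F^{×2}. -/
open Matrix

namespace OrthPair

variable {E : Type} [Field E]

/-- `g ∈ G^j(E) = {g ∈ GL_n(E) : gᵀ j g = j}` (orthogonal case). -/
def Gj {n : ℕ} (j g : Matrix (Fin n) (Fin n) E) : Prop :=
  IsUnit g ∧ gᵀ * j * g = j

/-- `x ∈ X^j = {x ∈ G^j(E) : x·σ(x) = 1}`. -/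
def Xj {n : ℕ} (σ : E → E) (j x : Matrix (Fin n) (Fin n) E) : Prop :=
  Gj j x ∧ x * x.map σ = 1

/-- `x ∈ SX^j = X^j ∩ SL_n(E)`. -/
def SXj {n : ℕ} (σ : E → E) (j x : Matrix (Fin n) (Fin n) E) : Prop :=
  Xj σ j x ∧ x.det = 1

/-- `x'` lies in the `SG^j(E) = G^j(E) ∩ SL_n(E)`-orbit of `x` for twisted conjugation
`g·x = g x σ(g)⁻¹`. -/
def orbSG {n : ℕ} (σ : E → E) (j x x' : Matrix (Fin n) (Fin n) E) : Prop :=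
  ∃ g, Gj j g ∧ g.det = 1 ∧ x' = g * x * (g.map σ)⁻¹

end OrthPair

open OrthPair

/-!
By Hilbert's Theorem 90 every `x ∈ X^j` is `h σ(h)⁻¹` with `h ∈ GL_n(E)`. Then `hᵀ j h` is a
symmetric matrix over the fixed field `F`, and twisted conjugation of `x` by `SG^j(E)` becomes
change of variables over `F` with a prescribed determinant. The condition `det x = -1` reads
`σ (det h) = -det h`.

A single orbit therefore forces all the symmetric matrices over `F` obtained in this way to be
equivalent over `F`. Write `E = F(√e)`, diagonalize one of these matrices and scale two of its
entries, with product `-δ`, by a factor `b` which is a norm from `F(√(δe))` but not from `F(√δ)`.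
By Witt cancellation the result is not equivalent to the given matrix over `F`, but it is over `E`.
Norm groups have index two, so such a `b` exists as soon as `δ` is not a square; this can be
arranged if `n ≥ 3`, and it is a condition on `det j` if `n = 2`. In the excluded binary case all
the matrices are hyperbolic planes, and explicit changes of variables relate them.

For `p`-adic fields the index of the norm group of `F(√a)` comes from comparing the numbers of
square classes `[Kˣ : Kˣ²] = 4 |O_K / 2 O_K|` for `K = F` and `K = F(√a)`.
-/

section SquaresInUnits

theorem index_range_eq_relIndex_ker_mul {G : Type*} [CommGroup G] (f : G →* G) {V : Subgroup G}
    (hV : V.index ≠ 0) (hle : V.map f ≤ V) :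
    f.range.index = V.relIndex f.ker * (V.map f).relIndex V := by
  have hindex : V.relIndex f.ker * (V ⊔ f.ker).index = V.index := by
    rw [← Subgroup.relIndex_sup_left, Subgroup.relIndex_mul_index le_sup_left]
  have hpos : (V ⊔ f.ker).index ≠ 0 := right_ne_zero_of_mul (hindex ▸ hV)
  have hmap := Subgroup.relIndex_mul_index hle
  rw [Subgroup.index_map, ← hindex] at hmap
  apply mul_left_cancel₀ hpos
  linarith

/-- The congruence subgroup `1 + aR` of the unit group of `R`, as the kernel of reduction
modulo `a`. -/
def congruenceUnits {R : Type*} [CommRing R] (a : R) : Subgroup Rˣ :=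
  (Units.map (Ideal.Quotient.mk (Ideal.span {a})).toMonoidHom).ker

theorem mem_congruenceUnits {R : Type*} [CommRing R] {a : R} {u : Rˣ} :
    u ∈ congruenceUnits a ↔ ∃ x, (u : R) = 1 + a * x := by
  have hker : u ∈ congruenceUnits a ↔ (u : R) - 1 ∈ Ideal.span {a} := by
    rw [congruenceUnits, MonoidHom.mem_ker, Units.ext_iff, ← Ideal.Quotient.eq]
    rfl
  simp only [hker, Ideal.mem_span_singleton, dvd_def, sub_eq_iff_eq_add']

theorem congruenceUnits_index_ne_zero {R : Type*} [CommRing R] {a : R}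
    [Finite (R ⧸ Ideal.span {a})] : (congruenceUnits a).index ≠ 0 := by
  rw [congruenceUnits, Subgroup.index_ker]
  exact Nat.card_pos.ne'

theorem isUnit_one_add_mul_of_not_isUnit {O : Type*} [CommRing O] [IsLocalRing O] {a : O}
    (ha : ¬IsUnit a) (x : O) : IsUnit (1 + a * x) := by
  have hmem : a * x ∈ IsLocalRing.maximalIdeal O := Ideal.mul_mem_right _ _ ha
  simpa using IsLocalRing.isUnit_one_sub_self_of_mem_nonunits _
    ((IsLocalRing.mem_maximalIdeal _).1 (neg_mem hmem))

theorem map_sq_congruenceUnits {O : Type*} [CommRing O] [IsLocalRing O] {t : O} (ht : ¬IsUnit t)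
    (hsolve : ∀ y : O, ∃ x, x + 2 * t * x ^ 2 = y) :
    (congruenceUnits (4 * t)).map (powMonoidHom 2) = congruenceUnits (4 * t * 2) := by
  -- `(1 + 4tx)² = 1 + 8t(x + 2tx²)`.
  have ht4 : ¬IsUnit (4 * t) := fun h => ht (isUnit_of_mul_isUnit_right h)
  ext u
  rw [Subgroup.mem_map, mem_congruenceUnits]
  constructor
  · rintro ⟨v, hv, rfl⟩
    obtain ⟨x, hx⟩ := mem_congruenceUnits.1 hv
    refine ⟨x + 2 * t * x ^ 2, ?_⟩
    rw [powMonoidHom_apply, Units.val_pow_eq_pow_val, hx]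
    ring
  · rintro ⟨y, hy⟩
    obtain ⟨x, rfl⟩ := hsolve y
    refine ⟨(isUnit_one_add_mul_of_not_isUnit ht4 x).unit, mem_congruenceUnits.2 ⟨x, rfl⟩, ?_⟩
    ext
    rw [powMonoidHom_apply, Units.val_pow_eq_pow_val, hy, IsUnit.unit_spec]
    ring

variable {O : Type*} [CommRing O] [IsDomain O] [IsLocalRing O]

theorem relIndex_congruenceUnits_mul {a b : O} (ha0 : a ≠ 0) (ha : ¬IsUnit a) (hb : b ∣ a) :
    (congruenceUnits (a * b)).relIndex (congruenceUnits a) = Nat.card (O ⧸ Ideal.span {b}) := by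
  -- `1 + a x ↦ x mod b` is a homomorphism because `b ∣ a`.
  choose c hc using fun v : congruenceUnits a => mem_congruenceUnits.1 v.2
  have c_eq {v : congruenceUnits a} {x : O} (h : ((v : Oˣ) : O) = 1 + a * x) : c v = x :=
    mul_left_cancel₀ ha0 (by linear_combination h - hc v)
  let φ : congruenceUnits a →* Multiplicative (O ⧸ Ideal.span {b}) :=
    { toFun := fun v => .ofAdd (Ideal.Quotient.mk _ (c v))
      map_one' := by simp [c_eq (v := 1) (x := 0)]
      map_mul' := fun u v => by
        have hcuv : c (u * v) = c u + c v + a * (c u * c v) := c_eq (by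
          rw [Subgroup.coe_mul, Units.val_mul, hc u, hc v]
          ring)
        rw [← ofAdd_add, ← map_add, Multiplicative.ofAdd.apply_eq_iff_eq, Ideal.Quotient.eq,
          Ideal.mem_span_singleton, hcuv, add_sub_cancel_left]
        exact hb.mul_right _ }
  have hφ_surjective : Function.Surjective φ := by
    intro y
    obtain ⟨x, hx⟩ := Ideal.Quotient.mk_surjective y.toAdd
    refine ⟨⟨(isUnit_one_add_mul_of_not_isUnit ha x).unit, mem_congruenceUnits.2 ⟨x, rfl⟩⟩, ?_⟩
    exact congrArg Multiplicative.ofAdd ((congrArg _ (c_eq rfl)).trans hx)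
  have hφ_ker : φ.ker = (congruenceUnits (a * b)).subgroupOf (congruenceUnits a) := by
    ext v
    rw [MonoidHom.mem_ker, Subgroup.mem_subgroupOf, mem_congruenceUnits]
    change Ideal.Quotient.mk _ (c v) = 0 ↔ _
    rw [Ideal.Quotient.eq_zero_iff_mem, Ideal.mem_span_singleton]
    exact exists_congr fun x =>
      ⟨fun h => by rw [hc v, h, mul_assoc], fun h => c_eq (by rw [h, mul_assoc])⟩
  rw [Subgroup.relIndex, ← hφ_ker, Subgroup.index_ker, MonoidHom.range_eq_top.2 hφ_surjective]
  exact Nat.card_congr (Subgroup.topEquiv.toEquiv.trans Multiplicative.toAdd)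

variable {t : O}

theorem neg_one_notMem_congruenceUnits (h2 : (2 : O) ≠ 0) (ht : ¬IsUnit t) :
    (-1 : Oˣ) ∉ congruenceUnits (4 * t) := by
  intro h
  obtain ⟨x, hx⟩ := mem_congruenceUnits.1 h
  push_cast at hx
  have h0 : 1 + t * (2 * x) = 0 := mul_left_cancel₀ h2 (by linear_combination -hx)
  exact not_isUnit_zero (h0 ▸ isUnit_one_add_mul_of_not_isUnit ht (2 * x))

theorem relIndex_congruenceUnits_ker_sq (h2 : (2 : O) ≠ 0) (ht : ¬IsUnit t) :
    (congruenceUnits (4 * t)).relIndex (powMonoidHom 2 : Oˣ →* Oˣ).ker = 2 := by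
  have hneg := neg_one_notMem_congruenceUnits h2 ht
  have hker (u : Oˣ) : u ∈ (powMonoidHom 2 : Oˣ →* Oˣ).ker ↔ u = 1 ∨ u = -1 := by
    rw [MonoidHom.mem_ker, powMonoidHom_apply, Units.ext_iff, Units.ext_iff, Units.ext_iff]
    push_cast
    exact sq_eq_one_iff
  have hne : (1 : Oˣ) ≠ -1 := fun h => hneg (h ▸ one_mem _)
  have hinf : congruenceUnits (4 * t) ⊓ (powMonoidHom 2 : Oˣ →* Oˣ).ker = ⊥ := by
    rw [eq_bot_iff]
    rintro u ⟨hu, hu'⟩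
    obtain rfl | rfl := (hker u).1 hu'
    exacts [one_mem _, absurd hu hneg]
  have hset : ((powMonoidHom 2 : Oˣ →* Oˣ).ker : Set Oˣ) = {1, -1} := Set.ext hker
  rw [← Subgroup.inf_relIndex_right, hinf, Subgroup.relIndex_bot_left]
  change Nat.card ((powMonoidHom 2 : Oˣ →* Oˣ).ker : Set Oˣ) = 2
  rw [hset, Nat.card_coe_set_eq, Set.ncard_pair hne]

theorem index_square_units_s12 (ht0 : t ≠ 0) (h2 : (2 : O) ≠ 0) (ht : ¬IsUnit t)
    (hsolve : ∀ y : O, ∃ x, x + 2 * t * x ^ 2 = y) [Finite (O ⧸ Ideal.span {4 * t})] :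
    (Subgroup.square Oˣ).index = 2 * Nat.card (O ⧸ Ideal.span {(2 : O)}) := by
  have h4 : (4 : O) = 2 * 2 := by norm_num
  have ht40 : 4 * t ≠ 0 := mul_ne_zero (h4 ▸ mul_ne_zero h2 h2) ht0
  have ht4 : ¬IsUnit (4 * t) := fun h => ht (isUnit_of_mul_isUnit_right h)
  have hmap := map_sq_congruenceUnits ht hsolve
  have h2_dvd : (2 : O) ∣ 4 * t := ⟨2 * t, by ring⟩
  have hle : (congruenceUnits (4 * t)).map (powMonoidHom 2) ≤ congruenceUnits (4 * t) := by
    rintro _ ⟨v, hv, rfl⟩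
    exact pow_mem hv 2
  have hrange : Subgroup.square Oˣ = (powMonoidHom 2).range := by
    ext u
    simp [isSquare_iff_exists_sq, eq_comm]
  have hindex := index_range_eq_relIndex_ker_mul (powMonoidHom 2 : Oˣ →* Oˣ)
    congruenceUnits_index_ne_zero hle
  rw [relIndex_congruenceUnits_ker_sq h2 ht, hmap,
    relIndex_congruenceUnits_mul ht40 ht4 h2_dvd] at hindex
  rw [hrange, hindex]

end SquaresInUnits

section SquaresInFractionField

theorem index_square_multiplicative_int : (Subgroup.square (Multiplicative ℤ)).index = 2 := by
  refine Subgroup.index_eq_two_iff.2 ⟨.ofAdd 1, fun b => ?_⟩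
  have hxor : Xor (Even (b.toAdd + 1)) (Even b.toAdd) := by
    rw [Int.even_add_one]
    exact xor_not_left.2 Iff.rfl
  exact hxor

theorem index_square_eq_two_mul_of_exact {H G : Type*} [CommGroup H] [CommGroup G] {i : H →* G}
    {v : G →* Multiplicative ℤ} (hi : Function.Injective i) (hexact : i.range = v.ker)
    (hv : Function.Surjective v) :
    (Subgroup.square G).index = 2 * (Subgroup.square H).index := by
  have hcomap : (Subgroup.square G).comap i = Subgroup.square H := by
    ext u
    refine ⟨fun ⟨g, hg⟩ => ?_, fun hu => hu.map i⟩
    have hgv : v g ^ 2 = 1 := by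
      rw [sq, ← map_mul, ← hg]
      exact hexact.le ⟨u, rfl⟩
    obtain ⟨w, rfl⟩ : g ∈ i.range := hexact.ge ((pow_eq_one_iff_left two_ne_zero).1 hgv)
    exact ⟨w, hi (hg.trans (map_mul i w w).symm)⟩
  have hmap : (Subgroup.square G).map v = Subgroup.square (Multiplicative ℤ) := by
    ext z
    refine ⟨fun ⟨g, hg, hgz⟩ => hgz ▸ hg.map v, fun ⟨y, hy⟩ => ?_⟩
    obtain ⟨g, rfl⟩ := hv y
    exact ⟨g * g, ⟨g, rfl⟩, (map_mul v g g).trans hy.symm⟩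
  have hsup : (Subgroup.square G ⊔ v.ker).index = 2 := by
    rw [← index_square_multiplicative_int, ← hmap, Subgroup.index_map,
      MonoidHom.range_eq_top.2 hv, Subgroup.index_top, mul_one]
  rw [← Subgroup.relIndex_mul_index (le_sup_left : Subgroup.square G ≤ _ ⊔ v.ker), hsup,
    Subgroup.relIndex_sup_left, ← hexact, ← Subgroup.index_comap, hcomap, mul_comm]

theorem index_square_fractionRing {O K : Type*} [CommRing O] [IsDomain O]
    [IsDiscreteValuationRing O] [Field K] [Algebra O K] [IsFractionRing O K] :
    (Subgroup.square Kˣ).index = 2 * (Subgroup.square Oˣ).index := by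
  let val := (IsDiscreteValuationRing.maximalIdeal O).valuation K
  let v : Kˣ →* Multiplicative ℤ :=
    WithZero.unitsWithZeroEquiv.toMonoidHom.comp (Units.map val.toMonoidWithZeroHom.toMonoidHom)
  have hv_ker (x : Kˣ) : x ∈ v.ker ↔ (x : K) ∈ MonoidHom.mker val := by
    rw [MonoidHom.mem_ker, MonoidHom.mem_mker]
    exact (map_eq_one_iff _ WithZero.unitsWithZeroEquiv.injective).trans Units.ext_iff
  refine index_square_eq_two_mul_of_exact (i := Units.map (algebraMap O K).toMonoidHom) (v := v)
    (Units.map_injective (IsFractionRing.injective O K)) ?_ ?_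
  · ext x
    rw [hv_ker, IsDiscreteValuationRing.mker_valuation_eq_isUnitSubmonoid]
    exact ⟨fun ⟨u, hu⟩ => ⟨u, u.isUnit, congrArg Units.val hu⟩,
      fun ⟨a, ha, hax⟩ => ⟨ha.unit, Units.ext hax⟩⟩
  · refine WithZero.unitsWithZeroEquiv.surjective.comp fun z => ?_
    obtain ⟨x, hx⟩ := IsDedekindDomain.HeightOneSpectrum.valuation_surjective K
      (IsDiscreteValuationRing.maximalIdeal O) z
    have hx0 : x ≠ 0 := (Valuation.ne_zero_iff _).1 (hx ▸ z.ne_zero)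
    exact ⟨Units.mk0 x hx0, Units.ext hx⟩

end SquaresInFractionField

section PadicIntegers

theorem natCard_quotient_span_algebraMap {R S : Type*} [CommRing R] [CommRing S] [Algebra R S]
    [StrongRankCondition R] [Module.Free R S] [Module.Finite R S] (a : R) :
    Nat.card (S ⧸ Ideal.span {algebraMap R S a}) =
      Nat.card (R ⧸ Ideal.span {a}) ^ Module.finrank R S := by
  let b := Module.finBasis R S
  have hmap : ((Ideal.span {algebraMap R S a}).restrictScalars R).map b.equivFun.toLinearMap =
      Submodule.pi Set.univ fun _ => Ideal.span {a} := by
    ext y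
    simp only [Submodule.mem_map_equiv, Submodule.restrictScalars_mem, Ideal.mem_span_singleton,
      Submodule.mem_pi, Set.mem_univ, forall_const]
    refine ⟨fun ⟨z, hz⟩ i => ⟨b.equivFun z i, ?_⟩, fun h => ?_⟩
    · rw [← Algebra.smul_def, LinearEquiv.symm_apply_eq, map_smul] at hz
      exact congrFun hz i
    · choose c hc using h
      refine ⟨b.equivFun.symm c, ?_⟩
      rw [← Algebra.smul_def, ← map_smul, funext hc]
      rfl
  rw [← Nat.card_congr (Submodule.Quotient.restrictScalarsEquiv R
      (Ideal.span {algebraMap R S a})).toEquiv,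
    Nat.card_congr (Submodule.Quotient.equiv _ _ b.equivFun hmap).toEquiv,
    Nat.card_congr (Submodule.quotientPi fun _ => Ideal.span {a}).toEquiv, Nat.card_fun,
    Nat.card_fin]

theorem exists_norm_le_one_add_mul_sq_eq {K : Type*} [NormedField K] [CompleteSpace K]
    [IsUltrametricDist K] {c y : K} (hc : ‖c‖ < 1) (hy : ‖y‖ ≤ 1) :
    ∃ x : K, ‖x‖ ≤ 1 ∧ x + c * x ^ 2 = y := by
  let f : K → K := fun x => y - c * x ^ 2
  have hmaps : Set.MapsTo f (Metric.closedBall 0 1) (Metric.closedBall 0 1) := by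
    intro x hx
    rw [mem_closedBall_zero_iff] at hx ⊢
    have hcx : ‖-(c * x ^ 2)‖ ≤ 1 := by
      rw [norm_neg, norm_mul, norm_pow]
      exact mul_le_one₀ hc.le (by positivity) (pow_le_one₀ (norm_nonneg x) hx)
    simpa only [f, sub_eq_add_neg] using
      (IsUltrametricDist.norm_add_le_max y _).trans (max_le hy hcx)
  have hcontracting : ContractingWith ‖c‖₊ (hmaps.restrict f _ _) := by
    refine ⟨hc, LipschitzWith.of_dist_le_mul ?_⟩
    rintro ⟨a, ha⟩ ⟨b, hb⟩
    rw [mem_closedBall_zero_iff] at ha hb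
    have hab : ‖b + a‖ ≤ 1 := (IsUltrametricDist.norm_add_le_max _ _).trans (max_le hb ha)
    have hsub : f a - f b = c * ((b + a) * (b - a)) := by
      simp only [f]
      ring
    rw [Subtype.dist_eq, Subtype.dist_eq, dist_comm a b, dist_eq_norm, dist_eq_norm]
    change ‖f a - f b‖ ≤ ‖c‖ * ‖b - a‖
    rw [hsub, norm_mul, norm_mul]
    gcongr
    exact mul_le_of_le_one_left (norm_nonneg _) hab
  obtain ⟨x, hx, hfx, -⟩ := hcontracting.exists_fixedPoint' Metric.isClosed_closedBall.isComplete
    hmaps (Metric.mem_closedBall_self zero_le_one) (edist_ne_top _ _)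
  exact ⟨x, mem_closedBall_zero_iff.1 hx, eq_sub_iff_add_eq.1 hfx.eq.symm⟩

variable {p : ℕ} [Fact p.Prime]

theorem finite_padicInt_quotient_span {a : ℤ_[p]} (ha : a ≠ 0) :
    Finite (ℤ_[p] ⧸ Ideal.span {a}) := by
  obtain ⟨n, hn⟩ := PadicInt.ideal_eq_span_pow_p (Ideal.span_singleton_eq_bot.not.2 ha)
  have : NeZero (p ^ n) := ⟨pow_ne_zero _ (NeZero.ne p)⟩
  rw [hn, ← PadicInt.ker_toZModPow]
  exact Finite.of_injective _ (RingHom.kerLift_injective (PadicInt.toZModPow (p := p) n))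

variable {K : Type*} [Field K] [Algebra ℚ_[p] K] [FiniteDimensional ℚ_[p] K] [Algebra ℤ_[p] K]
  [IsScalarTower ℤ_[p] ℚ_[p] K]

theorem isIntegral_iff_spectralNorm_le_one {x : K} :
    IsIntegral ℤ_[p] x ↔ spectralNorm ℚ_[p] K x ≤ 1 := by
  have hx : (minpoly ℚ_[p] x).Monic := minpoly.monic (Algebra.IsIntegral.isIntegral x)
  rw [spectralNorm, spectralValue_le_one_iff hx]
  constructor
  · intro h n
    rw [minpoly.isIntegrallyClosed_eq_field_fractions' ℚ_[p] h, Polynomial.coeff_map]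
    exact PadicInt.norm_le_one _
  · intro h
    have hlifts : minpoly ℚ_[p] x ∈ Polynomial.lifts (algebraMap ℤ_[p] ℚ_[p]) :=
      (Polynomial.lifts_iff_coeff_lifts _).2 fun n => ⟨⟨_, h n⟩, rfl⟩
    obtain ⟨q, hq, -, hq_monic⟩ := Polynomial.lifts_and_natDegree_eq_and_monic hlifts hx
    refine ⟨q, hq_monic, ?_⟩
    rw [← Polynomial.aeval_def, ← Polynomial.aeval_map_algebraMap ℚ_[p], hq, minpoly.aeval]

theorem isUnit_integralClosure_iff_spectralNorm_eq_one {x : integralClosure ℤ_[p] K} :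
    IsUnit x ↔ spectralNorm ℚ_[p] K x = 1 := by
  let _ := spectralNorm.normedField ℚ_[p] K
  have hle (y : integralClosure ℤ_[p] K) : ‖(y : K)‖ ≤ 1 :=
    isIntegral_iff_spectralNorm_le_one.1 y.2
  change _ ↔ ‖(x : K)‖ = 1
  constructor
  · intro h
    obtain ⟨y, hy⟩ := h.exists_right_inv
    have hxy : ‖(x : K)‖ * ‖(y : K)‖ = 1 := by
      have hxy : (x : K) * y = 1 := congrArg Subtype.val hy
      rw [← norm_mul, hxy, norm_one]
    exact (hle x).antisymm (hxy.ge.trans (mul_le_of_le_one_right (norm_nonneg _) (hle y)))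
  · intro h
    have hx0 : (x : K) ≠ 0 := norm_ne_zero_iff.1 (h ▸ one_ne_zero)
    have hinv : ‖(x : K)⁻¹‖ ≤ 1 := by rw [norm_inv, h, inv_one]
    exact IsUnit.of_mul_eq_one ⟨(x : K)⁻¹, isIntegral_iff_spectralNorm_le_one.2 hinv⟩
      (Subtype.ext (mul_inv_cancel₀ hx0))

theorem not_isUnit_integralClosure_iff_spectralNorm_lt_one {x : integralClosure ℤ_[p] K} :
    ¬IsUnit x ↔ spectralNorm ℚ_[p] K x < 1 := by
  rw [isUnit_integralClosure_iff_spectralNorm_eq_one]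
  exact ⟨fun h => lt_of_le_of_ne (isIntegral_iff_spectralNorm_le_one.1 x.2) h, ne_of_lt⟩

variable (p K)

instance charZero_integralClosure : CharZero (integralClosure ℤ_[p] K) :=
  have : CharZero K := charZero_of_injective_algebraMap (algebraMap ℚ_[p] K).injective
  (integralClosure ℤ_[p] K).val.toRingHom.charZero

instance isLocalRing_integralClosure : IsLocalRing (integralClosure ℤ_[p] K) := by
  refine IsLocalRing.of_nonunits_add fun a b ha hb => ?_
  rw [mem_nonunits_iff, not_isUnit_integralClosure_iff_spectralNorm_lt_one] at *
  exact (isNonarchimedean_spectralNorm (a : K) b).trans_lt (max_lt ha hb)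

theorem not_isUnit_prime_integralClosure : ¬IsUnit (p : integralClosure ℤ_[p] K) := by
  have hnorm := spectralNorm_extends (L := K) (p : ℚ_[p])
  rw [map_natCast] at hnorm
  rw [not_isUnit_integralClosure_iff_spectralNorm_lt_one]
  push_cast
  exact hnorm ▸ Padic.norm_p_lt_one

instance isDiscreteValuationRing_integralClosure_s12 :
    IsDiscreteValuationRing (integralClosure ℤ_[p] K) := by
  have : IsDedekindDomain (integralClosure ℤ_[p] K) :=
    integralClosure.isDedekindDomain ℤ_[p] ℚ_[p] K
  have hnot_isField : ¬IsField (integralClosure ℤ_[p] K) := fun h => by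
    let := h.toField
    exact not_isUnit_prime_integralClosure p K (IsUnit.mk0 _ (NeZero.ne _))
  exact ((IsDiscreteValuationRing.TFAE _ hnot_isField).out 0 2).2 this

variable {p K}

theorem exists_add_mul_sq_eq_of_not_isUnit {c : integralClosure ℤ_[p] K} (hc : ¬IsUnit c)
    (y : integralClosure ℤ_[p] K) : ∃ x, x + c * x ^ 2 = y := by
  let _ := spectralNorm.normedField ℚ_[p] K
  have : CompleteSpace K := spectralNorm.completeSpace ℚ_[p] K
  have : IsUltrametricDist K :=
    IsUltrametricDist.isUltrametricDist_of_isNonarchimedean_norm isNonarchimedean_spectralNorm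
  obtain ⟨x, hx, hxy⟩ := exists_norm_le_one_add_mul_sq_eq (c := (c : K)) (y := y)
    (not_isUnit_integralClosure_iff_spectralNorm_lt_one.1 hc)
    (isIntegral_iff_spectralNorm_le_one.1 y.2)
  exact ⟨⟨x, isIntegral_iff_spectralNorm_le_one.2 hx⟩, Subtype.ext hxy⟩

theorem natCard_quotient_integralClosure (a : ℤ_[p]) :
    Nat.card (integralClosure ℤ_[p] K ⧸
        Ideal.span {algebraMap ℤ_[p] (integralClosure ℤ_[p] K) a}) =
      Nat.card (ℤ_[p] ⧸ Ideal.span {a}) ^ Module.finrank ℚ_[p] K := by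
  have : Module.IsTorsionFree ℤ_[p] K := by
    rw [Module.isTorsionFree_iff_algebraMap_injective, IsScalarTower.algebraMap_eq ℤ_[p] ℚ_[p] K]
    exact (algebraMap ℚ_[p] K).injective.comp (IsFractionRing.injective ℤ_[p] ℚ_[p])
  have : Module.Finite ℤ_[p] (integralClosure ℤ_[p] K) :=
    IsIntegralClosure.finite ℤ_[p] ℚ_[p] K _
  have : Module.Free ℤ_[p] (integralClosure ℤ_[p] K) :=
    IsIntegralClosure.module_free ℤ_[p] ℚ_[p] K _
  rw [natCard_quotient_span_algebraMap, IsIntegralClosure.rank ℤ_[p] ℚ_[p] K]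

theorem index_square_padic_extension : (Subgroup.square Kˣ).index =
    4 * Nat.card (ℤ_[p] ⧸ Ideal.span {(2 : ℤ_[p])}) ^ Module.finrank ℚ_[p] K := by
  let O := integralClosure ℤ_[p] K
  have : IsFractionRing O K := integralClosure.isFractionRing_of_finite_extension ℚ_[p] K
  have hp : ¬IsUnit (2 * p : O) :=
    fun h => not_isUnit_prime_integralClosure p K (isUnit_of_mul_isUnit_right h)
  have hcard_two : Nat.card (O ⧸ Ideal.span {(2 : O)}) =
      Nat.card (ℤ_[p] ⧸ Ideal.span {(2 : ℤ_[p])}) ^ Module.finrank ℚ_[p] K := by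
    rw [← natCard_quotient_integralClosure, map_ofNat]
  have hfinite : Finite (O ⧸ Ideal.span {(4 * p : O)}) := by
    have := finite_padicInt_quotient_span (p := p) (a := 4 * p)
      (mul_ne_zero (by norm_num) (NeZero.ne _))
    have hcard := natCard_quotient_integralClosure (K := K) (4 * p : ℤ_[p])
    rw [map_mul, map_ofNat, map_natCast] at hcard
    exact Nat.finite_of_card_ne_zero (hcard ▸ pow_ne_zero _ Nat.card_pos.ne')
  rw [index_square_fractionRing (O := O), index_square_units_s12 (t := (p : O)) (NeZero.ne _)
    two_ne_zero (not_isUnit_prime_integralClosure p K) (exists_add_mul_sq_eq_of_not_isUnit hp),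
    hcard_two]
  ring

end PadicIntegers

section NormGroups

variable {F : Type*} [Field F]

/-- The norm `F[√a]ˣ → Fˣ`. -/
abbrev unitsNorm (a : F) : (QuadraticAlgebra F a 0)ˣ →* Fˣ :=
  Units.map QuadraticAlgebra.norm

/-- The inclusion `Fˣ → F[√a]ˣ`. -/
abbrev unitsInclusion (a : F) : Fˣ →* (QuadraticAlgebra F a 0)ˣ :=
  Units.map (algebraMap F (QuadraticAlgebra F a 0)).toMonoidHom

/-- The group of values of the norm form `x² - a y²` in `Fˣ`, encoded as the image of the norm of
`F[√a]`; this makes sense for square `a` too, where `F[√a]` is not a field. -/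
def normSubgroup (a : F) : Subgroup Fˣ := (unitsNorm a).range

theorem isSquare_val_units_iff {b : Fˣ} : IsSquare (b : F) ↔ IsSquare b := by
  refine ⟨fun ⟨r, hr⟩ => ?_, fun ⟨r, hr⟩ => ⟨r, by rw [hr, Units.val_mul]⟩⟩
  exact ⟨Units.mk0 r (left_ne_zero_of_mul (hr ▸ b.ne_zero)), Units.ext hr⟩

theorem mem_normSubgroup {a : F} {b : Fˣ} :
    b ∈ normSubgroup a ↔ ∃ x y : F, (b : F) = x ^ 2 - a * y ^ 2 := by
  constructor
  · rintro ⟨z, rfl⟩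
    refine ⟨(z : QuadraticAlgebra F a 0).re, (z : QuadraticAlgebra F a 0).im, ?_⟩
    rw [Units.coe_map, QuadraticAlgebra.norm_def]
    ring
  · rintro ⟨x, y, hb⟩
    have hnorm : QuadraticAlgebra.norm (⟨x, y⟩ : QuadraticAlgebra F a 0) = b := by
      rw [hb, QuadraticAlgebra.norm_def]
      ring
    have hunit : IsUnit (⟨x, y⟩ : QuadraticAlgebra F a 0) :=
      QuadraticAlgebra.isUnit_iff_norm_isUnit.2 (hnorm ▸ b.isUnit)
    exact ⟨hunit.unit, Units.ext hnorm⟩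

theorem square_le_normSubgroup (a : F) : Subgroup.square Fˣ ≤ normSubgroup a := by
  rintro _ ⟨x, rfl⟩
  exact mem_normSubgroup.2 ⟨x, 0, by push_cast; ring⟩

theorem normSubgroup_eq_top_of_isSquare [NeZero (2 : F)] {a : Fˣ} (ha : IsSquare a) :
    normSubgroup (a : F) = ⊤ := by
  obtain ⟨r, rfl⟩ := ha
  refine eq_top_iff.2 fun b _ => mem_normSubgroup.2 ⟨(b + 1) / 2, (b - 1) / (2 * r), ?_⟩
  push_cast
  field_simp
  ring

theorem mem_normSubgroup_comm [NeZero (2 : F)] {a b : Fˣ} :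
    b ∈ normSubgroup (a : F) ↔ a ∈ normSubgroup (b : F) := by
  suffices h : ∀ {a b : Fˣ}, b ∈ normSubgroup (a : F) → a ∈ normSubgroup (b : F) from ⟨h, h⟩
  intro a b hab
  obtain ⟨x, y, hxy⟩ := mem_normSubgroup.1 hab
  by_cases hy : y = 0
  · have hb : IsSquare (b : F) := ⟨x, by rw [hxy, hy]; ring⟩
    simp [normSubgroup_eq_top_of_isSquare (isSquare_val_units_iff.1 hb)]
  · refine mem_normSubgroup.2 ⟨x / y, 1 / y, ?_⟩
    rw [hxy]
    field_simp
    ring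

section NonsquareDiscriminant

variable {a : Fˣ} [Fact (∀ r : F, r ^ 2 ≠ a + 0 * r)]

theorem comap_unitsNorm_square : (Subgroup.square Fˣ).comap (unitsNorm (a : F)) =
    Subgroup.square (QuadraticAlgebra F (a : F) 0)ˣ ⊔ (unitsInclusion (a : F)).range := by
  apply le_antisymm
  · rintro z ⟨c, hc⟩
    have hnorm : QuadraticAlgebra.norm z.1 = c ^ 2 := by
      rw [sq]
      exact congrArg Units.val hc
    by_cases hw : algebraMap F (QuadraticAlgebra F (a : F) 0) c + z = 0
    · exact Subgroup.mem_sup_right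
        ⟨-c, Units.ext (by simpa using (eq_neg_of_add_eq_zero_right hw).symm)⟩
    · -- `z² = tr(z) z - c²`, so `(c + z)²` is a multiple of `z` by an element of `F`.
      have hsq : (algebraMap F (QuadraticAlgebra F (a : F) 0) c + z) ^ 2 =
          z * algebraMap F _ (2 * (c : F) + QuadraticAlgebra.trace z.1) := by
        have hz := QuadraticAlgebra.sq_eq_trace_smul_sub_norm z.1
        rw [hnorm, Algebra.smul_def] at hz
        rw [add_sq, hz, map_add, map_mul, map_pow, map_ofNat]
        ring
      have hscalar : 2 * (c : F) + QuadraticAlgebra.trace z.1 ≠ 0 := by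
        intro h0
        rw [h0, map_zero, mul_zero] at hsq
        exact hw (pow_eq_zero_iff two_ne_zero |>.1 hsq)
      have hz : z = (Units.mk0 _ hw * Units.mk0 _ hw) *
          (unitsInclusion (a : F) (Units.mk0 _ hscalar))⁻¹ := by
        rw [eq_mul_inv_iff_mul_eq]
        exact Units.ext (hsq.symm.trans (sq _))
      rw [hz]
      exact mul_mem (Subgroup.mem_sup_left ⟨_, rfl⟩)
        (inv_mem (Subgroup.mem_sup_right ⟨_, rfl⟩))
  · rw [sup_le_iff]
    constructor
    · rintro _ ⟨w, rfl⟩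
      exact ⟨unitsNorm (a : F) w, map_mul _ _ _⟩
    · rintro _ ⟨c, rfl⟩
      exact ⟨c, Units.ext (by simp [QuadraticAlgebra.norm_algebraMap, sq])⟩

theorem isSquare_unitsInclusion_iff [NeZero (2 : F)] {b : Fˣ} :
    IsSquare (unitsInclusion (a : F) b) ↔ IsSquare (b * a) ∨ IsSquare b := by
  constructor
  · rintro ⟨z, hz⟩
    have hre : (b : F) = z.1.re * z.1.re + a * z.1.im * z.1.im := by
      simpa using congrArg QuadraticAlgebra.re (congrArg Units.val hz)
    have him : 0 = z.1.re * z.1.im + z.1.im * z.1.re := by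
      simpa using congrArg QuadraticAlgebra.im (congrArg Units.val hz)
    have hre_mul_im : z.1.re * z.1.im = 0 :=
      (mul_eq_zero.1 (by linear_combination -him : 2 * (z.1.re * z.1.im) = 0)).resolve_left
        two_ne_zero
    simp only [← isSquare_val_units_iff, Units.val_mul, hre]
    rcases mul_eq_zero.1 hre_mul_im with h0 | h0
    · exact .inl ⟨a * z.1.im, by rw [h0]; ring⟩
    · exact .inr ⟨z.1.re, by rw [h0]; ring⟩
  · rintro (⟨y, hy⟩ | ⟨y, rfl⟩)
    · have hω : unitsInclusion (a : F) a = Units.mk0 QuadraticAlgebra.omega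
          (fun h => one_ne_zero (congrArg QuadraticAlgebra.im h)) ^ 2 := by
        ext <;> simp [sq]
      have hb : unitsInclusion (a : F) b * unitsInclusion (a : F) a =
          unitsInclusion (a : F) y * unitsInclusion (a : F) y := by
        rw [← map_mul, hy, map_mul]
      rw [eq_mul_inv_of_mul_eq hb, hω]
      exact (IsSquare.mul_self _).mul (IsSquare.sq _).inv
    · exact ⟨unitsInclusion (a : F) y, map_mul _ _ _⟩

theorem relIndex_square_comap_unitsInclusion [NeZero (2 : F)] :
    (Subgroup.square Fˣ).relIndex
      ((Subgroup.square (QuadraticAlgebra F (a : F) 0)ˣ).comap (unitsInclusion (a : F))) = 2 := by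
  have ha : ¬IsSquare a := by
    rintro ⟨r, hr⟩
    exact Fact.out (p := ∀ r : F, r ^ 2 ≠ a + 0 * r) r (by rw [hr]; push_cast; ring)
  rw [Subgroup.relIndex_eq_two_iff_exists_notMem_and]
  exact ⟨a, (isSquare_unitsInclusion_iff).2 (.inl (.mul_self a)), ha,
    fun _ hb => (isSquare_unitsInclusion_iff).1 hb⟩

theorem index_square_sq_eq_mul_index_normSubgroup [NeZero (2 : F)] :
    (Subgroup.square Fˣ).index ^ 2 =
      2 * (Subgroup.square (QuadraticAlgebra F (a : F) 0)ˣ).index *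
        (normSubgroup (a : F)).index := by
  let squares := Subgroup.square (QuadraticAlgebra F (a : F) 0)ˣ
  have hcomap : Subgroup.square Fˣ ≤ squares.comap (unitsInclusion (a : F)) :=
    fun _ hb => (isSquare_unitsInclusion_iff).2 (.inr hb)
  have hF := Subgroup.relIndex_mul_index hcomap
  have hK := Subgroup.relIndex_mul_index
    (le_sup_left : squares ≤ squares ⊔ (unitsInclusion (a : F)).range)
  have hN := Subgroup.relIndex_mul_index (square_le_normSubgroup (a : F))
  rw [relIndex_square_comap_unitsInclusion] at hF
  rw [Subgroup.relIndex_sup_left, ← Subgroup.index_comap, ← comap_unitsNorm_square,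
    Subgroup.index_comap (Subgroup.square Fˣ)] at hK
  calc (Subgroup.square Fˣ).index ^ 2
      = 2 * (squares.comap (unitsInclusion (a : F))).index *
          ((Subgroup.square Fˣ).relIndex (normSubgroup (a : F)) *
            (normSubgroup (a : F)).index) := by rw [hF, hN, sq]
    _ = 2 * squares.index * (normSubgroup (a : F)).index := by
          rw [← hK, normSubgroup]
          ring

end NonsquareDiscriminant

/-- Every nonsquare `a` has norm group of index two in `Fˣ`, as local class field theory asserts for
a local field of characteristic other than two. -/
class NormIndexTwo (F : Type*) [Field F] : Prop where
  index_normSubgroup : ∀ {a : Fˣ}, ¬IsSquare a → (normSubgroup (a : F)).index = 2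

theorem normIndexTwo_of_padic_extension (p : ℕ) [Fact p.Prime] (F : Type*) [Field F]
    [Algebra ℚ_[p] F] [FiniteDimensional ℚ_[p] F] : NormIndexTwo F where
  index_normSubgroup {a} ha := by
    have : CharZero F := charZero_of_injective_algebraMap (algebraMap ℚ_[p] F).injective
    have : Fact (∀ r : F, r ^ 2 ≠ a + 0 * r) :=
      ⟨fun r hr => ha (isSquare_val_units_iff.1 ⟨r, by linear_combination -hr⟩)⟩
    let K := QuadraticAlgebra F (a : F) 0
    have : FiniteDimensional ℚ_[p] K := Module.Finite.trans F K
    let _ : Algebra ℤ_[p] F := Algebra.compHom F (algebraMap ℤ_[p] ℚ_[p])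
    let _ : Algebra ℤ_[p] K := Algebra.compHom K (algebraMap ℤ_[p] ℚ_[p])
    have : IsScalarTower ℤ_[p] ℚ_[p] F := IsScalarTower.of_algebraMap_eq fun _ => rfl
    have : IsScalarTower ℤ_[p] ℚ_[p] K := IsScalarTower.of_algebraMap_eq fun _ => rfl
    have : Finite (ℤ_[p] ⧸ Ideal.span {(2 : ℤ_[p])}) := finite_padicInt_quotient_span two_ne_zero
    have hK := index_square_padic_extension (p := p) (K := K)
    rw [← Module.finrank_mul_finrank ℚ_[p] F K, QuadraticAlgebra.finrank_eq_two, pow_mul] at hK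
    have hindex := index_square_sq_eq_mul_index_normSubgroup (a := a)
    rw [index_square_padic_extension (p := p) (K := F), hK] at hindex
    set q := Nat.card (ℤ_[p] ⧸ Ideal.span {(2 : ℤ_[p])}) ^ Module.finrank ℚ_[p] F
    have hq : 0 < q := pow_pos Nat.card_pos _
    exact Nat.eq_of_mul_eq_mul_left (by positivity : 0 < 8 * q ^ 2) (by linarith)

theorem not_normSubgroup_mul_le [NeZero (2 : F)] [NormIndexTwo F] {d e : Fˣ} (hd : ¬IsSquare d)
    (he : ¬IsSquare e) : ¬normSubgroup ((d * e : Fˣ) : F) ≤ normSubgroup (d : F) := by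
  -- Equality of the two norm groups would put `e` in the norm group of every `b`, by symmetry of
  -- the Hilbert symbol.
  intro hle
  have hindex_ne_top {a : Fˣ} (ha : ¬IsSquare a) : normSubgroup (a : F) ≠ ⊤ := by
    rw [Ne, ← Subgroup.index_eq_one, NormIndexTwo.index_normSubgroup ha]
    norm_num
  by_cases hde : IsSquare (d * e)
  · rw [normSubgroup_eq_top_of_isSquare hde, top_le_iff] at hle
    exact hindex_ne_top hd hle
  have hrelIndex := Subgroup.relIndex_mul_index hle
  rw [NormIndexTwo.index_normSubgroup hd, NormIndexTwo.index_normSubgroup hde] at hrelIndex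
  have heq : normSubgroup ((d * e : Fˣ) : F) = normSubgroup (d : F) :=
    hle.antisymm (Subgroup.relIndex_eq_one.1 (by omega))
  refine hindex_ne_top he (eq_top_iff.2 fun b _ => mem_normSubgroup_comm.1 ?_)
  by_cases hb : IsSquare b
  · simp [normSubgroup_eq_top_of_isSquare hb]
  have hmem : d * e ∈ normSubgroup (b : F) ↔ d ∈ normSubgroup (b : F) := by
    rw [← mem_normSubgroup_comm, heq, mem_normSubgroup_comm]
  rw [Subgroup.mul_mem_iff_of_index_two (NormIndexTwo.index_normSubgroup hb)] at hmem
  tauto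

end NormGroups

section WittCancellation

open QuadraticMap

variable {F V : Type*} [Field F] [AddCommGroup V] [Module F V]

/-- The reflection of a quadratic space in the hyperplane orthogonal to an anisotropic `u`. -/
def reflectionIsometry (Q : QuadraticForm F V) {u : V} (hu : Q u ≠ 0) : Q →qᵢ Q where
  toLinearMap := LinearMap.id - ((Q u)⁻¹ • Q.polarBilin u).smulRight u
  map_app' x := by
    have hsub : Q (x - ((Q u)⁻¹ * polar Q u x) • u) = Q x - ((Q u)⁻¹ * polar Q u x) * polar Q u x +
        ((Q u)⁻¹ * polar Q u x) ^ 2 * Q u := by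
      rw [sub_eq_add_neg, ← neg_smul, QuadraticMap.map_add Q, QuadraticMap.map_smul,
        polar_smul_right, polar_comm Q x u]
      simp only [smul_eq_mul]
      ring
    simpa [hsub] using by field_simp; ring

theorem reflectionIsometry_apply (Q : QuadraticForm F V) {u : V} (hu : Q u ≠ 0) (x : V) :
    reflectionIsometry Q hu x = x - ((Q u)⁻¹ * polar Q u x) • u := rfl

theorem reflectionIsometry_apply_sub (Q : QuadraticForm F V) {u v : V} (huv : Q u = Q v)
    (hsub : Q (u - v) ≠ 0) : reflectionIsometry Q hsub u = v := by
  have hpolar : polar Q (u - v) u = Q (u - v) := by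
    rw [polar_sub_left, polar_self, sub_eq_add_neg u v, QuadraticMap.map_add Q,
      QuadraticMap.map_neg, polar_neg_right, polar_comm Q v u, ← huv]
    ring
  rw [reflectionIsometry_apply, hpolar, inv_mul_cancel₀ hsub, one_smul, sub_sub_cancel]

theorem exists_isometry_apply_eq [NeZero (2 : F)] (Q : QuadraticForm F V) {u v : V}
    (huv : Q u = Q v) (hv : Q v ≠ 0) : ∃ L : Q →qᵢ Q, L u = v := by
  by_cases hsub : Q (u - v) = 0
  · -- By the parallelogram law `u + v` is anisotropic, and its reflection sends `u` to `-v`.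
    have hadd : Q (u - -v) ≠ 0 := by
      have hparallelogram : Q (u - -v) + Q (u - v) = 2 * (2 * Q v) := by
        rw [sub_neg_eq_add, sub_eq_add_neg, QuadraticMap.map_add Q, QuadraticMap.map_add Q,
          QuadraticMap.map_neg, polar_neg_right, huv]
        ring
      rw [hsub, add_zero] at hparallelogram
      exact hparallelogram ▸ mul_ne_zero two_ne_zero (mul_ne_zero two_ne_zero hv)
    have hneg : Q (-v - v) ≠ 0 := by
      rw [← neg_add', ← two_smul F v, QuadraticMap.map_neg, QuadraticMap.map_smul]
      exact mul_ne_zero (mul_ne_zero two_ne_zero two_ne_zero) hv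
    refine ⟨(reflectionIsometry Q hneg).comp (reflectionIsometry Q hadd), ?_⟩
    rw [Isometry.comp_apply, reflectionIsometry_apply_sub Q (huv.trans (Q.map_neg v).symm),
      reflectionIsometry_apply_sub Q (Q.map_neg v)]
  · exact ⟨reflectionIsometry Q hsub, reflectionIsometry_apply_sub Q huv hsub⟩

section Diagonal

variable {ι : Type*} [Fintype ι] [DecidableEq ι]

theorem weightedSumSquares_update_zero (w v : ι → F) (i : ι) :
    weightedSumSquares F (Function.update w i 0) v =
      weightedSumSquares F w (Function.update v i 0) := by
  simp only [weightedSumSquares_apply, smul_eq_mul]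
  refine Finset.sum_congr rfl fun l _ => ?_
  by_cases hl : l = i
  · simp [hl]
  · simp [hl]

theorem weightedSumSquares_single (w : ι → F) (i : ι) (c : F) :
    weightedSumSquares F w (Pi.single i c) = w i * (c * c) := by
  rw [weightedSumSquares_apply, Finset.sum_eq_single i] <;> simp +contextual

theorem polar_weightedSumSquares_single (w v : ι → F) (i : ι) :
    polar (weightedSumSquares F w) v (Pi.single i 1) = 2 * (w i * v i) := by
  simp only [polar, weightedSumSquares_apply, smul_eq_mul, ← Finset.sum_sub_distrib]
  rw [Finset.sum_eq_single i]
  · rw [Pi.add_apply, Pi.single_eq_same]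
    ring
  · intro l _ hl
    rw [Pi.add_apply, Pi.single_eq_of_ne hl]
    ring
  · simp

theorem nonempty_isometry_update_zero [NeZero (2 : F)] {w w' : ι → F} {i : ι} (hi : w i = w' i)
    (hw' : w' i ≠ 0) (hL : Nonempty (weightedSumSquares F w →qᵢ weightedSumSquares F w')) :
    Nonempty (weightedSumSquares F (Function.update w i 0) →qᵢ
      weightedSumSquares F (Function.update w' i 0)) := by
  obtain ⟨L₀⟩ := hL
  have hnorm : weightedSumSquares F w' (Pi.single i 1) = w' i := by
    rw [weightedSumSquares_single, mul_one, mul_one]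
  obtain ⟨T, hT⟩ := exists_isometry_apply_eq (weightedSumSquares F w') (u := L₀ (Pi.single i 1))
    (v := Pi.single i 1)
    (by rw [L₀.map_app, weightedSumSquares_single, weightedSumSquares_single, hi]) (hnorm ▸ hw')
  -- `L` fixes the `i`-th basis vector, hence maps its orthogonal complement to itself.
  let L := T.comp L₀
  let π : (ι → F) →ₗ[F] (ι → F) := LinearMap.id - LinearMap.single F _ i ∘ₗ LinearMap.proj i
  have hπ (x : ι → F) : π x = Function.update x i 0 := by
    ext l
    by_cases hl : l = i
    · simp [π, hl]
    · simp [π, hl]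
  have hLπ (x : ι → F) : L (π x) i = 0 := by
    have hpolar : polar (weightedSumSquares F w') (L (π x)) (L (Pi.single i 1)) =
        polar (weightedSumSquares F w) (π x) (Pi.single i 1) := by
      simp only [polar, ← map_add, Isometry.map_app]
    rw [Isometry.comp_apply _ _ (Pi.single i 1), hT, polar_weightedSumSquares_single,
      polar_weightedSumSquares_single, hπ x, Function.update_self, mul_zero, mul_zero,
      ← hπ] at hpolar
    simpa [hw', two_ne_zero] using hpolar
  refine ⟨⟨L.toLinearMap ∘ₗ π, fun x => ?_⟩⟩
  change weightedSumSquares F (Function.update w' i 0) (L (π x)) = _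
  rw [weightedSumSquares_update_zero, weightedSumSquares_update_zero,
    Function.update_eq_self_iff.2 (hLπ x).symm, L.map_app, hπ]

theorem nonempty_isometry_piecewise_zero [NeZero (2 : F)] {w w' : ι → F} (t : Finset ι)
    (ht : ∀ i ∈ t, w i = w' i ∧ w' i ≠ 0)
    (hL : Nonempty (weightedSumSquares F w →qᵢ weightedSumSquares F w')) :
    Nonempty (weightedSumSquares F (t.piecewise 0 w) →qᵢ
      weightedSumSquares F (t.piecewise 0 w')) := by
  induction t using Finset.induction_on with
  | empty => simpa only [Finset.piecewise_empty] using hL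
  | insert i t hi ih =>
    obtain ⟨hww', hw'⟩ := ht i (Finset.mem_insert_self i t)
    simp only [Finset.piecewise_insert, Pi.zero_apply]
    refine nonempty_isometry_update_zero ?_ ?_ (ih fun l hl => ht l (Finset.mem_insert_of_mem hl))
    · simpa only [Finset.piecewise_eq_of_notMem _ _ _ hi]
    · simpa only [Finset.piecewise_eq_of_notMem _ _ _ hi]

end Diagonal

end WittCancellation

section Representation

variable {ι R S : Type*} [Fintype ι] [CommRing R] [CommRing S]

/-- The Gram matrix of the pullback, along `r`, of the form with Gram matrix `K`. -/
def formPullback (K r : Matrix ι ι R) : Matrix ι ι R := rᵀ * K * r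

theorem formPullback_one [DecidableEq ι] (K : Matrix ι ι R) : formPullback K 1 = K := by
  simp [formPullback]

theorem formPullback_mul (K r s : Matrix ι ι R) :
    formPullback K (r * s) = formPullback (formPullback K r) s := by
  simp only [formPullback, transpose_mul, Matrix.mul_assoc]

theorem formPullback_units_injective [DecidableEq ι] (r : GL ι R) :
    Function.Injective (formPullback · r.val) := fun K K' h => by
  rw [← formPullback_one K, ← formPullback_one K', ← Units.mul_inv r, formPullback_mul,
    formPullback_mul]
  exact congrArg (formPullback · _) h

theorem map_formPullback (f : R →+* S) (K r : Matrix ι ι R) :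
    (formPullback K r).map f = formPullback (K.map f) (r.map f) := by
  simp only [formPullback, Matrix.map_mul, transpose_map]

theorem det_formPullback [DecidableEq ι] (K r : Matrix ι ι R) :
    (formPullback K r).det = r.det ^ 2 * K.det := by
  rw [formPullback, det_mul, det_mul, det_transpose]
  ring

theorem isSymm_formPullback {K : Matrix ι ι R} (hK : K.IsSymm) (r : Matrix ι ι R) :
    (formPullback K r).IsSymm := by
  rw [IsSymm, formPullback, transpose_mul, transpose_mul, transpose_transpose, hK.eq,
    Matrix.mul_assoc]

/-- `FormRepresents K J`: the form with Gram matrix `J` is the pullback of the form with Gram matrix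
`K` along some linear map, not required to be invertible. -/
def FormRepresents (K J : Matrix ι ι R) : Prop := ∃ r, formPullback K r = J

namespace FormRepresents

variable {I J K : Matrix ι ι R}

theorem refl (K : Matrix ι ι R) : FormRepresents K K := by
  classical exact ⟨1, formPullback_one K⟩

theorem trans (hKJ : FormRepresents K J) (hJI : FormRepresents J I) : FormRepresents K I := by
  obtain ⟨r, rfl⟩ := hKJ
  obtain ⟨s, rfl⟩ := hJI
  exact ⟨r * s, formPullback_mul K r s⟩

theorem map (f : R →+* S) (h : FormRepresents K J) : FormRepresents (K.map f) (J.map f) := by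
  obtain ⟨r, rfl⟩ := h
  exact ⟨r.map f, (map_formPullback f K r).symm⟩

theorem exists_det_eq [DecidableEq ι] (h : FormRepresents K J) : ∃ s, J.det = s ^ 2 * K.det := by
  obtain ⟨r, rfl⟩ := h
  exact ⟨r.det, det_formPullback K r⟩

theorem symm {F : Type*} [Field F] [DecidableEq ι] {J K : Matrix ι ι F} (hJ : J.det ≠ 0)
    (h : FormRepresents K J) : FormRepresents J K := by
  obtain ⟨r, rfl⟩ := h
  have hr : IsUnit r.det :=
    (pow_ne_zero_iff two_ne_zero).1 (left_ne_zero_of_mul (det_formPullback K r ▸ hJ)) |>.isUnit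
  exact ⟨r⁻¹, by rw [← formPullback_mul, mul_nonsing_inv _ hr, formPullback_one]⟩

end FormRepresents

end Representation

section DiagonalForms

open QuadraticMap

variable {ι F : Type*} [Fintype ι] [DecidableEq ι] [Field F]

theorem weightedSumSquares_eq_dotProduct (w v : ι → F) :
    weightedSumSquares F w v = v ⬝ᵥ (diagonal w *ᵥ v) := by
  simp only [weightedSumSquares_apply, dotProduct, mulVec_diagonal, smul_eq_mul]
  exact Finset.sum_congr rfl fun _ _ => by ring

theorem toMatrix'_weightedSumSquares [NeZero (2 : F)] [Invertible (2 : F)] (w : ι → F) :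
    QuadraticForm.toMatrix' (weightedSumSquares F w) = diagonal w := by
  ext i k
  rw [QuadraticForm.toMatrix', LinearMap.toMatrix₂'_apply, associated_apply,
    ← polar, polar_weightedSumSquares_single]
  by_cases hik : i = k
  · simp [hik, two_ne_zero]
  · simp [hik]

theorem nonempty_isometry_iff_formRepresents [NeZero (2 : F)] {w w' : ι → F} :
    Nonempty (weightedSumSquares F w →qᵢ weightedSumSquares F w') ↔
      FormRepresents (diagonal w') (diagonal w) := by
  have : Invertible (2 : F) := invertibleOfNonzero two_ne_zero
  constructor
  · rintro ⟨L⟩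
    have hL : (weightedSumSquares F w').comp L.toLinearMap = weightedSumSquares F w :=
      QuadraticMap.ext L.map_app
    refine ⟨LinearMap.toMatrix' L.toLinearMap, ?_⟩
    rw [formPullback, ← toMatrix'_weightedSumSquares w', ← QuadraticForm.toMatrix'_comp, hL,
      toMatrix'_weightedSumSquares]
  · rintro ⟨r, hr⟩
    refine ⟨⟨toLin' r, fun v => ?_⟩⟩
    change weightedSumSquares F w' (r *ᵥ v) = _
    rw [weightedSumSquares_eq_dotProduct, weightedSumSquares_eq_dotProduct, ← hr, formPullback,
      mulVec_mulVec, ← vecMul_transpose, ← dotProduct_mulVec, mulVec_mulVec, Matrix.mul_assoc]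

theorem exists_formRepresents_diagonal [NeZero (2 : F)] {J : Matrix ι ι F} (hsymm : J.IsSymm)
    (hdet : J.det ≠ 0) : ∃ w : ι → F, (∀ i, w i ≠ 0) ∧ FormRepresents J (diagonal w) := by
  have : Invertible (2 : F) := invertibleOfNonzero two_ne_zero
  have hB : LinearMap.IsSymm (toBilin' J) := ⟨(isSymm_toBilin'_iff_isSymm.2 hsymm).eq⟩
  have hnondeg := LinearMap.BilinForm.nondegenerate_toBilin'_of_det_ne_zero' J hdet
  obtain ⟨v₀, hv₀⟩ := LinearMap.BilinForm.exists_orthogonal_basis hB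
  let v := v₀.reindex (Fintype.equivFinOfCardEq (Module.finrank_fintype_fun_eq_card F).symm).symm
  have hv : LinearMap.IsOrthoᵢ (toBilin' J) v := by
    intro i k hik
    simp only [v, Module.Basis.reindex_apply, Function.onFun]
    exact hv₀ (by simpa using hik)
  refine ⟨fun i => toBilin' J (v i) (v i), fun i => ?_, (Pi.basisFun F ι).toMatrix v, ?_⟩
  · exact hv.not_isOrtho_basis_self_of_separatingLeft hnondeg.1 i
  · have hgram := LinearMap.BilinForm.toMatrix_mul_basis_toMatrix (Pi.basisFun F ι) v (toBilin' J)
    rw [LinearMap.BilinForm.toMatrix_basisFun, LinearMap.BilinForm.toMatrix'_toBilin'] at hgram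
    rw [formPullback, hgram]
    ext i k
    rw [LinearMap.BilinForm.toMatrix_apply]
    by_cases hik : i = k
    · rw [hik, diagonal_apply_eq]
    · rw [diagonal_apply_ne _ hik]
      exact hv hik

end DiagonalForms

section PairScaling

open QuadraticMap

variable {ι F : Type*} [Fintype ι] [DecidableEq ι] [Field F]

theorem formRepresents_diagonal_piecewise_smul [NeZero (2 : F)] {w : ι → F} {i k : ι} (hik : i ≠ k)
    {b x y : F} (hb : b = x ^ 2 + w i * w k * y ^ 2) :
    FormRepresents (diagonal w) (diagonal (({i, k} : Finset ι).piecewise (b • w) w)) := by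
  rw [← nonempty_isometry_iff_formRepresents]
  let L : (ι → F) →ₗ[F] (ι → F) := LinearMap.pi fun l =>
    if l = i then x • LinearMap.proj i - (w k * y) • LinearMap.proj k
    else if l = k then x • LinearMap.proj k + (w i * y) • LinearMap.proj i
    else LinearMap.proj l
  refine ⟨⟨L, fun v => ?_⟩⟩
  change weightedSumSquares F w (L v) = _
  simp only [weightedSumSquares_apply, smul_eq_mul]
  rw [← Finset.sum_add_sum_compl {i, k}, ← Finset.sum_add_sum_compl {i, k}]
  congr 1
  · rw [Finset.sum_pair hik, Finset.sum_pair hik]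
    simp only [L, LinearMap.pi_apply, if_true, if_neg hik.symm, LinearMap.sub_apply,
      LinearMap.add_apply, LinearMap.smul_apply, LinearMap.proj_apply, smul_eq_mul,
      Finset.piecewise_eq_of_mem, Finset.mem_insert, Finset.mem_singleton, true_or, or_true,
      Pi.smul_apply, hb]
    ring
  · refine Finset.sum_congr rfl fun l hl => ?_
    obtain ⟨hli, hlk⟩ : l ≠ i ∧ l ≠ k := by simpa using hl
    simp [L, hli, hlk]

theorem det_diagonal_piecewise_smul {w : ι → F} {i k : ι} (hik : i ≠ k) (b : F) :
    (diagonal (({i, k} : Finset ι).piecewise (b • w) w)).det = b ^ 2 * (diagonal w).det := by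
  rw [det_diagonal, det_diagonal, Finset.prod_piecewise, Finset.univ_inter,
    ← Finset.prod_sdiff (Finset.subset_univ {i, k}), Finset.prod_pair hik, Finset.prod_pair hik]
  simp only [Pi.smul_apply, smul_eq_mul]
  ring

theorem mem_normSubgroup_of_formRepresents_diagonal [NeZero (2 : F)] {w : ι → F}
    (hw : ∀ l, w l ≠ 0) {i k : ι} (hik : i ≠ k) {b : Fˣ}
    (h : FormRepresents (diagonal (({i, k} : Finset ι).piecewise ((b : F) • w) w)) (diagonal w)) :
    b ∈ normSubgroup (-(w i * w k)) := by
  rw [← nonempty_isometry_iff_formRepresents] at h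
  obtain ⟨L⟩ := nonempty_isometry_piecewise_zero ({i, k}ᶜ : Finset ι)
    (fun l hl => by simp_all) h
  obtain ⟨y, hy⟩ : ∃ y, y = L (Pi.single i 1) := ⟨_, rfl⟩
  have hwi : (b : F) * (w i * (y i * y i) + w k * (y k * y k)) = w i := by
    have hnorm := L.map_app (Pi.single i 1)
    rw [weightedSumSquares_single, weightedSumSquares_apply,
      ← Finset.sum_add_sum_compl {i, k}, Finset.sum_pair hik, ← hy] at hnorm
    rw [Finset.sum_eq_zero (s := {i, k}ᶜ) fun l hl => by
      rw [Finset.piecewise_eq_of_mem _ _ _ hl, Pi.zero_apply, zero_smul]] at hnorm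
    simpa [Finset.piecewise, mul_add, mul_assoc] using hnorm
  refine mem_normSubgroup.2 ⟨b * y i, b * y k / w i, ?_⟩
  have := hw i
  field_simp
  linear_combination -hwi

theorem exists_formRepresents_diagonal_not_isSquare [NeZero (2 : F)] (hcard : 3 ≤ Fintype.card ι)
    {e : F} (he : ¬IsSquare e) {w : ι → F} (hw : ∀ i, w i ≠ 0) :
    ∃ w' : ι → F, (∀ i, w' i ≠ 0) ∧ FormRepresents (diagonal w) (diagonal w') ∧
      ∃ i k, i ≠ k ∧ ¬IsSquare (-(w' i * w' k)) := by
  by_cases hpair : ∃ i k, i ≠ k ∧ ¬IsSquare (-(w i * w k))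
  · exact ⟨w, hw, .refl _, hpair⟩
  push Not at hpair
  obtain ⟨i, k, l, hik, hil, hkl⟩ := Fintype.two_lt_card_iff.1 hcard
  have he0 : e ≠ 0 := fun h => he (h ▸ IsSquare.zero)
  have hmem : Units.mk0 e he0 ∈ normSubgroup (-(w i * w k)) :=
    normSubgroup_eq_top_of_isSquare (a := Units.mk0 _ (neg_ne_zero.2 (mul_ne_zero (hw i) (hw k))))
      (isSquare_val_units_iff.1 (hpair i k hik)) ▸ Subgroup.mem_top _
  obtain ⟨x, y, hxy⟩ := mem_normSubgroup.1 hmem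
  refine ⟨({i, k} : Finset ι).piecewise (e • w) w, fun m => ?_,
    formRepresents_diagonal_piecewise_smul hik (x := x) (y := y) ?_, i, l, hil, fun hsq => he ?_⟩
  · by_cases hm : m ∈ ({i, k} : Finset ι)
    · exact Finset.piecewise_eq_of_mem _ (e • w) w hm ▸ mul_ne_zero he0 (hw m)
    · exact Finset.piecewise_eq_of_notMem _ (e • w) w hm ▸ hw m
  · rw [Units.val_mk0] at hxy
    linear_combination hxy
  · have hil0 : -(w i * w l) ≠ 0 := neg_ne_zero.2 (mul_ne_zero (hw i) (hw l))
    have hvalue : -(({i, k} : Finset ι).piecewise (e • w) w i *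
        ({i, k} : Finset ι).piecewise (e • w) w l) = e * -(w i * w l) := by
      rw [Finset.piecewise_eq_of_mem _ _ _ (by simp),
        Finset.piecewise_eq_of_notMem _ _ _ (by simp [hil.symm, hkl.symm]), Pi.smul_apply,
        smul_eq_mul]
      ring
    exact mul_div_cancel_right₀ e hil0 ▸ hvalue ▸ hsq.div (hpair i l hil)

end PairScaling

section ScalarExtension

variable {ι F E : Type*} [Fintype ι] [DecidableEq ι] [Field F] [NeZero (2 : F)] [Field E]
  [Algebra F E]

theorem exists_formRepresents_diagonal_pair_not_isSquare {e : F} (he : ¬IsSquare e)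
    {J : Matrix ι ι F} (hsymm : J.IsSymm) (hdet : J.det ≠ 0)
    (hJ : 3 ≤ Fintype.card ι ∨ Fintype.card ι = 2 ∧ ¬IsSquare (-J.det)) :
    ∃ w : ι → F, (∀ i, w i ≠ 0) ∧ FormRepresents J (diagonal w) ∧
      ∃ i k, i ≠ k ∧ ¬IsSquare (-(w i * w k)) := by
  obtain ⟨w, hw, hJw⟩ := exists_formRepresents_diagonal hsymm hdet
  obtain hcard | ⟨hcard, hsq⟩ := hJ
  · obtain ⟨w', hw', hww', hpair⟩ := exists_formRepresents_diagonal_not_isSquare hcard he hw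
    exact ⟨w', hw', hJw.trans hww', hpair⟩
  · obtain ⟨i, k, hik, huniv⟩ := Finset.card_eq_two.1 ((Finset.card_univ (α := ι)).trans hcard)
    refine ⟨w, hw, hJw, i, k, hik, fun hwsq => hsq ?_⟩
    obtain ⟨s, hs⟩ := (hJw.symm (det_diagonal (d := w) ▸ Finset.prod_ne_zero_iff.2
      fun l _ => hw l)).exists_det_eq
    rw [det_diagonal, huniv, Finset.prod_pair hik] at hs
    rw [hs, ← mul_neg]
    exact (IsSquare.sq s).mul hwsq

theorem exists_formRepresents_map_diagonal_not_formRepresents [NormIndexTwo F] {e : F}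
    (he : ¬IsSquare e) {ε : E} (hε : ε * ε = algebraMap F E e) {w : ι → F} (hw : ∀ i, w i ≠ 0)
    {i k : ι} (hik : i ≠ k) (hpair : ¬IsSquare (-(w i * w k))) :
    ∃ K : Matrix ι ι F,
      FormRepresents ((diagonal w).map (algebraMap F E)) (K.map (algebraMap F E)) ∧
      ¬FormRepresents K (diagonal w) ∧ ∃ s ≠ 0, K.det = s ^ 2 * (diagonal w).det := by
  -- Scale the `i`-th and `k`-th entries by a `b` which is a norm from `F[√(δe)]` but not from
  -- `F[√δ]`, where `δ = -(w i * w k)`; over `E`, where `e` is a square, `b` becomes a value of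
  -- `x² - δ y²`.
  have hδ0 : -(w i * w k) ≠ 0 := neg_ne_zero.2 (mul_ne_zero (hw i) (hw k))
  have he0 : e ≠ 0 := fun h => he (h ▸ IsSquare.zero)
  obtain ⟨b, hbmem, hbnot⟩ := SetLike.not_le_iff_exists.1 (not_normSubgroup_mul_le
    (d := Units.mk0 _ hδ0) (e := Units.mk0 e he0) (isSquare_val_units_iff.not.1 hpair)
    (isSquare_val_units_iff.not.1 he))
  obtain ⟨x, y, hb⟩ := mem_normSubgroup.1 hbmem
  refine ⟨diagonal (({i, k} : Finset ι).piecewise ((b : F) • w) w), ?_,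
    fun h => hbnot (mem_normSubgroup_of_formRepresents_diagonal hw hik h), b, b.ne_zero,
    det_diagonal_piecewise_smul hik _⟩
  have : NeZero (2 : E) := ⟨by
    simpa only [map_ofNat] using (map_ne_zero (algebraMap F E)).2 (two_ne_zero (α := F))⟩
  convert formRepresents_diagonal_piecewise_smul (w := algebraMap F E ∘ w) hik
    (b := algebraMap F E b) (x := algebraMap F E x) (y := ε * algebraMap F E y) ?_ using 1
  · rw [diagonal_map (map_zero _)]; rfl
  · rw [diagonal_map (map_zero _)]
    congr 1
    ext l
    by_cases hl : l ∈ ({i, k} : Finset ι)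
    · simp only [Finset.piecewise_eq_of_mem _ _ _ hl, Function.comp_apply, Pi.smul_apply,
        smul_eq_mul, map_mul]
    · simp only [Finset.piecewise_eq_of_notMem _ _ _ hl, Function.comp_apply]
  · rw [hb]
    simp only [Function.comp_apply, Units.val_mul, Units.val_mk0, map_sub, map_mul, map_pow,
      map_neg]
    linear_combination -(algebraMap F E (w i) * algebraMap F E (w k) * algebraMap F E y ^ 2) * hε

theorem exists_formRepresents_map_not_formRepresents [NormIndexTwo F] {e : F} (he : ¬IsSquare e)
    {ε : E} (hε : ε * ε = algebraMap F E e) {J : Matrix ι ι F} (hsymm : J.IsSymm)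
    (hdet : J.det ≠ 0) (hJ : 3 ≤ Fintype.card ι ∨ Fintype.card ι = 2 ∧ ¬IsSquare (-J.det)) :
    ∃ K : Matrix ι ι F, FormRepresents (J.map (algebraMap F E)) (K.map (algebraMap F E)) ∧
      ¬FormRepresents K J ∧ ∃ s ≠ 0, K.det = s ^ 2 * J.det := by
  obtain ⟨w, hw, hJw, i, k, hik, hpair⟩ :=
    exists_formRepresents_diagonal_pair_not_isSquare he hsymm hdet hJ
  have hwdet : (diagonal w).det ≠ 0 := det_diagonal (d := w) ▸ Finset.prod_ne_zero_iff.2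
    fun l _ => hw l
  obtain ⟨K, hwK, hKw, s, hs, hdetK⟩ :=
    exists_formRepresents_map_diagonal_not_formRepresents he hε hw hik hpair
  obtain ⟨t, ht⟩ := hJw.exists_det_eq
  refine ⟨K, (hJw.map _).trans hwK, fun h => hKw (h.trans hJw), s * t,
    mul_ne_zero hs fun ht0 => hwdet ?_, ?_⟩
  · rw [ht, ht0]
    ring
  · rw [hdetK, ht]
    ring

end ScalarExtension

theorem map_inv_mul_mul_eq_iff {G : Type*} [Group G] (φ : G →* G) (g h₀ h : G) :
    φ (h⁻¹ * g * h₀) = h⁻¹ * g * h₀ ↔ h * (φ h)⁻¹ = g * (h₀ * (φ h₀)⁻¹) * (φ g)⁻¹ := by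
  rw [map_mul, map_mul, map_inv, ← mul_left_inj ((φ h₀)⁻¹ * (φ g)⁻¹), ← mul_right_inj h]
  simp only [mul_assoc, mul_inv_cancel_left, mul_inv_cancel, mul_one]

section TwistedCoboundary

open Polynomial

variable {ι E : Type*} [Fintype ι] [DecidableEq ι] [Field E] {σ : E →+* E}

/-- The coboundary `h σ(h)⁻¹`, that is, the twisted conjugate of the identity matrix by `h`. -/
def twistedCoboundary (σ : E →+* E) (h : GL ι E) : GL ι E := h * (GeneralLinearGroup.map σ h)⁻¹

theorem det_twistedCoboundary (h : GL ι E) :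
    (twistedCoboundary σ h).val.det = h.val.det / σ h.val.det := by
  rw [RingHom.map_det, div_eq_mul_inv, twistedCoboundary, Units.val_mul, det_mul, coe_units_inv,
    det_nonsing_inv, Ring.inverse_eq_inv']
  rfl

theorem twistedCoboundary_mul_map (hσ : ∀ a, σ (σ a) = a) (h : GL ι E) :
    (twistedCoboundary σ h).val * (twistedCoboundary σ h).val.map σ = 1 := by
  have hinv : GeneralLinearGroup.map σ (GeneralLinearGroup.map σ h) = h := by
    ext a b
    exact hσ _
  have hmul : twistedCoboundary σ h * GeneralLinearGroup.map σ (twistedCoboundary σ h) = 1 := by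
    rw [twistedCoboundary, map_mul, map_inv, hinv]
    group
  exact congrArg Units.val hmul

theorem exists_det_add_smul_ne_zero [CharZero E] (x : Matrix ι ι E) {ε : E} (hε : ε ≠ 0) :
    ∃ c : ℕ, (((c : E) + ε) • (1 : Matrix ι ι E) + ((c : E) - ε) • x).det ≠ 0 := by
  let P : Matrix ι ι E[X] := (X + C ε) • (1 : Matrix ι ι E).map C + (X - C ε) • x.map C
  have heval (c : E) : P.det.eval c = ((c + ε) • (1 : Matrix ι ι E) + (c - ε) • x).det := by
    rw [← coe_evalRingHom, RingHom.map_det]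
    congr 1
    ext a b
    by_cases hab : a = b <;> simp [P, hab]
  -- At `c = ε` the determinant is `(2ε) ^ n`, so it is not the zero polynomial in `c`.
  have hP : P.det ≠ 0 := fun hP => by
    have hzero := heval ε
    rw [hP, eval_zero, sub_self, zero_smul, add_zero, det_smul, det_one, mul_one] at hzero
    exact pow_ne_zero _ (add_self_eq_zero.not.2 hε) hzero.symm
  by_contra! hroot
  exact hP (eq_zero_of_infinite_isRoot _ ((Set.infinite_range_of_injective
    Nat.cast_injective).mono (Set.range_subset_iff.2 fun c => (heval _).trans (hroot c))))

theorem exists_twistedCoboundary_eq [CharZero E] {ε : E} (hε : σ ε = -ε) (hε0 : ε ≠ 0)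
    {x : Matrix ι ι E} (hx : x * x.map σ = 1) : ∃ h : GL ι E, (twistedCoboundary σ h).val = x := by
  obtain ⟨c, hc⟩ := exists_det_add_smul_ne_zero x hε0
  let h := GeneralLinearGroup.mkOfDetNeZero _ hc
  have hh : h.val = ((c : E) + ε) • 1 + ((c : E) - ε) • x := rfl
  have hσh : h.val.map σ = ((c : E) - ε) • 1 + ((c : E) + ε) • x.map σ := by
    ext a b
    by_cases hab : a = b <;> simp [hh, hε, hab, sub_eq_add_neg]
  refine ⟨h, ?_⟩
  rw [twistedCoboundary, Units.val_mul, Units.mul_inv_eq_iff_eq_mul]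
  change h.val = x * h.val.map σ
  rw [hσh, hh, Matrix.mul_add, Matrix.mul_smul, Matrix.mul_smul, hx, Matrix.mul_one, add_comm]

end TwistedCoboundary

section FixedMatrices

variable {ι E : Type*} [Field E] {σ : E →+* E}

/-- The subfield of elements fixed by `σ`. -/
abbrev fixedSubfield (σ : E →+* E) : Subfield E := σ.eqLocusField (RingHom.id E)

theorem map_eq_self_iff_exists_fixedSubfield {A : Matrix ι ι E} :
    A.map σ = A ↔ ∃ J : Matrix ι ι (fixedSubfield σ), J.map (algebraMap _ E) = A := by
  constructor
  · exact fun h => ⟨of fun a b => ⟨A a b, congrFun₂ h a b⟩, rfl⟩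
  · rintro ⟨J, rfl⟩
    ext a b
    exact (J a b).2

end FixedMatrices

section Dictionary

variable {E : Type} [Field E] {σ : E →+* E} {n : ℕ} {j : Matrix (Fin n) (Fin n) E}

theorem Xj_twistedCoboundary_iff (hσ : ∀ a, σ (σ a) = a) (hj : j.map σ = j)
    (h : GL (Fin n) E) : Xj σ j (twistedCoboundary σ h).val ↔
      (formPullback j h.val).map σ = formPullback j h.val := by
  have hh : (twistedCoboundary σ h).val * h.val.map σ = h.val :=
    congrArg Units.val (inv_mul_cancel_right h (GeneralLinearGroup.map σ h))
  have hpull : formPullback (formPullback j (twistedCoboundary σ h).val) (h.val.map σ) =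
      formPullback j h.val := by rw [← formPullback_mul, hh]
  rw [Xj, Gj, and_iff_left (twistedCoboundary_mul_map hσ h), and_iff_right (Units.isUnit _),
    map_formPullback, hj, ← hpull, eq_comm]
  exact (formPullback_units_injective (GeneralLinearGroup.map σ h)).eq_iff.symm

theorem orbSG_twistedCoboundary_iff (h₀ h : GL (Fin n) E) :
    orbSG σ j (twistedCoboundary σ h₀).val (twistedCoboundary σ h).val ↔
      ∃ r, r.map σ = r ∧ formPullback (formPullback j h.val) r = formPullback j h₀.val ∧
        h.val.det * r.det = h₀.val.det := by
  have hconj (g : GL (Fin n) E) : (h⁻¹ * g * h₀).val.map σ = (h⁻¹ * g * h₀).val ↔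
      (twistedCoboundary σ h).val = g.val * (twistedCoboundary σ h₀).val * (g.val.map σ)⁻¹ := by
    have hinv : (g.val.map σ)⁻¹ = ((GeneralLinearGroup.map σ g)⁻¹).val :=
      (coe_units_inv (GeneralLinearGroup.map σ g)).symm
    rw [hinv, ← Units.val_mul, ← Units.val_mul, Units.val_inj]
    exact Units.val_inj.trans (map_inv_mul_mul_eq_iff (GeneralLinearGroup.map σ) g h₀ h)
  constructor
  · rintro ⟨_, ⟨⟨g, rfl⟩, hg⟩, hdet, horb⟩
    have hr : h * (h⁻¹ * g * h₀) = g * h₀ := by group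
    refine ⟨(h⁻¹ * g * h₀).val, (hconj g).2 horb, ?_, ?_⟩
    · rw [← formPullback_mul, ← Units.val_mul, hr, Units.val_mul, formPullback_mul]
      exact congrArg (formPullback · _) hg
    · rw [← det_mul, ← Units.val_mul, hr, Units.val_mul, det_mul, hdet, one_mul]
  · rintro ⟨r, hrσ, hr, hdet⟩
    have hrdet : r.det ≠ 0 := right_ne_zero_of_mul (hdet ▸ (isUnits_det_units h₀).ne_zero)
    obtain ⟨r, rfl⟩ := (isUnit_iff_isUnit_det r).2 hrdet.isUnit
    have hg : h⁻¹ * (h * r * h₀⁻¹) * h₀ = r := by group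
    refine ⟨(h * r * h₀⁻¹).val, ⟨Units.isUnit _, ?_⟩, ?_, (hconj _).1 (hg.symm ▸ hrσ)⟩
    · change formPullback j _ = j
      rw [Units.val_mul, Units.val_mul, formPullback_mul, formPullback_mul, hr, ← formPullback_mul,
        Units.mul_inv, formPullback_one]
    · rw [Units.val_mul, Units.val_mul, det_mul, det_mul, hdet, ← det_mul, Units.mul_inv, det_one]

end Dictionary

section BinaryForms

variable {F : Type*} [Field F] [NeZero (2 : F)]

theorem exists_formPullback_fin_two_eq_hyperbolic {a b c e : F} (he : e ≠ 0)
    (hdisc : b ^ 2 - a * c = e ^ 2) :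
    ∃ P, formPullback !![a, b; b, c] P = !![0, 1; 1, 0] ∧ e * P.det = 1 := by
  have h2 : (2 : F) ≠ 0 := two_ne_zero
  have hpull (x y z w : F) : formPullback !![a, b; b, c] !![x, z; y, w] =
      !![a * x ^ 2 + 2 * b * x * y + c * y ^ 2, a * x * z + b * (x * w + y * z) + c * y * w;
        a * x * z + b * (x * w + y * z) + c * y * w, a * z ^ 2 + 2 * b * z * w + c * w ^ 2] := by
    ext i k
    fin_cases i <;> fin_cases k <;>
      simp [formPullback, Matrix.mul_apply, Fin.sum_univ_two] <;> ring
  suffices h : ∃ x y z w : F, a * x ^ 2 + 2 * b * x * y + c * y ^ 2 = 0 ∧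
      a * z ^ 2 + 2 * b * z * w + c * w ^ 2 = 0 ∧
      a * x * z + b * (x * w + y * z) + c * y * w = 1 ∧ e * (x * w - z * y) = 1 by
    obtain ⟨x, y, z, w, hxy, hzw, hpolar, hdet⟩ := h
    exact ⟨!![x, z; y, w], by rw [hpull, hxy, hzw, hpolar], by rwa [det_fin_two_of]⟩
  by_cases ha : a = 0
  · subst ha
    obtain rfl | rfl : b = e ∨ b = -e := sq_eq_sq_iff_eq_or_eq_neg.1 (by linear_combination hdisc)
    · refine ⟨1, 0, -c / (2 * b ^ 2), 1 / b, ?_, ?_, ?_, ?_⟩ <;> field_simp <;> ring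
    · refine ⟨-c / (2 * e ^ 2), -1 / e, 1, 0, ?_, ?_, ?_, ?_⟩ <;> field_simp <;> ring
  · refine ⟨(e + b) / (2 * a * e ^ 2), -1 / (2 * e ^ 2), e - b, a, ?_, ?_, ?_, ?_⟩
    · field_simp
      linear_combination -hdisc
    · linear_combination -a * hdisc
    · field_simp
      linear_combination hdisc
    · field_simp
      ring

theorem exists_formPullback_fin_two_eq {J K : Matrix (Fin 2) (Fin 2) F} (hJ : J.IsSymm)
    (hK : K.IsSymm) {d e : F} (hd : d ≠ 0) (he : e ≠ 0) (hJdet : -J.det = d ^ 2)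
    (hKdet : -K.det = e ^ 2) : ∃ r, formPullback K r = J ∧ e * r.det = d := by
  have hyperbolic {A : Matrix (Fin 2) (Fin 2) F} (hA : A.IsSymm) {f : F} (hf : f ≠ 0)
      (hdet : -A.det = f ^ 2) : ∃ P, formPullback A P = !![0, 1; 1, 0] ∧ f * P.det = 1 := by
    rw [A.eta_fin_two, hA.apply 0 1] at hdet ⊢
    exact exists_formPullback_fin_two_eq_hyperbolic hf
      (by rw [← hdet, det_fin_two_of]; ring)
  obtain ⟨P, hP, hPdet⟩ := hyperbolic hJ hd hJdet
  obtain ⟨Q, hQ, hQdet⟩ := hyperbolic hK he hKdet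
  have hPunit : IsUnit P.det := (right_ne_zero_of_mul_eq_one hPdet).isUnit
  refine ⟨Q * P⁻¹, ?_, ?_⟩
  · rw [formPullback_mul, hQ, ← hP, ← formPullback_mul, mul_nonsing_inv _ hPunit, formPullback_one]
  · rw [det_mul, ← mul_assoc, hQdet, one_mul, det_nonsing_inv, Ring.inverse_eq_inv']
    exact inv_eq_of_mul_eq_one_left hPdet

end BinaryForms

section NontrivialComponent

variable {E : Type} [Field E] {σ : E →+* E} {n : ℕ} {j : Matrix (Fin n) (Fin n) E}

theorem det_eq_one_or_eq_neg_one_of_Gj (hjdet : j.det ≠ 0) {g : Matrix (Fin n) (Fin n) E}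
    (hg : Gj j g) : g.det = 1 ∨ g.det = -1 := by
  refine mul_self_eq_one_iff.1 (mul_right_cancel₀ hjdet ?_)
  rw [← sq, ← det_formPullback, one_mul]
  exact congrArg det hg.2

theorem det_twistedCoboundary_eq_neg_one_iff (h : GL (Fin n) E) :
    (twistedCoboundary σ h).val.det = -1 ↔ σ h.val.det = -h.val.det := by
  have hdet : σ h.val.det ≠ 0 := (map_ne_zero σ).2 (isUnits_det_units h).ne_zero
  rw [det_twistedCoboundary, div_eq_iff hdet, neg_one_mul, eq_neg_iff_add_eq_zero,
    eq_neg_iff_add_eq_zero, add_comm]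

theorem orbSG_twistedCoboundary_iff_exists_fixedSubfield {h₀ h : GL (Fin n) E}
    {J K : Matrix (Fin n) (Fin n) (fixedSubfield σ)}
    (hJ : formPullback j h₀.val = J.map (algebraMap _ E))
    (hK : formPullback j h.val = K.map (algebraMap _ E)) :
    orbSG σ j (twistedCoboundary σ h₀).val (twistedCoboundary σ h).val ↔
      ∃ r, formPullback K r = J ∧ h.val.det * r.det = h₀.val.det := by
  have hinj : Function.Injective fun A : Matrix (Fin n) (Fin n) (fixedSubfield σ) =>
    A.map (algebraMap _ E) := Matrix.map_injective (algebraMap (fixedSubfield σ) E).injective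
  have hdet (r : Matrix (Fin n) (Fin n) (fixedSubfield σ)) :
    (r.map (algebraMap _ E)).det = r.det := (RingHom.map_det _ _).symm
  rw [orbSG_twistedCoboundary_iff, hJ, hK]
  constructor
  · rintro ⟨_, hr, hpull, hdetr⟩
    obtain ⟨r, rfl⟩ := map_eq_self_iff_exists_fixedSubfield.1 hr
    exact ⟨r, hinj ((map_formPullback _ _ _).trans hpull), hdet r ▸ hdetr⟩
  · rintro ⟨r, rfl, hdetr⟩
    exact ⟨r.map (algebraMap _ E), map_eq_self_iff_exists_fixedSubfield.2 ⟨r, rfl⟩,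
      (map_formPullback _ _ _).symm, (hdet r).symm ▸ hdetr⟩

theorem Xj_and_det_ne_one_iff_exists_twistedCoboundary [CharZero E] (hσ : ∀ a, σ (σ a) = a)
    {ε : E} (hε : σ ε = -ε) (hε0 : ε ≠ 0) (hj : j.map σ = j) (hjdet : j.det ≠ 0)
    {x : Matrix (Fin n) (Fin n) E} :
    Xj σ j x ∧ x.det ≠ 1 ↔ ∃ (h : GL (Fin n) E) (J : Matrix (Fin n) (Fin n) (fixedSubfield σ)),
      (twistedCoboundary σ h).val = x ∧ formPullback j h.val = J.map (algebraMap _ E) ∧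
        σ h.val.det = -h.val.det := by
  constructor
  · rintro ⟨hx, hxdet⟩
    obtain ⟨h, rfl⟩ := exists_twistedCoboundary_eq hε hε0 hx.2
    obtain ⟨J, hJ⟩ :=
      map_eq_self_iff_exists_fixedSubfield.1 ((Xj_twistedCoboundary_iff hσ hj h).1 hx)
    exact ⟨h, J, rfl, hJ.symm, (det_twistedCoboundary_eq_neg_one_iff h).1
      ((det_eq_one_or_eq_neg_one_of_Gj hjdet hx.1).resolve_left hxdet)⟩
  · rintro ⟨h, J, rfl, hJ, hdet⟩
    refine ⟨(Xj_twistedCoboundary_iff hσ hj h).2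
      (map_eq_self_iff_exists_fixedSubfield.2 ⟨J, hJ.symm⟩), ?_⟩
    rw [(det_twistedCoboundary_eq_neg_one_iff h).2 hdet]
    exact neg_ne_self.2 one_ne_zero

end NontrivialComponent

section SingleOrbit

variable {E : Type} [Field E] {σ : E →+* E} {n : ℕ} {j : Matrix (Fin n) (Fin n) E}
  {h : GL (Fin n) E} {J K : Matrix (Fin n) (Fin n) (fixedSubfield σ)}

theorem coe_det_eq_of_formPullback_eq_map (hJ : formPullback j h.val = J.map (algebraMap _ E)) :
    (J.det : E) = h.val.det ^ 2 * j.det := by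
  rw [← det_formPullback, hJ]
  exact RingHom.map_det (algebraMap (fixedSubfield σ) E) J

theorem det_ne_zero_of_formPullback_eq_map
    (hJ : formPullback j h.val = J.map (algebraMap _ E)) (hjdet : j.det ≠ 0) : J.det ≠ 0 := by
  refine fun hJ0 => mul_ne_zero (pow_ne_zero 2 (isUnits_det_units h).ne_zero) hjdet ?_
  rw [← coe_det_eq_of_formPullback_eq_map hJ, hJ0, ZeroMemClass.coe_zero]

theorem isSymm_of_formPullback_eq_map (hJ : formPullback j h.val = J.map (algebraMap _ E))
    (hjsymm : j.IsSymm) : J.IsSymm :=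
  Matrix.map_injective (algebraMap (fixedSubfield σ) E).injective
    (hJ ▸ isSymm_formPullback hjsymm h.val : (J.map (algebraMap _ E)).IsSymm)

theorem not_isSquare_fixedSubfield [CharZero E] {ε : E} (hε : σ ε = -ε) (hε0 : ε ≠ 0)
    {e : fixedSubfield σ} (he : ε * ε = e) : ¬IsSquare e := by
  rintro ⟨r, rfl⟩
  have hfix : σ ε = ε := by
    obtain h | h : ε = r ∨ ε = -r := mul_self_eq_mul_self_iff.1 he
    · exact h ▸ r.2
    · exact h ▸ (-r).2
  exact hε0 (self_eq_neg.1 (hfix.symm.trans hε))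

theorem exists_det_eq_neg_sq_of_isSquare_neg_det {ε : E} (hε : σ ε = -ε) (hε0 : ε ≠ 0)
    (hjdet : j.det ≠ 0) (hJ : formPullback j h.val = J.map (algebraMap _ E))
    (hh : σ h.val.det = -h.val.det)
    (hsq : IsSquare (-J.det)) : ∃ c, σ c = c ∧ c ≠ 0 ∧ j.det = -(ε * ε * (c * c)) := by
  obtain ⟨r, hr⟩ := hsq
  have hh0 : h.val.det ≠ 0 := (isUnits_det_units h).ne_zero
  have hrsq : -(h.val.det ^ 2 * j.det) = r * r := by
    rw [← coe_det_eq_of_formPullback_eq_map hJ]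
    exact congrArg Subtype.val hr
  have hr0 : (r : E) ≠ 0 := fun hr0 => by simp [hr0, hh0, hjdet] at hrsq
  refine ⟨r / (ε * h.val.det), ?_, div_ne_zero hr0 (mul_ne_zero hε0 hh0), ?_⟩
  · rw [map_div₀, map_mul, hε, hh, neg_mul_neg]
    exact congrArg (· / _) r.2
  · field_simp
    linear_combination -hrsq

theorem exists_formPullback_eq_map_of_formRepresents (hjdet : j.det ≠ 0)
    (hJ : formPullback j h.val = J.map (algebraMap _ E)) (hh : σ h.val.det = -h.val.det)
    (hJK : FormRepresents (J.map (algebraMap _ E)) (K.map (algebraMap _ E)))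
    {s : fixedSubfield σ} (hs : s ≠ 0) (hK : K.det = s ^ 2 * J.det) :
    ∃ h' : GL (Fin n) E, formPullback j h'.val = K.map (algebraMap _ E) ∧
      σ h'.val.det = -h'.val.det := by
  obtain ⟨g, hg⟩ := hJK
  have hJ0 := det_ne_zero_of_formPullback_eq_map hJ hjdet
  have hgs : g.det = s ∨ g.det = -s := by
    refine sq_eq_sq_iff_eq_or_eq_neg.1
      (mul_right_cancel₀ ((map_ne_zero (algebraMap (fixedSubfield σ) E)).2 hJ0) ?_)
    have hdet := congrArg det hg
    rw [det_formPullback, ← RingHom.mapMatrix_apply, ← RingHom.mapMatrix_apply, ← RingHom.map_det,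
      ← RingHom.map_det, hK, map_mul, map_pow] at hdet
    exact hdet
  have hgσ : σ g.det = g.det := by
    obtain h | h := hgs
    · exact h ▸ s.2
    · exact h ▸ (-s).2
  have hg0 : g.det ≠ 0 := by
    obtain h | h := hgs <;> simpa [h] using hs
  refine ⟨h * GeneralLinearGroup.mkOfDetNeZero g hg0, ?_, ?_⟩
  · rw [Units.val_mul, formPullback_mul, hJ]
    exact hg
  · rw [Units.val_mul, det_mul, map_mul, hh, neg_mul]
    exact congrArg (-(_ * ·)) hgσ

theorem exists_not_orbSG [CharZero E] [NormIndexTwo (fixedSubfield σ)] (hσ : ∀ a, σ (σ a) = a)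
    {ε : E} (hε : σ ε = -ε) (hε0 : ε ≠ 0) (hj : j.map σ = j) (hjsymm : j.IsSymm)
    (hjdet : j.det ≠ 0)
    (hn : 3 ≤ n ∨ n = 2 ∧ ¬∃ c, σ c = c ∧ c ≠ 0 ∧ j.det = -(ε * ε * (c * c)))
    {x₀ : Matrix (Fin n) (Fin n) E} (hx₀ : Xj σ j x₀ ∧ x₀.det ≠ 1) :
    ∃ x, Xj σ j x ∧ x.det ≠ 1 ∧ ¬orbSG σ j x₀ x := by
  have hcomponent (x : Matrix (Fin n) (Fin n) E) :=
    Xj_and_det_ne_one_iff_exists_twistedCoboundary hσ hε hε0 hj hjdet (x := x)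
  obtain ⟨h₀, J, rfl, hJ, hh₀⟩ := (hcomponent x₀).1 hx₀
  let e : fixedSubfield σ := ⟨ε * ε, by change σ (ε * ε) = ε * ε; rw [map_mul, hε, neg_mul_neg]⟩
  have hcard : 3 ≤ Fintype.card (Fin n) ∨ Fintype.card (Fin n) = 2 ∧ ¬IsSquare (-J.det) := by
    rw [Fintype.card_fin]
    exact hn.imp_right fun ⟨h2, hc⟩ =>
      ⟨h2, mt (exists_det_eq_neg_sq_of_isSquare_neg_det hε hε0 hjdet hJ hh₀) hc⟩
  obtain ⟨K, hJK, hKJ, s, hs, hK⟩ := exists_formRepresents_map_not_formRepresents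
    (not_isSquare_fixedSubfield hε hε0 (e := e) rfl) (ε := ε) rfl
    (isSymm_of_formPullback_eq_map hJ hjsymm) (det_ne_zero_of_formPullback_eq_map hJ hjdet) hcard
  obtain ⟨h, hhK, hh⟩ := exists_formPullback_eq_map_of_formRepresents hjdet hJ hh₀ hJK hs hK
  obtain ⟨hx, hxdet⟩ := (hcomponent _).2 ⟨h, K, rfl, hhK, hh⟩
  refine ⟨_, hx, hxdet, fun horb => hKJ ?_⟩
  obtain ⟨r, hr, -⟩ := (orbSG_twistedCoboundary_iff_exists_fixedSubfield hJ hhK).1 horb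
  exact ⟨r, hr⟩

theorem exists_forall_orbSG_fin_one [CharZero E] {j : Matrix (Fin 1) (Fin 1) E}
    (hjdet : j.det ≠ 0) : ∃ x₀, (Xj σ j x₀ ∧ x₀.det ≠ 1) ∧
      ∀ x, Xj σ j x → x.det ≠ 1 → orbSG σ j x₀ x := by
  have hσ1 : (-1 : Matrix (Fin 1) (Fin 1) E).map σ = -1 := by
    rw [Matrix.map_neg _ (map_neg σ), Matrix.map_one _ (map_zero σ) (map_one σ)]
  have hdet : (-1 : Matrix (Fin 1) (Fin 1) E).det = -1 := by simp
  refine ⟨-1, ⟨⟨⟨isUnit_one.neg, by simp⟩, by rw [hσ1, neg_mul_neg, one_mul]⟩, ?_⟩,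
    fun x hx hxdet => ⟨1, ⟨isUnit_one, by simp⟩, det_one, ?_⟩⟩
  · exact hdet ▸ neg_ne_self.2 one_ne_zero
  · have hxdet : x.det = -1 := (det_eq_one_or_eq_neg_one_of_Gj hjdet hx.1).resolve_left hxdet
    have hx1 : x = -1 := by
      ext a b
      rw [Subsingleton.elim a 0, Subsingleton.elim b 0, ← det_fin_one x, hxdet]
      rfl
    simp [hx1]

theorem exists_Xj_det_ne_one_fin_two [CharZero E] {j : Matrix (Fin 2) (Fin 2) E}
    (hj : j.map σ = j) (hjsymm : j.IsSymm) (hj0 : j 0 0 ≠ 0) :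
    ∃ x, Xj σ j x ∧ x.det ≠ 1 := by
  have hfix (a b : Fin 2) : σ (j a b) = j a b := congrFun₂ hj a b
  have h10 : j 1 0 = j 0 1 := hjsymm.apply 0 1
  -- The reflection in the first basis vector.
  let x : Matrix (Fin 2) (Fin 2) E := !![-1, -2 * j 0 1 / j 0 0; 0, 1]
  have hdet : x.det = -1 := by simp [x, det_fin_two_of]
  have hσx : x.map σ = x := by
    ext a b
    fin_cases a <;> fin_cases b <;> simp [x, hfix, map_ofNat σ 2]
  refine ⟨x, ⟨⟨?_, ?_⟩, ?_⟩, hdet ▸ neg_ne_self.2 one_ne_zero⟩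
  · rw [isUnit_iff_isUnit_det, hdet]
    exact isUnit_one.neg
  · ext a b
    fin_cases a <;> fin_cases b <;>
      simp [x, Matrix.mul_apply, Fin.sum_univ_two, h10] <;> field_simp <;> ring
  · rw [hσx]
    ext a b
    fin_cases a <;> fin_cases b <;> simp [x]

theorem exists_neg_det_eq_sq_of_formPullback_eq_map {s : E} (hs : σ s = -s) (hs0 : s ≠ 0)
    (hjs : -j.det = s ^ 2) (hJ : formPullback j h.val = J.map (algebraMap _ E))
    (hh : σ h.val.det = -h.val.det) :
    ∃ d : fixedSubfield σ, d = s * h.val.det ∧ d ≠ 0 ∧ -J.det = d ^ 2 := by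
  refine ⟨⟨s * h.val.det, ?_⟩, rfl, fun hd => ?_, Subtype.ext ?_⟩
  · change σ _ = s * h.val.det
    rw [map_mul, hs, hh, neg_mul_neg]
  · exact mul_ne_zero hs0 (isUnits_det_units h).ne_zero (congrArg Subtype.val hd)
  · change -(J.det : E) = (s * h.val.det) ^ 2
    rw [coe_det_eq_of_formPullback_eq_map hJ, mul_pow, ← hjs]
    ring

theorem exists_forall_orbSG_fin_two [CharZero E] (hσ : ∀ a, σ (σ a) = a) {s : E} (hs : σ s = -s)
    (hs0 : s ≠ 0) {j : Matrix (Fin 2) (Fin 2) E} (hj : j.map σ = j) (hjsymm : j.IsSymm)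
    (hjs : -j.det = s ^ 2) : ∃ x₀, (Xj σ j x₀ ∧ x₀.det ≠ 1) ∧
      ∀ x, Xj σ j x → x.det ≠ 1 → orbSG σ j x₀ x := by
  have hjdet : j.det ≠ 0 := neg_ne_zero.1 (hjs ▸ pow_ne_zero 2 hs0)
  have hcomponent (x : Matrix (Fin 2) (Fin 2) E) :=
    Xj_and_det_ne_one_iff_exists_twistedCoboundary hσ hs hs0 hj hjdet (x := x)
  -- If `j 0 0 = 0` then `j 0 1 = ±s`, which is not fixed by `σ`.
  have hj0 : j 0 0 ≠ 0 := fun hj0 => by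
    have hb : (j 0 1) ^ 2 = s ^ 2 := by
      rw [← hjs, det_fin_two, hj0, hjsymm.apply 0 1]
      ring
    have hfix : σ (j 0 1) = j 0 1 := congrFun₂ hj 0 1
    obtain hb | hb := sq_eq_sq_iff_eq_or_eq_neg.1 hb <;> rw [hb] at hfix <;>
      simp [hs, neg_eq_self, self_eq_neg, hs0] at hfix
  obtain ⟨x₀, hx₀⟩ := exists_Xj_det_ne_one_fin_two hj hjsymm hj0
  refine ⟨x₀, hx₀, fun x hx hxdet => ?_⟩
  obtain ⟨h₀, J, rfl, hJ, hh₀⟩ := (hcomponent x₀).1 hx₀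
  obtain ⟨h, K, rfl, hK, hh⟩ := (hcomponent x).1 ⟨hx, hxdet⟩
  obtain ⟨d, hd, hd0, hJd⟩ := exists_neg_det_eq_sq_of_formPullback_eq_map hs hs0 hjs hJ hh₀
  obtain ⟨e, he, he0, hKe⟩ := exists_neg_det_eq_sq_of_formPullback_eq_map hs hs0 hjs hK hh
  obtain ⟨r, hr, hrdet⟩ := exists_formPullback_fin_two_eq
    (isSymm_of_formPullback_eq_map hJ hjsymm) (isSymm_of_formPullback_eq_map hK hjsymm)
    hd0 he0 hJd hKe
  refine (orbSG_twistedCoboundary_iff_exists_fixedSubfield hJ hK).2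
    ⟨r, hr, mul_left_cancel₀ hs0 ?_⟩
  rw [← mul_assoc, ← he, ← hd, ← hrdet]
  rfl

theorem normIndexTwo_fixedSubfield (p : ℕ) [Fact p.Prime] [Algebra ℚ_[p] E]
    [FiniteDimensional ℚ_[p] E] (σ : E →ₐ[ℚ_[p]] E) :
    NormIndexTwo (fixedSubfield (σ : E →+* E)) :=
  normIndexTwo_of_padic_extension p
    ((fixedSubfield (σ : E →+* E)).toIntermediateField fun a => σ.commutes a)

end SingleOrbit

theorem stmt_12_general {E : Type} [Field E] [CharZero E] {σ : E →+* E}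
    [NormIndexTwo (fixedSubfield σ)] (hσ : ∀ a, σ (σ a) = a) {ι : E} (hι1 : σ ι ≠ ι)
    (hι2 : σ (ι * ι) = ι * ι) {n : ℕ} (hn : 1 ≤ n) {j : Matrix (Fin n) (Fin n) E}
    (hjF : ∀ a b, σ (j a b) = j a b) (hjU : IsUnit j) (hjsym : jᵀ = j) :
    (∃ x₀, (Xj σ j x₀ ∧ x₀.det ≠ 1) ∧
        ∀ x, Xj σ j x → x.det ≠ 1 → orbSG σ j x₀ x) ↔
      (n = 1 ∨ (n = 2 ∧ ∃ c, σ c = c ∧ c ≠ 0 ∧ j.det = -(ι * ι * (c * c)))) := by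
  have hι : σ ι = -ι :=
    (mul_self_eq_mul_self_iff.1 ((map_mul σ ι ι).symm.trans hι2)).resolve_left hι1
  have hι0 : ι ≠ 0 := by
    rintro rfl
    exact hι1 (map_zero σ)
  have hj : j.map σ = j := Matrix.ext hjF
  have hjdet : j.det ≠ 0 := ((isUnit_iff_isUnit_det j).1 hjU).ne_zero
  constructor
  · rintro ⟨x₀, hx₀, horb⟩
    by_contra! hcases
    have hn23 : 3 ≤ n ∨ n = 2 := by omega
    obtain ⟨x, hx, hxdet, hnot⟩ := exists_not_orbSG hσ hι hι0 hj hjsym hjdet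
      (hn23.imp_right fun h2 => ⟨h2, fun ⟨c, hc, hc0, hdet⟩ => hcases.2 h2 c hc hc0 hdet⟩) hx₀
    exact hnot (horb x hx hxdet)
  · rintro (rfl | ⟨rfl, c, hc, hc0, hdet⟩)
    · exact exists_forall_orbSG_fin_one hjdet
    · exact exists_forall_orbSG_fin_two hσ (s := ι * c) (by rw [map_mul, hι, hc, neg_mul])
        (mul_ne_zero hι0 hc0) hj hjsym (by rw [hdet]; ring)

/-- In the orthogonal case, `X^j \ SX^j` is a single `SG^j(E)`-orbit if
and only if either `n = 1`, or `n = 2` and `det j ∈ -ι²·F^{×2}`.  (`F` is the fixed field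
of `σ`, and `ι ∈ E \ F` satisfies `ι² ∈ F`.) -/
theorem stmt_12 (p : ℕ) [Fact p.Prime]
    (E : Type) [Field E] [Algebra ℚ_[p] E] [FiniteDimensional ℚ_[p] E]
    (σ : E ≃ₐ[ℚ_[p]] E) (hσ1 : σ ≠ 1) (hσ2 : σ * σ = 1)
    (ι : E) (hι1 : σ ι ≠ ι) (hι2 : σ (ι * ι) = ι * ι)
    (n : ℕ) (hn : 1 ≤ n)
    (j : Matrix (Fin n) (Fin n) E)
    (hjF : ∀ a b, σ (j a b) = j a b) (hjU : IsUnit j) (hjsym : jᵀ = j) :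
    (∃ x₀, (Xj ⇑σ j x₀ ∧ x₀.det ≠ 1) ∧
        ∀ x, Xj ⇑σ j x → x.det ≠ 1 → orbSG ⇑σ j x₀ x) ↔
      (n = 1 ∨ (n = 2 ∧ ∃ c, σ c = c ∧ c ≠ 0 ∧ j.det = -(ι * ι * (c * c)))) := by
  have : CharZero E := charZero_of_injective_algebraMap (algebraMap ℚ_[p] E).injective
  have : NormIndexTwo (fixedSubfield (σ : E →+* E)) :=
    normIndexTwo_fixedSubfield p (σ : E →ₐ[ℚ_[p]] E)
  exact stmt_12_general (σ := (σ : E →+* E)) (DFunLike.congr_fun hσ2) hι1 hι2 hn hjF hjU hjsym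
end
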